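/- arXiv:0912.0540 — 5 statements merged into one kernel-verified Lean document; each statement's English description precedes it below -/
import Mathlib

section
/- Let γ be a real number with |γ| < 1, and let (k, l, j) be nonnegative reals satisfying the triangle inequality such that (1+γ)k/2 is a nonnegative integer. If k + l = j or k + j = l, then both triples ((1+γ)k/2, ⌊(1+γ)l/2⌉₊, ⌊(1+γ)j/2⌉₊) and ((1+γ)k/2, ⌊(1+γ)l/2⌉₋, ⌊(1+γ)j/2⌉₋) satisfy the triangle inequality. -/
/-- `⌊x⌉₊` : the unique integer in the interval `(x - 1/2, x + 1/2]`. -/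
noncomputable def clpPlus (x : ℝ) : ℤ := ⌊x + 1/2⌋

/-- `⌊x⌉₋` : the unique integer in the interval `[x - 1/2, x + 1/2)`. -/
noncomputable def clpMinus (x : ℝ) : ℤ := ⌈x - 1/2⌉

/-- A triple of (nonnegative) reals satisfies the triangle inequality. -/
def Triangle3 (a b c : ℝ) : Prop := a ≤ b + c ∧ b ≤ a + c ∧ c ≤ a + b

theorem clpPlus_natCast_add (m : ℕ) (x : ℝ) : clpPlus (m + x) = m + clpPlus x := by
  simp only [clpPlus, add_assoc, Int.floor_natCast_add]

theorem clpMinus_natCast_add (m : ℕ) (x : ℝ) : clpMinus (m + x) = m + clpMinus x := by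
  simp only [clpMinus, add_sub_assoc, Int.ceil_natCast_add]

theorem clpPlus_nonneg {x : ℝ} (hx : 0 ≤ x) : 0 ≤ clpPlus x :=
  Int.floor_nonneg.2 (by linarith)

theorem clpMinus_nonneg {x : ℝ} (hx : 0 ≤ x) : 0 ≤ clpMinus x :=
  Int.ceil_nonneg_of_neg_one_lt (by linarith)

theorem Triangle3.swap {a b c : ℝ} (h : Triangle3 a b c) : Triangle3 a c b :=
  ⟨by linarith [h.1], h.2.2, h.2.1⟩

theorem triangle3_add {a b : ℝ} (ha : 0 ≤ a) (hb : 0 ≤ b) : Triangle3 a b (a + b) :=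
  ⟨by linarith, by linarith, le_rfl⟩

theorem triangle3_clp_natCast_add (m : ℕ) {x : ℝ} (hx : 0 ≤ x) :
    Triangle3 m (clpPlus x) (clpPlus (m + x)) ∧
    Triangle3 m (clpMinus x) (clpMinus (m + x)) := by
  rw [clpPlus_natCast_add, clpMinus_natCast_add]
  push_cast
  exact ⟨triangle3_add m.cast_nonneg (mod_cast clpPlus_nonneg hx),
    triangle3_add m.cast_nonneg (mod_cast clpMinus_nonneg hx)⟩

/-- Lemma 1, first case: if `(k,l,j)` satisfies the triangle inequality,
`(1+γ)k/2 ∈ ℕ`, and `k + l = j` or `k + j = l`, then both triples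
`((1+γ)k/2, ⌊(1+γ)l/2⌉₊, ⌊(1+γ)j/2⌉₊)` and `((1+γ)k/2, ⌊(1+γ)l/2⌉₋, ⌊(1+γ)j/2⌉₋)`
satisfy the triangle inequality. -/
theorem triangle_clp_degenerate (γ : ℝ) (hγ : |γ| < 1) (k l j : ℝ)
    (hk0 : 0 ≤ k) (hl0 : 0 ≤ l) (hj0 : 0 ≤ j)
    (htri : Triangle3 k l j)
    (hnat : ∃ m : ℕ, (1 + γ) * k / 2 = (m : ℝ))
    (hdeg : k + l = j ∨ k + j = l) :
    Triangle3 ((1 + γ) * k / 2) (clpPlus ((1 + γ) * l / 2)) (clpPlus ((1 + γ) * j / 2)) ∧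
    Triangle3 ((1 + γ) * k / 2) (clpMinus ((1 + γ) * l / 2)) (clpMinus ((1 + γ) * j / 2)) := by
  obtain ⟨m, hm⟩ := hnat
  have hγ0 : 0 ≤ 1 + γ := by linarith [neg_lt_of_abs_lt hγ]
  rcases hdeg with rfl | rfl
  · have h : (1 + γ) * (k + l) / 2 = m + (1 + γ) * l / 2 := by rw [← hm]; ring
    rw [h, hm]
    exact triangle3_clp_natCast_add m (by positivity)
  · have h : (1 + γ) * (k + j) / 2 = m + (1 + γ) * j / 2 := by rw [← hm]; ring
    rw [h, hm]
    exact (triangle3_clp_natCast_add m (by positivity)).imp Triangle3.swap Triangle3.swap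
end

section
/- Let γ be a real number with |γ| < 1, and let (k, l, j) be nonnegative reals satisfying the triangle inequality such that (1+γ)k/2 is a nonnegative integer. If k + l > j and k + j > l, then both triples ((1+γ)k/2, ⌊(1+γ)l/2⌉₊, ⌊(1+γ)j/2⌉₋) and ((1+γ)k/2, ⌊(1+γ)l/2⌉₋, ⌊(1+γ)j/2⌉₊) satisfy the triangle inequality. -/
/-- Rounding one of two sides up and the other down at half-integers preserves the triangle
inequality with an integral side `m`, provided the inequalities bounding the two sides are
strict. -/
theorem triangle3_clpPlus_clpMinus {m : ℤ} {b c : ℝ} (h : (m : ℝ) ≤ b + c)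
    (hb : b < m + c) (hc : c < m + b) : Triangle3 m (clpPlus b) (clpMinus c) := by
  have hP₁ : (clpPlus b : ℝ) ≤ b + 1 / 2 := Int.floor_le _
  have hP₂ : b + 1 / 2 < (clpPlus b : ℝ) + 1 := Int.lt_floor_add_one _
  have hM₁ : c - 1 / 2 ≤ (clpMinus c : ℝ) := Int.le_ceil _
  have hM₂ : (clpMinus c : ℝ) < c - 1 / 2 + 1 := Int.ceil_lt_add_one _
  refine ⟨?_, ?_, ?_⟩ <;> norm_cast <;> refine Int.lt_add_one_iff.mp ?_ <;>
    rify <;> linarith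

/-- Lemma 1, second case: if `(k,l,j)` satisfies the triangle inequality,
`(1+γ)k/2 ∈ ℕ`, and `k + l > j` and `k + j > l`, then both triples
`((1+γ)k/2, ⌊(1+γ)l/2⌉₊, ⌊(1+γ)j/2⌉₋)` and `((1+γ)k/2, ⌊(1+γ)l/2⌉₋, ⌊(1+γ)j/2⌉₊)`
satisfy the triangle inequality. -/
theorem triangle_clp_nondegenerate (γ : ℝ) (hγ : |γ| < 1) (k l j : ℝ)
    (hk0 : 0 ≤ k) (hl0 : 0 ≤ l) (hj0 : 0 ≤ j)
    (htri : Triangle3 k l j)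
    (hnat : ∃ m : ℕ, (1 + γ) * k / 2 = (m : ℝ))
    (h1 : k + l > j) (h2 : k + j > l) :
    Triangle3 ((1 + γ) * k / 2) (clpPlus ((1 + γ) * l / 2)) (clpMinus ((1 + γ) * j / 2)) ∧
    Triangle3 ((1 + γ) * k / 2) (clpMinus ((1 + γ) * l / 2)) (clpPlus ((1 + γ) * j / 2)) := by
  obtain ⟨m, hm⟩ := hnat
  have hpos : 0 < (1 + γ) / 2 := by linarith [(abs_lt.mp hγ).1]
  have hle := mul_le_mul_of_nonneg_left htri.1 hpos.le
  have hlt₁ := mul_lt_mul_of_pos_left h1 hpos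
  have hlt₂ := mul_lt_mul_of_pos_left h2 hpos
  have hm' : (1 + γ) * k / 2 = ((m : ℤ) : ℝ) := by exact_mod_cast hm
  rw [hm']
  exact ⟨triangle3_clpPlus_clpMinus (by linarith) (by linarith) (by linarith),
    (triangle3_clpPlus_clpMinus (by linarith) (by linarith) (by linarith)).swap⟩
end

section
/- Let k₁, k₂, k_α and j⁺₁, j⁻₁, j⁺₂, j⁻₂, j⁺_α, j⁻_α be half-integers with j⁺ᵢ + j⁻ᵢ = kᵢ for i ∈ {1, 2, α}, such that the triples (k_α, k₁, k₂), (j⁺_α, j⁺₁, j⁺₂) and (j⁻_α, j⁻₁, j⁻₂) each satisfy the triangle inequality and k_α + k₁ + k₂ ∈ ℕ and j⁺_α + j⁺₁ + j⁺₂ ∈ ℕ. Choose arbitrary nonzero SU(2)-equivariant linear maps ε : H_{k_α} → H_{k₁} ⊗ H_{k₂}, C_i : H_{k_i} → H_{j⁺ᵢ} ⊗ H_{j⁻ᵢ} for i = 1, 2, π⁺ : H_{j⁺₁} ⊗ H_{j⁺₂} → H_{j⁺_α}, π⁻ : H_{j⁻₁} ⊗ H_{j⁻₂} → H_{j⁻_α},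 and δ : H_{j⁺_α} ⊗ H_{j⁻_α} → H_{k_α}. Then the composite SU(2)-equivariant map H_{k_α} → H_{k_α} given by δ ∘ (π⁺ ⊗ π⁻) ∘ σ ∘ (C₁ ⊗ C₂) ∘ ε, where σ is the permutation of tensor factors identifying (H_{j⁺₁} ⊗ H_{j⁻₁}) ⊗ (H_{j⁺₂} ⊗ H_{j⁻₂}) with (H_{j⁺₁} ⊗ H_{j⁺₂}) ⊗ (H_{j⁻₁} ⊗ H_{j⁻₂}), is a nonzero scalar multiple of the identity on H_{k_α}. -/
open scoped TensorProduct

set_option synthInstance.maxHeartbeats 1000000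
set_option maxHeartbeats 1000000

noncomputable section

/-- The group `SU(2)` of special unitary `2 × 2` complex matrices. -/
abbrev SU2 : Type := Matrix.specialUnitaryGroup (Fin 2) ℂ

/-- The carrier of the spin-`d/2` irreducible representation of `SU(2)`:
homogeneous polynomials of degree `d` in two complex variables.  The parameter `d`
is *twice* the spin, so a half-integer spin `a` corresponds to `d = 2a ∈ ℕ`. -/
abbrev Hs (d : ℕ) : Type := ↥(MvPolynomial.homogeneousSubmodule (Fin 2) ℂ d)

instance (priority := 10000) instHsAcm (d : ℕ) : AddCommMonoid (Hs d) :=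
  (MvPolynomial.homogeneousSubmodule (Fin 2) ℂ d).addCommMonoid
instance (priority := 10000) instHsMod (d : ℕ) : Module ℂ (Hs d) :=
  (MvPolynomial.homogeneousSubmodule (Fin 2) ℂ d).module

/-- `IsSpinRep d ρ` says that `ρ` is the spin-`d/2` representation of `SU(2)` on homogeneous
polynomials of degree `d` in two variables: `g` acts by the linear substitution of variables
`X i ↦ ∑ j, g j i • X j`. -/
def IsSpinRep (d : ℕ) (ρ : Representation ℂ SU2 (Hs d)) : Prop :=
  ∀ (g : SU2) (p : Hs d),
    ((ρ g p : MvPolynomial (Fin 2) ℂ)) =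
      MvPolynomial.aeval
        (fun i => ∑ j, (g : Matrix (Fin 2) (Fin 2) ℂ) j i • MvPolynomial.X j)
        (p : MvPolynomial (Fin 2) ℂ)

section Intertwiners

open MvPolynomial

/-- The matrix `M` acting on degree-`d` forms by linear substitution of variables. -/
def substAct (d : ℕ) (M : Matrix (Fin 2) (Fin 2) ℂ) : Hs d →ₗ[ℂ] Hs d :=
  (aeval (R := ℂ) fun i => ∑ j, M j i • (X j : MvPolynomial (Fin 2) ℂ)).toLinearMap.restrict
    (fun p hp => by
      have h := IsHomogeneous.aeval (n := 1) ((mem_homogeneousSubmodule d p).1 hp)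
        (fun i => ∑ j, M j i • (X j : MvPolynomial (Fin 2) ℂ))
        (fun i => IsHomogeneous.sum _ _ _ fun j _ => by
          rw [smul_eq_C_mul]; exact isHomogeneous_C_mul_X _ _)
      rw [one_mul] at h
      exact h)

lemma coe_substAct (d : ℕ) (M : Matrix (Fin 2) (Fin 2) ℂ) (p : Hs d) :
    (substAct d M p : MvPolynomial (Fin 2) ℂ) =
      aeval (fun i => ∑ j, M j i • (X j : MvPolynomial (Fin 2) ℂ))
        (p : MvPolynomial (Fin 2) ℂ) := rfl

lemma IsSpinRep.eq_substAct {d : ℕ} {ρ : Representation ℂ SU2 (Hs d)} (h : IsSpinRep d ρ)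
    (g : SU2) : ρ g = substAct d (g : Matrix (Fin 2) (Fin 2) ℂ) :=
  LinearMap.ext fun p => Subtype.ext (h g p)

/-- The `d`-th power of the linear form `u X₀ + v X₁`. -/
def linPow (d : ℕ) (u v : ℂ) : Hs d :=
  ⟨(C u * X 0 + C v * X 1) ^ d, by
    have h := ((isHomogeneous_C_mul_X (σ := Fin 2) u 0).add (isHomogeneous_C_mul_X v 1)).pow d
    rw [one_mul] at h
    exact h⟩

lemma coe_linPow (d : ℕ) (u v : ℂ) :
    (linPow d u v : MvPolynomial (Fin 2) ℂ) = (C u * X 0 + C v * X 1) ^ d := rfl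

lemma substAct_linPow (d : ℕ) (M : Matrix (Fin 2) (Fin 2) ℂ) (u v : ℂ) :
    substAct d M (linPow d u v) = linPow d (M 0 0 * u + M 0 1 * v) (M 1 0 * u + M 1 1 * v) := by
  apply Subtype.ext
  rw [coe_substAct, coe_linPow, coe_linPow]
  simp only [map_pow, map_add, map_mul, aeval_X, Fin.sum_univ_two, smul_eq_C_mul,
    algHom_C, algebraMap_eq]
  ring

/-- The monomial `X₀ ^ (d - i) * X₁ ^ i`. -/
def monoBasis (d : ℕ) (i : Fin (d + 1)) : Hs d :=
  ⟨X 0 ^ (d - (i : ℕ)) * X 1 ^ (i : ℕ), by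
    have h := (isHomogeneous_X_pow (R := ℂ) (0 : Fin 2) (d - (i : ℕ))).mul
      (isHomogeneous_X_pow (1 : Fin 2) (i : ℕ))
    rwa [Nat.sub_add_cancel (Nat.lt_succ_iff.1 i.2)] at h⟩

/-- The coefficient of `X₀ ^ (d - i) * X₁ ^ i`. -/
def monoCoeff (d : ℕ) (i : Fin (d + 1)) : Hs d →ₗ[ℂ] ℂ :=
  lcoeff ℂ (Finsupp.single 0 (d - (i : ℕ)) + Finsupp.single 1 (i : ℕ)) ∘ₗ
    (homogeneousSubmodule (Fin 2) ℂ d).subtype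

lemma coe_monoBasis (d : ℕ) (i : Fin (d + 1)) :
    (monoBasis d i : MvPolynomial (Fin 2) ℂ) = X 0 ^ (d - (i : ℕ)) * X 1 ^ (i : ℕ) := rfl

lemma coe_monoBasis_eq_monomial (d : ℕ) (i : Fin (d + 1)) :
    (monoBasis d i : MvPolynomial (Fin 2) ℂ) =
      monomial (Finsupp.single 0 (d - (i : ℕ)) + Finsupp.single 1 (i : ℕ)) 1 := by
  rw [coe_monoBasis, X_pow_eq_monomial, X_pow_eq_monomial, monomial_mul, one_mul]

lemma monoCoeff_apply (d : ℕ) (i : Fin (d + 1)) (p : Hs d) :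
    monoCoeff d i p = coeff (Finsupp.single 0 (d - (i : ℕ)) + Finsupp.single 1 (i : ℕ))
      (p : MvPolynomial (Fin 2) ℂ) := rfl

lemma sum_monoCoeff_smul (d : ℕ) (p : Hs d) :
    ∑ i, monoCoeff d i p • monoBasis d i = p := by
  apply Subtype.ext
  ext m
  have hc : ((∑ i, monoCoeff d i p • monoBasis d i : Hs d) : MvPolynomial (Fin 2) ℂ) =
      ∑ i, monoCoeff d i p • (monoBasis d i : MvPolynomial (Fin 2) ℂ) := by
    exact map_sum (homogeneousSubmodule (Fin 2) ℂ d).subtype _ _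
  rw [hc, coeff_sum]
  simp only [coeff_smul, coe_monoBasis_eq_monomial, coeff_monomial, smul_eq_mul, mul_ite, mul_one,
    mul_zero]
  have hm : ∀ k : ℕ, Finsupp.single 0 (d - k) + Finsupp.single 1 k = m ↔
      d - k = m 0 ∧ k = m 1 := fun k => by
    rw [Finsupp.ext_iff, Fin.forall_fin_two]
    simp
  by_cases hd : m.degree = d
  · have hd' : m 0 + m 1 = d := by
      rw [← hd, Finsupp.degree_eq_sum, Fin.sum_univ_two]
    rw [Finset.sum_eq_single (⟨m 1, by omega⟩ : Fin (d + 1))]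
    · have he := (hm (m 1)).2 ⟨by omega, rfl⟩
      rw [if_pos he, monoCoeff_apply, he]
    · intro b _ hb
      exact if_neg fun h => hb (Fin.ext ((hm _).1 h).2)
    · simp
  · rw [((mem_homogeneousSubmodule d _).1 p.2).coeff_eq_zero hd]
    refine Finset.sum_eq_zero fun i _ => if_neg fun h => hd ?_
    have := (hm _).1 h
    rw [Finsupp.degree_eq_sum, Fin.sum_univ_two]
    omega

/-- Evaluation of a degree-`d` form at the point `(1, s)`. -/
def evalAt (d : ℕ) (s : ℂ) : Hs d →ₗ[ℂ] ℂ :=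
  (aeval ![1, s]).toLinearMap ∘ₗ (homogeneousSubmodule (Fin 2) ℂ d).subtype

lemma evalAt_apply (d : ℕ) (s : ℂ) (p : Hs d) :
    evalAt d s p = aeval ![1, s] (p : MvPolynomial (Fin 2) ℂ) := rfl

lemma evalAt_monoBasis (d : ℕ) (s : ℂ) (i : Fin (d + 1)) :
    evalAt d s (monoBasis d i) = s ^ (i : ℕ) := by
  simp [evalAt_apply, coe_monoBasis]

lemma evalAt_linPow (d : ℕ) (s u v : ℂ) : evalAt d s (linPow d u v) = (u + v * s) ^ d := by
  simp [evalAt_apply, coe_linPow]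

lemma evalAt_eq_sum (d : ℕ) (s : ℂ) (p : Hs d) :
    evalAt d s p = ∑ i : Fin (d + 1), s ^ (i : ℕ) * monoCoeff d i p := by
  conv_lhs => rw [← sum_monoCoeff_smul d p]
  simp [evalAt_monoBasis, mul_comm]

/-- Upper triangular substitution is an affine change of the evaluation point. -/
lemma evalAt_substAct (d : ℕ) (s t q : ℂ) (p : Hs d) :
    evalAt d s (substAct d !![1, t; 0, q] p) = evalAt d (t + q * s) p := by
  rw [evalAt_apply, evalAt_apply, coe_substAct, ← AlgHom.comp_apply]
  refine DFunLike.congr_fun (algHom_ext fun i => ?_) _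
  fin_cases i <;> simp [Fin.sum_univ_two, Algebra.smul_def]

lemma eq_zero_of_sum_pow_mul_eq_zero {n : ℕ} (v : Fin n → ℂ)
    (h : ∀ s : ℂ, s ≠ 0 → ∑ i : Fin n, s ^ (i : ℕ) * v i = 0) : v = 0 :=
  Matrix.eq_zero_of_forall_index_sum_pow_mul_eq_zero (f := fun j : Fin n => ((j : ℕ) : ℂ) + 1)
    (fun a b hab => by simpa [Fin.ext_iff] using hab)
    (fun j => h _ (Nat.cast_add_one_ne_zero _))

lemma coeff_ext₂ {b c : ℕ} (A B : Fin b → Fin c → ℂ)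
    (h : ∀ s t : ℂ, ∑ i : Fin b, ∑ j : Fin c, s ^ (i : ℕ) * (t ^ (j : ℕ) * A i j) =
      ∑ i : Fin b, ∑ j : Fin c, s ^ (i : ℕ) * (t ^ (j : ℕ) * B i j)) : A = B := by
  funext i j
  have h1 : ∀ t : ℂ, (fun i => ∑ j : Fin c, t ^ (j : ℕ) * (A i j - B i j)) = 0 := fun t =>
    eq_zero_of_sum_pow_mul_eq_zero _ fun s _ => by
      have := sub_eq_zero.2 (h s t)
      rw [← this]
      simp only [← Finset.mul_sum, mul_sub, Finset.sum_sub_distrib]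
  have h2 := eq_zero_of_sum_pow_mul_eq_zero (fun j => A i j - B i j) fun t _ => congrFun (h1 t) i
  exact sub_eq_zero.1 (congrFun h2 j)

lemma ext_evalAt {d : ℕ} {p q : Hs d} (h : ∀ s : ℂ, s ≠ 0 → evalAt d s p = evalAt d s q) :
    p = q := by
  have h0 := eq_zero_of_sum_pow_mul_eq_zero (fun i => monoCoeff d i p - monoCoeff d i q)
    fun s hs => by
      have := sub_eq_zero.2 (h s hs)
      rw [evalAt_eq_sum, evalAt_eq_sum, ← Finset.sum_sub_distrib] at this
      simpa only [mul_sub] using this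
  rw [← sum_monoCoeff_smul d p, ← sum_monoCoeff_smul d q]
  exact Finset.sum_congr rfl fun i _ => by rw [sub_eq_zero.1 (congrFun h0 i)]

lemma linPow_one_eq_sum (d : ℕ) (t : ℂ) :
    linPow d 1 t = ∑ i : Fin (d + 1), (t ^ (i : ℕ) * (d.choose i : ℂ)) • monoBasis d i := by
  refine ext_evalAt fun s _ => ?_
  rw [evalAt_linPow, map_sum, add_comm, add_pow, ← Fin.sum_univ_eq_sum_range
    (fun i => (t * s) ^ i * 1 ^ (d - i) * (d.choose i : ℂ))]
  refine Finset.sum_congr rfl fun i _ => ?_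
  rw [map_smul, evalAt_monoBasis, smul_eq_mul]
  ring

lemma span_linPow (d : ℕ) : Submodule.span ℂ (Set.range fun t => linPow d 1 t) = ⊤ := by
  by_contra hne
  obtain ⟨f, hf, hle⟩ := Submodule.exists_le_ker_of_lt_top
    (Submodule.span ℂ (Set.range fun t => linPow d 1 t)) (lt_top_iff_ne_top.2 hne)
  have h0 := eq_zero_of_sum_pow_mul_eq_zero
    (fun i : Fin (d + 1) => (d.choose i : ℂ) * f (monoBasis d i)) fun t _ => by
      have h := LinearMap.mem_ker.1 (hle (Submodule.subset_span ⟨t, rfl⟩))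
      simp only [linPow_one_eq_sum, map_sum, map_smul, smul_eq_mul, mul_assoc] at h
      exact h
  have hb : ∀ i, f (monoBasis d i) = 0 := fun i =>
    (mul_eq_zero.1 (congrFun h0 i)).resolve_left
      (Nat.cast_ne_zero.2 (Nat.choose_pos (Nat.lt_succ_iff.1 i.2)).ne')
  refine hf (LinearMap.ext fun p => ?_)
  rw [← sum_monoCoeff_smul d p]
  simp [hb]

lemma hom_ext_linPow {d : ℕ} {V : Type*} [AddCommMonoid V] [Module ℂ V] {L L' : Hs d →ₗ[ℂ] V}
    (h : ∀ t, L (linPow d 1 t) = L' (linPow d 1 t)) : L = L' :=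
  LinearMap.ext_on (span_linPow d) (by rintro _ ⟨t, rfl⟩; exact h t)

lemma hom_ext_linPow_tmul {b c : ℕ} {V : Type*} [AddCommMonoid V] [Module ℂ V]
    {L L' : Hs b ⊗[ℂ] Hs c →ₗ[ℂ] V}
    (h : ∀ s t, L (linPow b 1 s ⊗ₜ linPow c 1 t) = L' (linPow b 1 s ⊗ₜ linPow c 1 t)) :
    L = L' := by
  apply TensorProduct.ext
  refine hom_ext_linPow fun s => hom_ext_linPow fun t => h s t

/-- Evaluation of an element of `Hs b ⊗ Hs c` at the pair of points `(1, s)`, `(1, t)`. -/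
def evalAt₂ (b c : ℕ) (s t : ℂ) : Hs b ⊗[ℂ] Hs c →ₗ[ℂ] ℂ :=
  LinearMap.mul' ℂ ℂ ∘ₗ TensorProduct.map (evalAt b s) (evalAt c t)

lemma evalAt₂_tmul (b c : ℕ) (s t : ℂ) (p : Hs b) (q : Hs c) :
    evalAt₂ b c s t (p ⊗ₜ q) = evalAt b s p * evalAt c t q := rfl

/-- The coefficients of a tensor in the monomial basis. -/
def monoCoeff₂ (b c : ℕ) (i : Fin (b + 1)) (j : Fin (c + 1)) : Hs b ⊗[ℂ] Hs c →ₗ[ℂ] ℂ :=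
  LinearMap.mul' ℂ ℂ ∘ₗ TensorProduct.map (monoCoeff b i) (monoCoeff c j)

lemma monoCoeff₂_tmul (b c : ℕ) (i : Fin (b + 1)) (j : Fin (c + 1)) (p : Hs b) (q : Hs c) :
    monoCoeff₂ b c i j (p ⊗ₜ q) = monoCoeff b i p * monoCoeff c j q := rfl

lemma sum_monoCoeff₂_smul (b c : ℕ) (x : Hs b ⊗[ℂ] Hs c) :
    ∑ i, ∑ j, monoCoeff₂ b c i j x • (monoBasis b i ⊗ₜ[ℂ] monoBasis c j) = x := by
  induction x using TensorProduct.induction_on with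
  | zero => simp
  | tmul p q =>
    conv_rhs => rw [← sum_monoCoeff_smul b p, ← sum_monoCoeff_smul c q]
    simp only [TensorProduct.sum_tmul, TensorProduct.tmul_sum, TensorProduct.smul_tmul_smul,
      monoCoeff₂_tmul]
    exact Finset.sum_comm
  | add x y hx hy =>
    conv_rhs => rw [← hx, ← hy]
    simp only [map_add, add_smul, Finset.sum_add_distrib]

lemma evalAt₂_eq_sum (b c : ℕ) (s t : ℂ) (x : Hs b ⊗[ℂ] Hs c) :
    evalAt₂ b c s t x = ∑ i : Fin (b + 1), ∑ j : Fin (c + 1),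
      s ^ (i : ℕ) * (t ^ (j : ℕ) * monoCoeff₂ b c i j x) := by
  conv_lhs => rw [← sum_monoCoeff₂_smul b c x]
  simp only [map_sum, map_smul, evalAt₂_tmul, evalAt_monoBasis, smul_eq_mul]
  refine Finset.sum_congr rfl fun i _ => Finset.sum_congr rfl fun j _ => by ring

lemma ext_evalAt₂ {b c : ℕ} {x y : Hs b ⊗[ℂ] Hs c}
    (h : ∀ s t, evalAt₂ b c s t x = evalAt₂ b c s t y) : x = y := by
  have hxy := coeff_ext₂ (fun i j => monoCoeff₂ b c i j x) (fun i j => monoCoeff₂ b c i j y)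
    fun s t => by rw [← evalAt₂_eq_sum, ← evalAt₂_eq_sum, h]
  rw [← sum_monoCoeff₂_smul b c x, ← sum_monoCoeff₂_smul b c y]
  refine Finset.sum_congr rfl fun i _ => Finset.sum_congr rfl fun j _ => ?_
  rw [congrFun (congrFun hxy i) j]

/-- Functions of a `2 × 2` matrix that are polynomial in its entries. -/
def polyFun : Subalgebra ℂ (Matrix (Fin 2) (Fin 2) ℂ → ℂ) :=
  (AlgHom.pi (R := ℂ) (A := fun _ : Matrix (Fin 2) (Fin 2) ℂ => ℂ)
    fun M => aeval fun ij : Fin 2 × Fin 2 => M ij.1 ij.2).range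

lemma entry_mem_polyFun (i j : Fin 2) : (fun M => M i j) ∈ polyFun :=
  ⟨X (i, j), by funext M; simp⟩

lemma const_mem_polyFun (a : ℂ) : (fun _ => a) ∈ polyFun := polyFun.algebraMap_mem a

lemma sum_mem_polyFun {ι : Type*} (s : Finset ι) {f : ι → Matrix (Fin 2) (Fin 2) ℂ → ℂ}
    (h : ∀ i ∈ s, f i ∈ polyFun) : (fun M => ∑ i ∈ s, f i M) ∈ polyFun := by
  have := polyFun.sum_mem h
  rwa [← Finset.sum_fn]

lemma det_pow_mul_mem_polyFun (m : ℕ) {f : Matrix (Fin 2) (Fin 2) ℂ → ℂ} (hf : f ∈ polyFun) :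
    (fun M => M.det ^ m * f M) ∈ polyFun := by
  have h : (fun M : Matrix (Fin 2) (Fin 2) ℂ => M.det) ∈ polyFun := by
    simp only [Matrix.det_fin_two]
    exact polyFun.sub_mem (polyFun.mul_mem (entry_mem_polyFun 0 0) (entry_mem_polyFun 1 1))
      (polyFun.mul_mem (entry_mem_polyFun 0 1) (entry_mem_polyFun 1 0))
  exact polyFun.mul_mem (polyFun.pow_mem h m) hf

lemma coeff_aeval_mem_polyFun (p : MvPolynomial (Fin 2) ℂ) :
    ∀ m : Fin 2 →₀ ℕ, (fun M : Matrix (Fin 2) (Fin 2) ℂ =>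
      coeff m (aeval (fun i => ∑ j, M j i • (X j : MvPolynomial (Fin 2) ℂ)) p)) ∈ polyFun := by
  induction p using MvPolynomial.induction_on with
  | C a =>
    intro m
    simp only [algHom_C, algebraMap_eq]
    exact const_mem_polyFun _
  | add p q hp hq =>
    intro m
    simp only [map_add, coeff_add]
    exact polyFun.add_mem (hp m) (hq m)
  | mul_X p i hp =>
    intro m
    simp only [map_mul, aeval_X, coeff_mul, coeff_sum, coeff_smul, smul_eq_mul]
    exact sum_mem_polyFun _ fun x _ => polyFun.mul_mem (hp _)
      (sum_mem_polyFun _ fun j _ =>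
        polyFun.mul_mem (entry_mem_polyFun j i) (const_mem_polyFun _))

lemma apply_substAct_mem_polyFun {d : ℕ} (φ : Hs d →ₗ[ℂ] ℂ) (p : Hs d) :
    (fun M => φ (substAct d M p)) ∈ polyFun := by
  have h : ∀ M, φ (substAct d M p) =
      ∑ i, monoCoeff d i (substAct d M p) * φ (monoBasis d i) := fun M => by
    conv_lhs => rw [← sum_monoCoeff_smul d (substAct d M p)]
    simp
  simp only [h]
  exact sum_mem_polyFun _ fun i _ =>
    polyFun.mul_mem (coeff_aeval_mem_polyFun _ _) (const_mem_polyFun _)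

lemma apply_map_substAct_mem_polyFun {b c : ℕ} (φ : Hs b ⊗[ℂ] Hs c →ₗ[ℂ] ℂ)
    (x : Hs b ⊗[ℂ] Hs c) :
    (fun M => φ (TensorProduct.map (substAct b M) (substAct c M) x)) ∈ polyFun := by
  induction x using TensorProduct.induction_on with
  | zero => simpa using const_mem_polyFun 0
  | add x y hx hy =>
    simp only [map_add]
    exact polyFun.add_mem hx hy
  | tmul p q =>
    have h : ∀ M, φ (TensorProduct.map (substAct b M) (substAct c M) (p ⊗ₜ q)) =
        ∑ i, monoCoeff b i (substAct b M p) *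
          (φ ∘ₗ TensorProduct.mk ℂ (Hs b) (Hs c) (monoBasis b i)) (substAct c M q) := fun M => by
      rw [TensorProduct.map_tmul]
      conv_lhs => rw [← sum_monoCoeff_smul b (substAct b M p)]
      simp [TensorProduct.sum_tmul, ← TensorProduct.smul_tmul']
    simp only [h]
    exact sum_mem_polyFun _ fun i _ =>
      polyFun.mul_mem (coeff_aeval_mem_polyFun _ _) (apply_substAct_mem_polyFun _ _)

lemma substAct_smul (d : ℕ) (r : ℂ) (M : Matrix (Fin 2) (Fin 2) ℂ) :
    substAct d (r • M) = r ^ d • substAct d M := by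
  refine hom_ext_linPow fun t => ?_
  rw [LinearMap.smul_apply, substAct_linPow, substAct_linPow]
  refine ext_evalAt fun s _ => ?_
  rw [map_smul, evalAt_linPow, evalAt_linPow, smul_eq_mul, ← mul_pow]
  simp only [Matrix.smul_apply, smul_eq_mul]
  ring

/-- The matrix of the quaternion with complexified coordinates `x`. -/
def quatMatrix (x : Fin 4 → ℂ) : Matrix (Fin 2) (Fin 2) ℂ :=
  !![x 0 + Complex.I * x 1, x 2 + Complex.I * x 3;
    -x 2 + Complex.I * x 3, x 0 - Complex.I * x 1]

lemma exists_quatMatrix_eq (M : Matrix (Fin 2) (Fin 2) ℂ) : ∃ x, quatMatrix x = M := by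
  refine ⟨![(M 0 0 + M 1 1) / 2, -Complex.I * (M 0 0 - M 1 1) / 2,
    (M 0 1 - M 1 0) / 2, -Complex.I * (M 0 1 + M 1 0) / 2], ?_⟩
  ext i j
  fin_cases i <;> fin_cases j <;> simp [quatMatrix] <;> ring_nf <;> simp <;> ring

/-- A polynomial function of a matrix is determined by its values on the scalar multiples of
elements of `SU(2)`. -/
lemma polyFun_ext {f g : Matrix (Fin 2) (Fin 2) ℂ → ℂ} (hf : f ∈ polyFun) (hg : g ∈ polyFun)
    (h : ∀ (r : ℂ) (u : SU2),
      f (r • (u : Matrix (Fin 2) (Fin 2) ℂ)) = g (r • (u : Matrix (Fin 2) (Fin 2) ℂ)))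
    (M : Matrix (Fin 2) (Fin 2) ℂ) : f M = g M := by
  obtain ⟨P, rfl⟩ := hf
  obtain ⟨Q, rfl⟩ := hg
  let y : Fin 2 × Fin 2 → MvPolynomial (Fin 4) ℂ := fun ij =>
    !![X 0 + C Complex.I * X 1, X 2 + C Complex.I * X 3;
      -X 2 + C Complex.I * X 3, X 0 - C Complex.I * X 1] ij.1 ij.2
  have hy : ∀ (R : MvPolynomial (Fin 2 × Fin 2) ℂ) (x : Fin 4 → ℂ),
      eval x (aeval y R) = aeval (fun ij : Fin 2 × Fin 2 => quatMatrix x ij.1 ij.2) R := by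
    intro R x
    rw [← coe_aeval_eq_eval, RingHom.coe_coe, ← AlgHom.comp_apply]
    refine DFunLike.congr_fun (algHom_ext fun ij => ?_) _
    obtain ⟨i, j⟩ := ij
    fin_cases i <;> fin_cases j <;> simp [y, quatMatrix]
  have hPQ : aeval y P = aeval y Q := by
    have hinf : (Set.range fun n : ℕ => (n : ℂ) + 1).Infinite :=
      Set.infinite_range_of_injective fun a b hab => by simpa using hab
    refine funext_set (fun _ => Set.range fun n : ℕ => (n : ℂ) + 1) (fun _ => hinf) fun x hx => ?_
    rw [hy, hy]
    choose n hn using fun i => hx i (Set.mem_univ i)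
    have hn' : x = fun i => (n i : ℂ) + 1 := (funext hn).symm
    subst hn'
    set N : ℝ := ∑ i, ((n i : ℝ) + 1) ^ 2 with hN
    have hNpos : 0 < N := Finset.sum_pos (fun i _ => by positivity) Finset.univ_nonempty
    set r : ℝ := √N
    have hr : r ≠ 0 := (Real.sqrt_pos.2 hNpos).ne'
    have hrr : (r : ℂ) * r = N := by
      rw [← Complex.ofReal_mul, Real.mul_self_sqrt hNpos.le]
    have hrc : (r : ℂ) ≠ 0 := Complex.ofReal_ne_zero.2 hr
    have hNc : (N : ℂ) = ∑ i, ((n i : ℂ) + 1) ^ 2 := by rw [hN]; push_cast; rfl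
    rw [Fin.sum_univ_four] at hNc
    have hmem : (r : ℂ)⁻¹ • quatMatrix (fun i => (n i : ℂ) + 1) ∈
        Matrix.specialUnitaryGroup (Fin 2) ℂ := by
      rw [Matrix.mem_specialUnitaryGroup_iff, Matrix.mem_unitaryGroup_iff]
      constructor
      · rw [star_smul, smul_mul_smul_comm]
        have : quatMatrix (fun i => (n i : ℂ) + 1) * star (quatMatrix fun i => (n i : ℂ) + 1) =
            ((r : ℂ) * r) • 1 := by
          rw [hrr, hNc]
          ext i j
          fin_cases i <;> fin_cases j <;>
            simp [quatMatrix, Matrix.mul_apply, Fin.sum_univ_two, Matrix.star_apply] <;>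
            ring_nf <;> simp <;> ring
        rw [this, smul_smul, star_inv₀, Complex.star_def, Complex.conj_ofReal,
          mul_mul_mul_comm, inv_mul_cancel₀ hrc, one_mul, one_smul]
      · rw [Matrix.det_smul, Matrix.det_fin_two]
        simp only [Fintype.card_fin, quatMatrix, Matrix.of_apply, Matrix.cons_val',
          Matrix.cons_val_zero, Matrix.cons_val_one, Matrix.cons_val_fin_one]
        field_simp
        rw [pow_two (r : ℂ), hrr, hNc]
        ring_nf
        simp
        ring
    have := h r ⟨_, hmem⟩
    rw [smul_inv_smul₀ hrc] at this
    exact this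
  obtain ⟨x, rfl⟩ := exists_quatMatrix_eq M
  have := congrArg (eval x) hPQ
  rw [hy, hy] at this
  exact this

/-- An `SU(2)`-equivariant map `Hs b ⊗ Hs c → Hs a` intertwines the action of all matrices, up to
a power of the determinant. -/
lemma merge_equivariant {a b c m : ℕ} (h : b + c = a + 2 * m)
    (π : Hs b ⊗[ℂ] Hs c →ₗ[ℂ] Hs a)
    (hπ : ∀ (g : SU2) (x : Hs b ⊗[ℂ] Hs c),
      π (TensorProduct.map (substAct b g) (substAct c g) x) = substAct a g (π x))
    (M : Matrix (Fin 2) (Fin 2) ℂ) (x : Hs b ⊗[ℂ] Hs c) :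
    π (TensorProduct.map (substAct b M) (substAct c M) x) = M.det ^ m • substAct a M (π x) := by
  refine ext_evalAt fun s _ => ?_
  rw [map_smul, smul_eq_mul]
  refine polyFun_ext (apply_map_substAct_mem_polyFun (evalAt a s ∘ₗ π) x)
    (det_pow_mul_mem_polyFun m (apply_substAct_mem_polyFun (evalAt a s) (π x))) (fun r u => ?_) M
  have hu : (u : Matrix (Fin 2) (Fin 2) ℂ).det = 1 := (Matrix.mem_specialUnitaryGroup_iff.1 u.2).2
  simp only [substAct_smul, TensorProduct.map_smul_left, TensorProduct.map_smul_right,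
    LinearMap.smul_apply, map_smul, LinearMap.comp_apply, hπ, Matrix.det_smul, hu, smul_eq_mul,
    Fintype.card_fin, mul_one]
  rw [← mul_assoc, ← mul_assoc, ← pow_add, ← pow_mul, ← pow_add, add_comm c, h, add_comm a]

/-- An `SU(2)`-equivariant map `Hs a → Hs b ⊗ Hs c` intertwines the action of all matrices, up to
a power of the determinant. -/
lemma split_equivariant {a b c m : ℕ} (h : b + c = a + 2 * m)
    (ε : Hs a →ₗ[ℂ] Hs b ⊗[ℂ] Hs c)
    (hε : ∀ (g : SU2) (v : Hs a),
      ε (substAct a g v) = TensorProduct.map (substAct b g) (substAct c g) (ε v))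
    (M : Matrix (Fin 2) (Fin 2) ℂ) (v : Hs a) :
    TensorProduct.map (substAct b M) (substAct c M) (ε v) = M.det ^ m • ε (substAct a M v) := by
  refine ext_evalAt₂ fun s t => ?_
  rw [map_smul, smul_eq_mul]
  refine polyFun_ext (apply_map_substAct_mem_polyFun (evalAt₂ b c s t) (ε v))
    (det_pow_mul_mem_polyFun m (apply_substAct_mem_polyFun (evalAt₂ b c s t ∘ₗ ε) v))
    (fun r u => ?_) M
  have hu : (u : Matrix (Fin 2) (Fin 2) ℂ).det = 1 := (Matrix.mem_specialUnitaryGroup_iff.1 u.2).2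
  simp only [substAct_smul, TensorProduct.map_smul_left, TensorProduct.map_smul_right,
    LinearMap.smul_apply, map_smul, LinearMap.comp_apply, hε, Matrix.det_smul, hu, smul_eq_mul,
    Fintype.card_fin, mul_one]
  rw [← mul_assoc, ← mul_assoc, ← pow_add, ← pow_mul, ← pow_add, add_comm c, h, add_comm a]

lemma evalAt₂_map_substAct (b c : ℕ) (s t τ q : ℂ) (x : Hs b ⊗[ℂ] Hs c) :
    evalAt₂ b c s t
      (TensorProduct.map (substAct b !![1, τ; 0, q]) (substAct c !![1, τ; 0, q]) x) =
      evalAt₂ b c (τ + q * s) (τ + q * t) x := by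
  induction x using TensorProduct.induction_on with
  | zero => simp
  | add x y hx hy => rw [map_add, map_add, map_add, hx, hy]
  | tmul p r => rw [TensorProduct.map_tmul, evalAt₂_tmul, evalAt₂_tmul, evalAt_substAct,
      evalAt_substAct]

/-- The image of the highest weight vector under an intertwiner `Hs a → Hs b ⊗ Hs c` is a multiple
of a power of the bracket. -/
lemma split_linPow_one_zero {a b c m : ℕ} (ε : Hs a →ₗ[ℂ] Hs b ⊗[ℂ] Hs c) (hε0 : ε ≠ 0)
    (hε : ∀ M v, TensorProduct.map (substAct b M) (substAct c M) (ε v) =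
      M.det ^ m • ε (substAct a M v)) :
    ∃ κ : ℂ, κ ≠ 0 ∧ ∀ s t, evalAt₂ b c s t (ε (linPow a 1 0)) = κ * (t - s) ^ m := by
  have h : ∀ s t, evalAt₂ b c s t (ε (linPow a 1 0)) =
      evalAt₂ b c 0 1 (ε (linPow a 1 0)) * (t - s) ^ m := fun s t => by
    have h1 := evalAt₂_map_substAct b c 0 1 s (t - s) (ε (linPow a 1 0))
    rw [hε, substAct_linPow] at h1
    simp only [Matrix.det_fin_two_of, Matrix.of_apply, Matrix.cons_val', Matrix.cons_val_zero,
      Matrix.cons_val_one, Matrix.cons_val_fin_one, mul_zero, mul_one, one_mul, add_zero, sub_zero,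
      add_sub_cancel, map_smul, smul_eq_mul] at h1
    rw [← h1, mul_comm]
  refine ⟨_, fun h0 => hε0 (hom_ext_linPow fun t => ?_), h⟩
  have hz : ε (linPow a 1 0) = 0 := ext_evalAt₂ fun s t => by rw [h, h0, zero_mul, map_zero]
  have h1 := hε !![1, 0; t, 1] (linPow a 1 0)
  rw [hz, map_zero, substAct_linPow] at h1
  simpa using h1.symm

/-- An intertwiner `Hs (b + c) → Hs b ⊗ Hs c` is a multiple of the comultiplication. -/
lemma split_linPow {a b c : ℕ} (L : Hs a →ₗ[ℂ] Hs b ⊗[ℂ] Hs c) (hL0 : L ≠ 0)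
    (hL : ∀ M v, TensorProduct.map (substAct b M) (substAct c M) (L v) =
      M.det ^ 0 • L (substAct a M v)) :
    ∃ κ : ℂ, κ ≠ 0 ∧ ∀ u v, L (linPow a u v) = κ • (linPow b u v ⊗ₜ[ℂ] linPow c u v) := by
  obtain ⟨κ, hκ, h⟩ := split_linPow_one_zero L hL0 hL
  refine ⟨κ, hκ, fun u v => ?_⟩
  have h0 : L (linPow a 1 0) = κ • (linPow b 1 0 ⊗ₜ[ℂ] linPow c 1 0) :=
    ext_evalAt₂ fun s t => by simp [h, evalAt₂_tmul, evalAt_linPow]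
  have h1 := hL !![u, 0; v, 0] (linPow a 1 0)
  rw [h0, map_smul, TensorProduct.map_tmul, substAct_linPow, substAct_linPow, substAct_linPow] at h1
  simpa using h1.symm

/-- An intertwiner `Hs b ⊗ Hs c → Hs a` is a multiple of the transvectant. -/
lemma merge_linPow {m b c : ℕ} (π : Hs (m + b) ⊗[ℂ] Hs (m + c) →ₗ[ℂ] Hs (b + c)) (hπ0 : π ≠ 0)
    (hπ : ∀ M x, π (TensorProduct.map (substAct _ M) (substAct _ M) x) =
      M.det ^ m • substAct _ M (π x)) :
    ∃ κ : ℂ, κ ≠ 0 ∧ ∀ s t z, evalAt _ z (π (linPow _ 1 s ⊗ₜ linPow _ 1 t)) =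
      κ * (t - s) ^ m * ((1 + s * z) ^ b * (1 + t * z) ^ c) := by
  set q := π (linPow _ 1 0 ⊗ₜ linPow _ 0 1) with hq
  have hqe : q = evalAt _ 1 q • monoBasis (b + c) ⟨c, by omega⟩ := by
    refine ext_evalAt fun s hs => ?_
    have h1 := hπ !![1, 0; 0, s] (linPow _ 1 0 ⊗ₜ linPow _ 0 1)
    have h2 : linPow (m + c) 0 s = s ^ (m + c) • linPow (m + c) 0 1 :=
      ext_evalAt fun z _ => by simp [evalAt_linPow, mul_pow]
    have h3 := congrArg (evalAt (b + c) 1) h1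
    rw [TensorProduct.map_tmul, substAct_linPow, substAct_linPow, map_smul, evalAt_substAct] at h3
    simp only [Matrix.det_fin_two_of, Matrix.of_apply, Matrix.cons_val', Matrix.cons_val_zero,
      Matrix.cons_val_one, Matrix.cons_val_fin_one, mul_zero, mul_one, one_mul, zero_add, add_zero,
      sub_zero, h2, TensorProduct.tmul_smul, map_smul, smul_eq_mul, ← hq, pow_add, mul_assoc] at h3
    rw [map_smul, evalAt_monoBasis, smul_eq_mul, mul_comm]
    exact (mul_left_cancel₀ (pow_ne_zero m hs) h3).symm
  have h : ∀ s t z, evalAt _ z (π (linPow _ 1 s ⊗ₜ linPow _ 1 t)) =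
      evalAt _ 1 q * (t - s) ^ m * ((1 + s * z) ^ b * (1 + t * z) ^ c) := fun s t z => by
    have h1 := congrArg (evalAt _ z) (hπ !![1, 1; s, t] (linPow _ 1 0 ⊗ₜ linPow _ 0 1))
    rw [TensorProduct.map_tmul, substAct_linPow, substAct_linPow, map_smul, ← hq] at h1
    have h2 : evalAt (b + c) z (substAct (b + c) !![1, 1; s, t] (monoBasis _ ⟨c, by omega⟩)) =
        (1 + s * z) ^ b * (1 + t * z) ^ c := by
      rw [evalAt_apply, coe_substAct, coe_monoBasis]
      simp [Fin.sum_univ_two]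
    rw [hqe, map_smul, map_smul, h2] at h1
    simp only [Matrix.det_fin_two_of, Matrix.of_apply, Matrix.cons_val', Matrix.cons_val_zero,
      Matrix.cons_val_one, Matrix.cons_val_fin_one, mul_zero, mul_one, one_mul, zero_add, add_zero,
      smul_eq_mul] at h1
    rw [h1]
    ring
  refine ⟨_, fun h0 => hπ0 (hom_ext_linPow_tmul fun s t => ext_evalAt fun z _ => ?_), h⟩
  rw [h, h0, LinearMap.zero_apply, map_zero]
  ring

/-- An intertwiner `Hs b ⊗ Hs c → Hs (b + c)` is a multiple of the multiplication. -/
lemma merge_eq_mul {b c : ℕ} (δ : Hs b ⊗[ℂ] Hs c →ₗ[ℂ] Hs (b + c)) (hδ0 : δ ≠ 0)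
    (hδ : ∀ M x, δ (TensorProduct.map (substAct _ M) (substAct _ M) x) =
      M.det ^ 0 • substAct _ M (δ x)) :
    ∃ κ : ℂ, κ ≠ 0 ∧ ∀ z p q, evalAt _ z (δ (p ⊗ₜ q)) = κ * (evalAt b z p * evalAt c z q) := by
  obtain ⟨b', hb⟩ : ∃ b', b' = 0 + b := ⟨_, rfl⟩
  obtain ⟨c', hc⟩ : ∃ c', c' = 0 + c := ⟨_, rfl⟩
  have key : ∀ δ' : Hs b' ⊗[ℂ] Hs c' →ₗ[ℂ] Hs (b + c), δ' ≠ 0 →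
      (∀ M x, δ' (TensorProduct.map (substAct _ M) (substAct _ M) x) =
        M.det ^ 0 • substAct _ M (δ' x)) →
      ∃ κ : ℂ, κ ≠ 0 ∧ ∀ s t z, evalAt _ z (δ' (linPow _ 1 s ⊗ₜ linPow _ 1 t)) =
        κ * (t - s) ^ 0 * ((1 + s * z) ^ b * (1 + t * z) ^ c) := by
    subst hb hc
    exact fun δ' => merge_linPow δ'
  rw [zero_add] at hb hc
  subst hb hc
  obtain ⟨κ, hκ, h⟩ := key δ hδ0 hδ
  refine ⟨κ, hκ, fun z p q => ?_⟩
  have he : evalAt _ z ∘ₗ δ = κ • evalAt₂ b' c' z z := hom_ext_linPow_tmul fun s t => by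
    simp [h, evalAt₂_tmul, evalAt_linPow]
  exact DFunLike.congr_fun he (p ⊗ₜ q)

lemma sub_pow_eq_sum {b c m : ℕ} (hb : m ≤ b) (hc : m ≤ c) (s t : ℂ) :
    (t - s) ^ m = ∑ i : Fin (b + 1), ∑ j : Fin (c + 1), s ^ (i : ℕ) * (t ^ (j : ℕ) *
      if (i : ℕ) + j = m then (-1) ^ (i : ℕ) * (m.choose i : ℂ) else 0) := by
  rw [Fin.sum_univ_eq_sum_range (fun i => ∑ j : Fin (c + 1), s ^ i * (t ^ (j : ℕ) *
      if i + j = m then (-1) ^ i * (m.choose i : ℂ) else 0)),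
    ← Finset.sum_subset (Finset.range_mono (Nat.succ_le_succ hb)), sub_eq_neg_add, add_pow]
  · refine Finset.sum_congr rfl fun i hi => ?_
    have him : i ≤ m := Nat.lt_succ_iff.1 (Finset.mem_range.1 hi)
    rw [Finset.sum_eq_single (⟨m - i, by omega⟩ : Fin (c + 1))]
    · rw [if_pos (by dsimp only; omega), neg_pow]
      ring
    · intro j _ hj
      rw [if_neg, mul_zero, mul_zero]
      exact fun h => hj (Fin.ext (by dsimp only; omega))
    · simp
  · intro i _ hi
    refine Finset.sum_eq_zero fun j _ => ?_
    rw [if_neg, mul_zero, mul_zero]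
    have := Finset.mem_range.not.1 hi
    omega

/-- A functional and a tensor that are both given by the `m`-th power of the bracket pair
nontrivially. -/
lemma pairing_ne_zero {b c m : ℕ} (hb : m ≤ b) (hc : m ≤ c) (G : Hs b ⊗[ℂ] Hs c →ₗ[ℂ] ℂ)
    (x : Hs b ⊗[ℂ] Hs c) {κ κ' : ℂ} (hκ : κ ≠ 0) (hκ' : κ' ≠ 0)
    (hG : ∀ s t, G (linPow b 1 s ⊗ₜ linPow c 1 t) = κ * (t - s) ^ m)
    (hx : ∀ s t, evalAt₂ b c s t x = κ' * (t - s) ^ m) : G x ≠ 0 := by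
  let B : Fin (b + 1) → Fin (c + 1) → ℝ := fun i j =>
    if (i : ℕ) + j = m then (-1) ^ (i : ℕ) * (m.choose i : ℝ) else 0
  have hB : ∀ i j, (B i j : ℂ) =
      if (i : ℕ) + j = m then (-1) ^ (i : ℕ) * (m.choose i : ℂ) else 0 := fun i j => by
    simp only [B]
    split_ifs <;> simp
  have hpow := fun s t => sub_pow_eq_sum hb hc s t
  simp only [← hB] at hpow
  have hxc := coeff_ext₂ (fun i j => monoCoeff₂ b c i j x) (fun i j => κ' * B i j) fun s t => by
    rw [← evalAt₂_eq_sum, hx, hpow, Finset.mul_sum]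
    simp only [Finset.mul_sum]
    exact Finset.sum_congr rfl fun i _ => Finset.sum_congr rfl fun j _ => by ring
  have hGc := coeff_ext₂
    (fun i j => (b.choose i : ℂ) * (c.choose j : ℂ) * G (monoBasis b i ⊗ₜ monoBasis c j))
    (fun i j => κ * B i j) fun s t => by
      have h := hG s t
      rw [hpow, linPow_one_eq_sum, linPow_one_eq_sum] at h
      simp only [TensorProduct.sum_tmul, TensorProduct.tmul_sum, TensorProduct.smul_tmul_smul,
        map_sum, map_smul, smul_eq_mul, Finset.mul_sum] at h
      rw [Finset.sum_comm] at h
      refine Eq.trans ?_ (h.trans ?_)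
      all_goals exact Finset.sum_congr rfl fun i _ => Finset.sum_congr rfl fun j _ => by ring
  have hbi : ∀ i : Fin (b + 1), 0 < b.choose i := fun i => Nat.choose_pos (Nat.lt_succ_iff.1 i.2)
  have hcj : ∀ j : Fin (c + 1), 0 < c.choose j := fun j => Nat.choose_pos (Nat.lt_succ_iff.1 j.2)
  let S : ℝ := ∑ i : Fin (b + 1), ∑ j : Fin (c + 1), B i j ^ 2 / (b.choose i * c.choose j)
  have hGx : G x = κ * κ' * S := by
    conv_lhs => rw [← sum_monoCoeff₂_smul b c x]
    simp only [map_sum, map_smul, smul_eq_mul, S, Complex.ofReal_sum, Finset.mul_sum]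
    refine Finset.sum_congr rfl fun i _ => Finset.sum_congr rfl fun j _ => ?_
    have h1 := congrFun (congrFun hxc i) j
    have h2 := congrFun (congrFun hGc i) j
    have hb0 : (b.choose i : ℂ) ≠ 0 := Nat.cast_ne_zero.2 (hbi i).ne'
    have hc0 : (c.choose j : ℂ) ≠ 0 := Nat.cast_ne_zero.2 (hcj j).ne'
    push_cast
    rw [h1]
    field_simp
    linear_combination (B i j : ℂ) * h2
  have hS : 0 < S := by
    have hnn : ∀ i j, 0 ≤ B i j ^ 2 / ((b.choose i : ℝ) * c.choose j) := fun i j => by positivity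
    refine Finset.sum_pos' (fun i _ => Finset.sum_nonneg fun j _ => hnn i j)
      ⟨0, Finset.mem_univ _, Finset.sum_pos' (fun j _ => hnn 0 j)
        ⟨⟨m, by omega⟩, Finset.mem_univ _, ?_⟩⟩
    have := Nat.choose_pos hc
    simp only [B]
    simp
    exact_mod_cast this
  rw [hGx]
  exact mul_ne_zero (mul_ne_zero hκ hκ') (Complex.ofReal_ne_zero.2 hS.ne')

/-- Schur's lemma for the representation `Hs d`, with the scalar read off at the highest weight
vector. -/
lemma eq_smul_id_of_commute {d : ℕ} (T : Hs d →ₗ[ℂ] Hs d)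
    (hT : ∀ M : Matrix (Fin 2) (Fin 2) ℂ, M.det = 1 →
      ∀ v, T (substAct d M v) = substAct d M (T v)) :
    T = evalAt d 0 (T (linPow d 1 0)) • LinearMap.id := by
  have h0 : T (linPow d 1 0) = evalAt d 0 (T (linPow d 1 0)) • linPow d 1 0 := by
    refine ext_evalAt fun s _ => ?_
    have h := congrArg (evalAt d 0) (hT !![1, s; 0, 1] (by simp) (linPow d 1 0))
    rw [evalAt_substAct, substAct_linPow] at h
    simp only [Matrix.of_apply, Matrix.cons_val', Matrix.cons_val_zero, Matrix.cons_val_one,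
      Matrix.cons_val_fin_one, mul_zero, mul_one, add_zero] at h
    rw [← h, map_smul, evalAt_linPow]
    simp
  refine hom_ext_linPow fun t => ?_
  have ht : linPow d 1 t = substAct d !![1, 0; t, 1] (linPow d 1 0) := by
    rw [substAct_linPow]
    simp
  rw [ht, hT _ (by simp), LinearMap.smul_apply, LinearMap.id_apply, ← map_smul]
  exact congrArg _ h0

/-- The composite `δ ∘ (π⁺ ⊗ π⁻) ∘ σ ∘ (C₁ ⊗ C₂)` of intertwiners with additive spins is again
a nonzero multiple of the transvectant, and commutes with matrices of determinant one. -/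
lemma recoupling_spec {mp bp cp mm bm cm k₁ k₂ : ℕ}
    (C₁ : Hs k₁ →ₗ[ℂ] Hs (mp + bp) ⊗[ℂ] Hs (mm + bm)) (hC₁0 : C₁ ≠ 0)
    (hC₁ : ∀ M v, TensorProduct.map (substAct _ M) (substAct _ M) (C₁ v) =
      M.det ^ 0 • C₁ (substAct _ M v))
    (C₂ : Hs k₂ →ₗ[ℂ] Hs (mp + cp) ⊗[ℂ] Hs (mm + cm)) (hC₂0 : C₂ ≠ 0)
    (hC₂ : ∀ M v, TensorProduct.map (substAct _ M) (substAct _ M) (C₂ v) =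
      M.det ^ 0 • C₂ (substAct _ M v))
    (πp : Hs (mp + bp) ⊗[ℂ] Hs (mp + cp) →ₗ[ℂ] Hs (bp + cp)) (hπp0 : πp ≠ 0)
    (hπp : ∀ M x, πp (TensorProduct.map (substAct _ M) (substAct _ M) x) =
      M.det ^ mp • substAct _ M (πp x))
    (πm : Hs (mm + bm) ⊗[ℂ] Hs (mm + cm) →ₗ[ℂ] Hs (bm + cm)) (hπm0 : πm ≠ 0)
    (hπm : ∀ M x, πm (TensorProduct.map (substAct _ M) (substAct _ M) x) =
      M.det ^ mm • substAct _ M (πm x))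
    (δ : Hs (bp + cp) ⊗[ℂ] Hs (bm + cm) →ₗ[ℂ] Hs (bp + cp + (bm + cm))) (hδ0 : δ ≠ 0)
    (hδ : ∀ M x, δ (TensorProduct.map (substAct _ M) (substAct _ M) x) =
      M.det ^ 0 • substAct _ M (δ x))
    (F : Hs k₁ ⊗[ℂ] Hs k₂ →ₗ[ℂ] Hs (bp + cp + (bm + cm)))
    (hF : F = δ ∘ₗ TensorProduct.map πp πm ∘ₗ
        (TensorProduct.tensorTensorTensorComm ℂ
          (Hs (mp + bp)) (Hs (mm + bm)) (Hs (mp + cp)) (Hs (mm + cm))).toLinearMap ∘ₗ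
        TensorProduct.map C₁ C₂) :
    (∃ κ : ℂ, κ ≠ 0 ∧ ∀ s t, evalAt _ 0 (F (linPow _ 1 s ⊗ₜ linPow _ 1 t)) =
      κ * (t - s) ^ (mp + mm)) ∧
    ∀ M : Matrix (Fin 2) (Fin 2) ℂ, M.det = 1 → ∀ x,
      F (TensorProduct.map (substAct _ M) (substAct _ M) x) = substAct _ M (F x) := by
  obtain ⟨κ₁, hκ₁, h₁⟩ := split_linPow C₁ hC₁0 hC₁
  obtain ⟨κ₂, hκ₂, h₂⟩ := split_linPow C₂ hC₂0 hC₂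
  obtain ⟨κp, hκp, hp⟩ := merge_linPow πp hπp0 hπp
  obtain ⟨κm, hκm, hm⟩ := merge_linPow πm hπm0 hπm
  obtain ⟨κδ, hκδ, hd⟩ := merge_eq_mul δ hδ0 hδ
  have hFl : ∀ u v u' v', F (linPow _ u v ⊗ₜ linPow _ u' v') = (κ₁ * κ₂) •
      δ (πp (linPow _ u v ⊗ₜ linPow _ u' v') ⊗ₜ πm (linPow _ u v ⊗ₜ linPow _ u' v')) := by
    intro u v u' v'
    simp only [hF, LinearMap.comp_apply, TensorProduct.map_tmul, h₁, h₂,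
      TensorProduct.smul_tmul_smul, map_smul, LinearEquiv.coe_coe,
      TensorProduct.tensorTensorTensorComm_tmul]
  refine ⟨⟨κ₁ * κ₂ * (κδ * (κp * κm)), by positivity, fun s t => ?_⟩, fun M hM => ?_⟩
  · rw [hFl, map_smul, hd, hp, hm, smul_eq_mul, pow_add]
    simp only [mul_zero, add_zero, one_pow, mul_one]
    ring
  · refine DFunLike.congr_fun (f := F ∘ₗ TensorProduct.map (substAct _ M) (substAct _ M))
      (g := substAct _ M ∘ₗ F) (hom_ext_linPow_tmul fun s t => ?_)
    have hp' := hπp M (linPow _ 1 s ⊗ₜ linPow _ 1 t)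
    have hm' := hπm M (linPow _ 1 s ⊗ₜ linPow _ 1 t)
    have hd' := hδ M (πp (linPow _ 1 s ⊗ₜ linPow _ 1 t) ⊗ₜ πm (linPow _ 1 s ⊗ₜ linPow _ 1 t))
    rw [hM, one_pow, one_smul, TensorProduct.map_tmul, substAct_linPow, substAct_linPow] at hp' hm'
    rw [hM, one_pow, one_smul, TensorProduct.map_tmul, ← hp', ← hm'] at hd'
    rw [LinearMap.comp_apply, LinearMap.comp_apply, TensorProduct.map_tmul, substAct_linPow,
      substAct_linPow, hFl, hFl, hd', map_smul]

/-- The numerical data of a triangle of twice-spins. -/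
lemma exists_triangle_split {a b c : ℕ} (h : a ≤ b + c ∧ b ≤ a + c ∧ c ≤ a + b)
    (he : Even (a + b + c)) : ∃ m b' c', b = m + b' ∧ c = m + c' ∧ a = b' + c' := by
  obtain ⟨r, hr⟩ := he
  exact ⟨r - a, r - c, r - b, by omega, by omega, by omega⟩

end Intertwiners

/-- The key nondegeneracy statement behind Lemma 5 of the paper (subsection "Relation among
intertwiners"): spins are half-integers, encoded by natural numbers that are twice the spin
(`dk1 = 2k₁`, `djp1 = 2j⁺₁`, etc.).  Given the splitting `j⁺ᵢ + j⁻ᵢ = kᵢ` for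
`i ∈ {1, 2, α}`, the triangle inequalities for `(k_α,k₁,k₂)`, `(j⁺_α,j⁺₁,j⁺₂)`,
`(j⁻_α,j⁻₁,j⁻₂)`, the integrality conditions `k_α+k₁+k₂ ∈ ℕ`, `j⁺_α+j⁺₁+j⁺₂ ∈ ℕ`
(evenness of the corresponding sums of twice-spins), and arbitrary nonzero
`SU(2)`-equivariant maps `ε, C₁, C₂, π⁺, π⁻, δ` as below, the composite
`δ ∘ (π⁺ ⊗ π⁻) ∘ σ ∘ (C₁ ⊗ C₂) ∘ ε : H_{k_α} → H_{k_α}` is a nonzero scalar multiple of the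
identity. -/
theorem composite_is_nonzero_multiple_of_id
    (dk1 dk2 dka djp1 djm1 djp2 djm2 djpa djma : ℕ)
    (hsum1 : djp1 + djm1 = dk1) (hsum2 : djp2 + djm2 = dk2) (hsuma : djpa + djma = dka)
    (htrik : dka ≤ dk1 + dk2 ∧ dk1 ≤ dka + dk2 ∧ dk2 ≤ dka + dk1)
    (htrip : djpa ≤ djp1 + djp2 ∧ djp1 ≤ djpa + djp2 ∧ djp2 ≤ djpa + djp1)
    (htrim : djma ≤ djm1 + djm2 ∧ djm1 ≤ djma + djm2 ∧ djm2 ≤ djma + djm1)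
    (hek : Even (dka + dk1 + dk2)) (hep : Even (djpa + djp1 + djp2))
    (ρk1 : Representation ℂ SU2 (Hs dk1)) (hρk1 : IsSpinRep dk1 ρk1)
    (ρk2 : Representation ℂ SU2 (Hs dk2)) (hρk2 : IsSpinRep dk2 ρk2)
    (ρka : Representation ℂ SU2 (Hs dka)) (hρka : IsSpinRep dka ρka)
    (ρjp1 : Representation ℂ SU2 (Hs djp1)) (hρjp1 : IsSpinRep djp1 ρjp1)
    (ρjm1 : Representation ℂ SU2 (Hs djm1)) (hρjm1 : IsSpinRep djm1 ρjm1)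
    (ρjp2 : Representation ℂ SU2 (Hs djp2)) (hρjp2 : IsSpinRep djp2 ρjp2)
    (ρjm2 : Representation ℂ SU2 (Hs djm2)) (hρjm2 : IsSpinRep djm2 ρjm2)
    (ρjpa : Representation ℂ SU2 (Hs djpa)) (hρjpa : IsSpinRep djpa ρjpa)
    (ρjma : Representation ℂ SU2 (Hs djma)) (hρjma : IsSpinRep djma ρjma)
    -- ε : H_{k_α} → H_{k₁} ⊗ H_{k₂}, nonzero and equivariant
    (ε : Hs dka →ₗ[ℂ] Hs dk1 ⊗[ℂ] Hs dk2) (hε0 : ε ≠ 0)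
    (hε : ∀ (g : SU2) (v : Hs dka),
      ε (ρka g v) = TensorProduct.map (ρk1 g) (ρk2 g) (ε v))
    -- C₁ : H_{k₁} → H_{j⁺₁} ⊗ H_{j⁻₁}, nonzero and equivariant
    (C₁ : Hs dk1 →ₗ[ℂ] Hs djp1 ⊗[ℂ] Hs djm1) (hC₁0 : C₁ ≠ 0)
    (hC₁ : ∀ (g : SU2) (v : Hs dk1),
      C₁ (ρk1 g v) = TensorProduct.map (ρjp1 g) (ρjm1 g) (C₁ v))
    -- C₂ : H_{k₂} → H_{j⁺₂} ⊗ H_{j⁻₂}, nonzero and equivariant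
    (C₂ : Hs dk2 →ₗ[ℂ] Hs djp2 ⊗[ℂ] Hs djm2) (hC₂0 : C₂ ≠ 0)
    (hC₂ : ∀ (g : SU2) (v : Hs dk2),
      C₂ (ρk2 g v) = TensorProduct.map (ρjp2 g) (ρjm2 g) (C₂ v))
    -- π⁺ : H_{j⁺₁} ⊗ H_{j⁺₂} → H_{j⁺_α}, nonzero and equivariant
    (πp : Hs djp1 ⊗[ℂ] Hs djp2 →ₗ[ℂ] Hs djpa) (hπp0 : πp ≠ 0)
    (hπp : ∀ (g : SU2) (x : Hs djp1 ⊗[ℂ] Hs djp2),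
      πp (TensorProduct.map (ρjp1 g) (ρjp2 g) x) = ρjpa g (πp x))
    -- π⁻ : H_{j⁻₁} ⊗ H_{j⁻₂} → H_{j⁻_α}, nonzero and equivariant
    (πm : Hs djm1 ⊗[ℂ] Hs djm2 →ₗ[ℂ] Hs djma) (hπm0 : πm ≠ 0)
    (hπm : ∀ (g : SU2) (x : Hs djm1 ⊗[ℂ] Hs djm2),
      πm (TensorProduct.map (ρjm1 g) (ρjm2 g) x) = ρjma g (πm x))
    -- δ : H_{j⁺_α} ⊗ H_{j⁻_α} → H_{k_α}, nonzero and equivariant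
    (δ : Hs djpa ⊗[ℂ] Hs djma →ₗ[ℂ] Hs dka) (hδ0 : δ ≠ 0)
    (hδ : ∀ (g : SU2) (x : Hs djpa ⊗[ℂ] Hs djma),
      δ (TensorProduct.map (ρjpa g) (ρjma g) x) = ρka g (δ x)) :
    ∃ c : ℂ, c ≠ 0 ∧
      (δ ∘ₗ TensorProduct.map πp πm ∘ₗ
        (TensorProduct.tensorTensorTensorComm ℂ
          (Hs djp1) (Hs djm1) (Hs djp2) (Hs djm2)).toLinearMap ∘ₗ
        TensorProduct.map C₁ C₂ ∘ₗ ε) = c • LinearMap.id := by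
  obtain ⟨mp, bp, cp, rfl, rfl, rfl⟩ := exists_triangle_split htrip hep
  obtain ⟨mm, bm, cm, rfl, rfl, rfl⟩ := exists_triangle_split htrim (by
    rw [Nat.even_iff] at *
    omega)
  subst hsum1 hsum2 hsuma
  simp only [hρk1.eq_substAct, hρk2.eq_substAct, hρka.eq_substAct, hρjp1.eq_substAct,
    hρjm1.eq_substAct, hρjp2.eq_substAct, hρjm2.eq_substAct, hρjpa.eq_substAct,
    hρjma.eq_substAct] at hε hC₁ hC₂ hπp hπm hδ
  have hεM := split_equivariant (m := mp + mm) (by omega) ε hε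
  obtain ⟨⟨κ, hκ, hFκ⟩, hFM⟩ := recoupling_spec C₁ hC₁0 (split_equivariant (by omega) C₁ hC₁)
    C₂ hC₂0 (split_equivariant (by omega) C₂ hC₂) πp hπp0 (merge_equivariant (by omega) πp hπp)
    πm hπm0 (merge_equivariant (by omega) πm hπm) δ hδ0 (merge_equivariant (by omega) δ hδ) _ rfl
  obtain ⟨κ', hκ', hεκ⟩ := split_linPow_one_zero ε hε0 hεM
  refine ⟨_, pairing_ne_zero (by omega) (by omega) (evalAt _ 0 ∘ₗ _) _ hκ hκ' hFκ hεκ,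
    eq_smul_id_of_commute _ fun M hM v => ?_⟩
  have h := hεM M v
  rw [hM, one_pow, one_smul] at h
  have h' := hFM M hM (ε v)
  rw [h] at h'
  exact h'

end
end

section
/- Let γ be a real number with |γ| < 1, and let k_α, k₁, k₂ be nonnegative integers such that (k_α, k₁, k₂) satisfies the triangle inequality and (1+γ)kᵢ/2 and (1−γ)kᵢ/2 are nonnegative integers for i = 1, 2. Then there exist nonnegative integers j⁺_α and j⁻_α with j⁺_α + j⁻_α = k_α such that the triple (j⁺_α, (1+γ)k₁/2, (1+γ)k₂/2) and the triple (j⁻_α, (1−γ)k₁/2, (1−γ)k₂/2) both satisfy the triangle inequality; moreover (j⁺_α, j⁻_α) can be chosen to be either (⌊(1+γ)k_α/2⌉₊, ⌊(1−γ)k_α/2⌉₋) or (⌊(1+γ)k_α/2⌉₋, ⌊(1−γ)k_α/2⌉₊). -/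
theorem clpPlus_mono : Monotone clpPlus := fun _ _ h => by
  unfold clpPlus
  gcongr

theorem clpMinus_mono : Monotone clpMinus := fun _ _ h => by
  unfold clpMinus
  gcongr

theorem clpPlus_intCast (n : ℤ) : clpPlus n = n := by
  rw [clpPlus, Int.floor_eq_iff]
  constructor <;> linarith

theorem clpMinus_intCast (n : ℤ) : clpMinus n = n := by
  rw [clpMinus, Int.ceil_eq_iff]
  constructor <;> linarith

theorem clpMinus_intCast_sub (n : ℤ) (x : ℝ) : clpMinus (n - x) = n - clpPlus x := by
  rw [clpMinus, clpPlus, show (n : ℝ) - x - 1 / 2 = -(x + 1 / 2) + n by ring, Int.ceil_add_intCast,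
    Int.ceil_neg]
  ring

/-- A monotone rounding to integers preserves the triangle inequality when the other two sides
are integers. -/
theorem Triangle3.round {r : ℝ → ℤ} (hr : Monotone r) (hint : ∀ n : ℤ, r n = n) {x : ℝ}
    {b c : ℕ} (h : Triangle3 x b c) : Triangle3 (r x) b c := by
  obtain ⟨h₁, h₂, h₃⟩ := h
  have u : r x ≤ b + c := by
    rw [← hint (b + c)]
    exact hr (by push_cast; exact h₁)
  have v : (b : ℤ) - c ≤ r x := by
    rw [← hint (b - c)]
    exact hr (by push_cast; linarith)
  have w : (c : ℤ) - b ≤ r x := by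
    rw [← hint (c - b)]
    exact hr (by push_cast; linarith)
  refine ⟨by exact_mod_cast u, ?_, ?_⟩
  · exact_mod_cast (by linarith : (b : ℤ) ≤ r x + c)
  · exact_mod_cast (by linarith : (c : ℤ) ≤ r x + b)

theorem Triangle3.mul_div_two {a b c t : ℝ} (ht : 0 ≤ t) (h : Triangle3 a b c) :
    Triangle3 (t * a / 2) (t * b / 2) (t * c / 2) := by
  obtain ⟨h₁, h₂, h₃⟩ := h
  refine ⟨?_, ?_, ?_⟩ <;> nlinarith

/-- If `(k_α, k₁, k₂)` are nonnegative integers satisfying the triangle inequality and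
`(1±γ)kᵢ/2` are nonnegative integers for `i = 1,2`, then there are nonnegative integers
`j⁺_α, j⁻_α` with `j⁺_α + j⁻_α = k_α` such that `(j⁺_α, (1+γ)k₁/2, (1+γ)k₂/2)` and
`(j⁻_α, (1−γ)k₁/2, (1−γ)k₂/2)` satisfy the triangle inequality; moreover `(j⁺_α, j⁻_α)`
can be chosen to be `(⌊(1+γ)k_α/2⌉₊, ⌊(1−γ)k_α/2⌉₋)` or `(⌊(1+γ)k_α/2⌉₋, ⌊(1−γ)k_α/2⌉₊)`. -/
theorem exists_simple_split (γ : ℝ) (hγ : |γ| < 1) (kα k₁ k₂ : ℕ)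
    (htri : Triangle3 (kα : ℝ) (k₁ : ℝ) (k₂ : ℝ))
    (h1p : ∃ m : ℕ, (1 + γ) * (k₁ : ℝ) / 2 = (m : ℝ))
    (h1m : ∃ m : ℕ, (1 - γ) * (k₁ : ℝ) / 2 = (m : ℝ))
    (h2p : ∃ m : ℕ, (1 + γ) * (k₂ : ℝ) / 2 = (m : ℝ))
    (h2m : ∃ m : ℕ, (1 - γ) * (k₂ : ℝ) / 2 = (m : ℝ)) :
    ∃ jp jm : ℕ, jp + jm = kα ∧
      Triangle3 (jp : ℝ) ((1 + γ) * (k₁ : ℝ) / 2) ((1 + γ) * (k₂ : ℝ) / 2) ∧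
      Triangle3 (jm : ℝ) ((1 - γ) * (k₁ : ℝ) / 2) ((1 - γ) * (k₂ : ℝ) / 2) ∧
      (((jp : ℤ) = clpPlus ((1 + γ) * (kα : ℝ) / 2) ∧
        (jm : ℤ) = clpMinus ((1 - γ) * (kα : ℝ) / 2)) ∨
       ((jp : ℤ) = clpMinus ((1 + γ) * (kα : ℝ) / 2) ∧
        (jm : ℤ) = clpPlus ((1 - γ) * (kα : ℝ) / 2))) := by
  obtain ⟨hγl, hγu⟩ := abs_lt.mp hγ
  have hp : 0 ≤ 1 + γ := by linarith
  have hm : 0 ≤ 1 - γ := by linarith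
  have tp := htri.mul_div_two hp
  have tm := htri.mul_div_two hm
  obtain ⟨a, ha⟩ := h1p
  obtain ⟨b, hb⟩ := h1m
  obtain ⟨c, hc⟩ := h2p
  obtain ⟨d, hd⟩ := h2m
  rw [ha, hc] at tp ⊢
  rw [hb, hd] at tm ⊢
  have sp := tp.round clpPlus_mono clpPlus_intCast
  have sm := tm.round clpMinus_mono clpMinus_intCast
  have hsum : clpMinus ((1 - γ) * kα / 2) = kα - clpPlus ((1 + γ) * kα / 2) := by
    rw [← clpMinus_intCast_sub]
    congr 1
    push_cast
    ring
  have np : 0 ≤ clpPlus ((1 + γ) * kα / 2) := by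
    have := clpPlus_mono (show ((0 : ℤ) : ℝ) ≤ (1 + γ) * kα / 2 by push_cast; positivity)
    rwa [clpPlus_intCast] at this
  have nm : 0 ≤ clpMinus ((1 - γ) * kα / 2) := by
    have := clpMinus_mono (show ((0 : ℤ) : ℝ) ≤ (1 - γ) * kα / 2 by push_cast; positivity)
    rwa [clpMinus_intCast] at this
  obtain ⟨jp, hjp⟩ := Int.eq_ofNat_of_zero_le np
  obtain ⟨jm, hjm⟩ := Int.eq_ofNat_of_zero_le nm
  rw [hjp] at sp
  rw [hjm] at sm
  exact ⟨jp, jm, by omega, by exact_mod_cast sp, by exact_mod_cast sm, .inl ⟨hjp.symm, hjm.symm⟩⟩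
end

section
/- (Injectivity of the EPRL map.) Let γ be a real number with |γ| < 1, and let (k₁,…,kₙ) be natural numbers such that j⁺ᵢ := (1+γ)kᵢ/2 is a natural number for every i; set j⁻ᵢ := (1−γ)kᵢ/2 = kᵢ − j⁺ᵢ (also a natural number). For each i fix a nonzero SU(2)-equivariant linear map C_i : H_{k_i} → H_{j⁺ᵢ} ⊗ H_{j⁻ᵢ}, and define the EPRL map ι^{EPRL} : Inv(H_{k₁} ⊗ ⋯ ⊗ H_{kₙ}) → Inv(H_{j⁺₁} ⊗ ⋯ ⊗ H_{j⁺ₙ}) ⊗ Inv(H_{j⁻₁} ⊗ ⋯ ⊗ H_{j⁻ₙ}) by ι^{EPRL}(I) = (P⁺ ⊗ P⁻)((C₁ ⊗ ⋯ ⊗ Cₙ)(I)), where the tensor factors are regrouped so that all H_{j⁺ᵢ} come first and P± is the orthogonal projection of H_{j±₁} ⊗ ⋯ ⊗ H_{j±ₙ} onto its SU(2)-invariant subspace. Then ι^{EPRL} is injective. -/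
open scoped TensorProduct

set_option synthInstance.maxHeartbeats 1000000
set_option maxHeartbeats 1000000

noncomputable section

/-- The subspace of `SU(2)`-invariant vectors of the tensor product of the representations
`ρ i`: the vectors fixed by all operators `⨂ᵢ ρᵢ(g) = PiTensorProduct.map (fun i => ρ i g)`. -/
def piInvariants {n : ℕ} {V : Fin n → Type} [∀ i, AddCommMonoid (V i)] [∀ i, Module ℂ (V i)]
    (ρ : ∀ i, Representation ℂ SU2 (V i)) : Submodule ℂ (⨂[ℂ] i, V i) where
  carrier := {v | ∀ g : SU2, PiTensorProduct.map (fun i => ρ i g) v = v}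
  add_mem' := fun hv hw g => by simp only [map_add, hv g, hw g]
  zero_mem' := fun g => by simp only [map_zero]
  smul_mem' := fun c v hv g => by simp only [map_smul, hv g]

namespace EPRL

open MvPolynomial

section Conj

variable {σ : Type*}

/-- Coefficientwise complex conjugation. -/
def conj : MvPolynomial σ ℂ →+* MvPolynomial σ ℂ := map (starRingEnd ℂ)

@[simp] lemma coeff_conj (m : σ →₀ ℕ) (f : MvPolynomial σ ℂ) :
    coeff m (conj f) = starRingEnd ℂ (coeff m f) := coeff_map _ _ _

@[simp] lemma conj_X (j : σ) : conj (X j : MvPolynomial σ ℂ) = X j := by simp [conj]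

lemma conj_smul (c : ℂ) (f : MvPolynomial σ ℂ) : conj (c • f) = starRingEnd ℂ c • conj f := by
  ext m; simp

lemma pderiv_conj (j : σ) (f : MvPolynomial σ ℂ) : pderiv j (conj f) = conj (pderiv j f) :=
  pderiv_map

end Conj

section Fischer

variable {σ : Type*} [Fintype σ]

/-- The multi-index factorial `m! = ∏ j, (m j)!`. -/
def multiFactorial (m : σ →₀ ℕ) : ℂ := ∏ j, ((m j).factorial : ℂ)

lemma multiFactorial_ne_zero (m : σ →₀ ℕ) : multiFactorial m ≠ 0 :=
  Finset.prod_ne_zero_iff.2 fun _ _ => Nat.cast_ne_zero.2 (Nat.factorial_ne_zero _)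

lemma multiFactorial_add_single (m : σ →₀ ℕ) (j : σ) :
    multiFactorial (m + Finsupp.single j 1) = ((m j : ℂ) + 1) * multiFactorial m := by
  classical
  unfold multiFactorial
  rw [← Finset.mul_prod_erase _ _ (Finset.mem_univ j),
    ← Finset.mul_prod_erase (a := j) _ (fun j => ((m j).factorial : ℂ)) (Finset.mem_univ j),
    ← mul_assoc]
  congr 1
  · simp [Nat.factorial_succ]
  · refine Finset.prod_congr rfl fun i hi => ?_
    simp [(Finset.ne_of_mem_erase hi).symm]

/-- The bilinear Fischer form on polynomials: distinct monomials are orthogonal, and the square of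
`X ^ m` is `m!`. -/
def fischer : MvPolynomial σ ℂ →ₗ[ℂ] MvPolynomial σ ℂ →ₗ[ℂ] ℂ :=
  (basisMonomials σ ℂ).constr ℂ fun m => multiFactorial m • lcoeff ℂ m

lemma fischer_monomial (m : σ →₀ ℕ) (c : ℂ) (g : MvPolynomial σ ℂ) :
    fischer (monomial m c) g = c * (multiFactorial m * coeff m g) := by
  have h : monomial m c = c • basisMonomials σ ℂ m := by simp [smul_monomial]
  rw [h, map_smul, fischer, Module.Basis.constr_basis]
  simp

lemma fischer_apply (f g : MvPolynomial σ ℂ) :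
    fischer f g = ∑ m ∈ f.support, coeff m f * (multiFactorial m * coeff m g) := by
  conv_lhs => rw [f.as_sum, map_sum, LinearMap.sum_apply]
  simp only [fischer_monomial]

lemma fischer_comm (f g : MvPolynomial σ ℂ) : fischer f g = fischer g f := by
  induction f using MvPolynomial.induction_on' with
  | add p q hp hq => simp [hp, hq]
  | monomial m c =>
    induction g using MvPolynomial.induction_on' with
    | add p q hp hq => simp [hp, hq]
    | monomial l b =>
      classical
      rw [fischer_monomial, fischer_monomial, coeff_monomial, coeff_monomial]
      by_cases h : l = m
      · subst h; simp; ring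
      · simp [h, Ne.symm h]

lemma fischer_X_mul (j : σ) (f g : MvPolynomial σ ℂ) :
    fischer (X j * f) g = fischer f (pderiv j g) := by
  induction f using MvPolynomial.induction_on' with
  | add p q hp hq => simp [mul_add, hp, hq]
  | monomial m c =>
    rw [mul_comm, X, monomial_mul, fischer_monomial, fischer_monomial, coeff_pderiv,
      multiFactorial_add_single]
    ring

lemma fischer_pderiv (j : σ) (f g : MvPolynomial σ ℂ) :
    fischer (pderiv j f) g = fischer f (X j * g) := by
  rw [fischer_comm, ← fischer_X_mul, fischer_comm]

lemma fischer_one (g : MvPolynomial σ ℂ) : fischer 1 g = constantCoeff g := by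
  have h : (1 : MvPolynomial σ ℂ) = monomial 0 1 := rfl
  rw [h, fischer_monomial]
  simp [multiFactorial, constantCoeff_eq]

/-- The squared Fischer norm. -/
def normSqF (f : MvPolynomial σ ℂ) : ℝ :=
  ∑ m ∈ f.support, Complex.normSq (coeff m f) * ∏ j, ((m j).factorial : ℝ)

lemma fischer_conj_self (f : MvPolynomial σ ℂ) : fischer (conj f) f = (normSqF f : ℂ) := by
  rw [fischer_comm, fischer_apply, normSqF]
  push_cast
  refine Finset.sum_congr rfl fun m _ => ?_
  rw [coeff_conj, Complex.normSq_eq_conj_mul_self, multiFactorial]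
  ring

lemma normSqF_nonneg (f : MvPolynomial σ ℂ) : 0 ≤ normSqF f :=
  Finset.sum_nonneg fun _ _ => mul_nonneg (Complex.normSq_nonneg _) (by positivity)

lemma normSqF_pos {f : MvPolynomial σ ℂ} (hf : f ≠ 0) : 0 < normSqF f := by
  refine Finset.sum_pos (fun m hm => mul_pos ?_ (by positivity)) ?_
  · exact Complex.normSq_pos.2 (mem_support_iff.1 hm)
  · simpa [Finset.nonempty_iff_ne_empty] using hf

lemma eq_zero_of_fischer_conj_self {f : MvPolynomial σ ℂ} (h : fischer (conj f) f = 0) :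
    f = 0 := by
  by_contra hf
  rw [fischer_conj_self] at h
  exact (normSqF_pos hf).ne' (by exact_mod_cast h)

/-- The linear substitution `X j ↦ ∑ i, G i j • X i`. -/
def linSubst (G : Matrix σ σ ℂ) : MvPolynomial σ ℂ →ₐ[ℂ] MvPolynomial σ ℂ :=
  aeval fun j => ∑ i, G i j • X i

@[simp] lemma linSubst_X (G : Matrix σ σ ℂ) (j : σ) : linSubst G (X j) = ∑ i, G i j • X i :=
  aeval_X _ _

lemma pderiv_linSubst_transpose (G : Matrix σ σ ℂ) (j : σ) (p : MvPolynomial σ ℂ) :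
    pderiv j (linSubst G.transpose p) = ∑ i, G i j • linSubst G.transpose (pderiv i p) := by
  classical
  induction p using MvPolynomial.induction_on with
  | C a => simp [linSubst]
  | add p q hp hq => simp [hp, hq, Finset.sum_add_distrib]
  | mul_X p k hp =>
    simp only [map_mul, linSubst_X, Derivation.leibniz, hp, map_add, map_sum, smul_eq_mul,
      smul_add, Finset.sum_add_distrib, pderiv_X]
    congr 1
    · simp [Pi.single_apply, Matrix.transpose_apply]
    · rw [Finset.mul_sum]
      refine Finset.sum_congr rfl fun i _ => ?_
      rw [mul_smul_comm]

/-- Transposed linear substitutions are adjoint for the Fischer form. -/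
lemma fischer_linSubst (G : Matrix σ σ ℂ) (f p : MvPolynomial σ ℂ) :
    fischer (linSubst G f) p = fischer f (linSubst G.transpose p) := by
  induction f using MvPolynomial.induction_on generalizing p with
  | C a =>
    have h : (C a : MvPolynomial σ ℂ) = a • 1 := by simp [smul_eq_C_mul]
    rw [h, map_smul, map_one, map_smul, LinearMap.smul_apply, LinearMap.smul_apply,
      fischer_one, fischer_one]
    congr 1
    induction p using MvPolynomial.induction_on with
    | C a => simp [linSubst]
    | add p q hp hq => simp [hp, hq]
    | mul_X p k hp => simp
  | add p q hp hq => simp [hp, hq]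
  | mul_X f j hf =>
    rw [mul_comm f, fischer_X_mul, pderiv_linSubst_transpose, map_mul, linSubst_X,
      Finset.sum_mul]
    simp only [map_sum, map_smul, smul_mul_assoc, LinearMap.sum_apply, LinearMap.smul_apply,
      fischer_X_mul, hf]

end Fischer

section Shift

variable {σ : Type*}

/-- The polarization operator `X a ∂_b`. -/
def shift (a b : σ) : MvPolynomial σ ℂ →ₗ[ℂ] MvPolynomial σ ℂ :=
  LinearMap.mulLeft ℂ (X a) ∘ₗ (pderiv b).toLinearMap

lemma shift_apply (a b : σ) (f : MvPolynomial σ ℂ) : shift a b f = X a * pderiv b f := rfl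

lemma shift_monomial (a b : σ) (m : σ →₀ ℕ) (c : ℂ) :
    shift a b (monomial m c) =
      monomial (m - Finsupp.single b 1 + Finsupp.single a 1) (c * m b) := by
  rw [shift_apply, pderiv_monomial, mul_comm, X, monomial_mul, mul_one]

lemma shift_self_monomial (a : σ) (m : σ →₀ ℕ) (c : ℂ) :
    shift a a (monomial m c) = (m a : ℂ) • monomial m c := by
  rw [shift_apply, X_mul_pderiv_monomial, Nat.cast_smul_eq_nsmul]

lemma pderiv_pderiv_comm (a b : σ) (f : MvPolynomial σ ℂ) :
    pderiv a (pderiv b f) = pderiv b (pderiv a f) := by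
  classical
  have h : ⁅pderiv (R := ℂ) a, pderiv (R := ℂ) b⁆ = 0 := by
    refine derivation_ext fun i => ?_
    rw [Derivation.commutator_apply, pderiv_X, pderiv_X, Pi.single_apply, Pi.single_apply]
    split_ifs <;> simp
  have := congrArg (fun D => D f) h
  rw [Derivation.commutator_apply] at this
  exact sub_eq_zero.1 this

lemma shift_shift [DecidableEq σ] (a b c d : σ) (f : MvPolynomial σ ℂ) :
    shift a b (shift c d f) = shift c d (shift a b f) + (if c = b then shift a d f else 0)
      - (if a = d then shift c b f else 0) := by
  simp only [shift_apply, Derivation.leibniz, smul_eq_mul, pderiv_X, Pi.single_apply,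
    pderiv_pderiv_comm b d]
  split_ifs <;> ring

lemma shift_conj (a b : σ) (f : MvPolynomial σ ℂ) : shift a b (conj f) = conj (shift a b f) := by
  rw [shift_apply, shift_apply, pderiv_conj, map_mul, conj_X]

lemma fischer_shift [Fintype σ] (a b : σ) (f g : MvPolynomial σ ℂ) :
    fischer (shift a b f) g = fischer f (shift b a g) := by
  rw [shift_apply, shift_apply, fischer_X_mul, fischer_pderiv]

/-- The part of a polynomial supported on the monomials satisfying `Q`. -/
def part (Q : (σ →₀ ℕ) → Prop) : MvPolynomial σ ℂ →ₗ[ℂ] MvPolynomial σ ℂ :=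
  open Classical in
  (basisMonomials σ ℂ).constr ℂ fun m => if Q m then monomial m 1 else 0

open Classical in
lemma part_monomial (Q : (σ →₀ ℕ) → Prop) (m : σ →₀ ℕ) (c : ℂ) :
    part Q (monomial m c) = if Q m then monomial m c else 0 := by
  have h : monomial m c = c • basisMonomials σ ℂ m := by simp [smul_monomial]
  rw [h, map_smul, part, Module.Basis.constr_basis]
  split_ifs <;> simp

open Classical in
lemma coeff_part (Q : (σ →₀ ℕ) → Prop) (m : σ →₀ ℕ) (f : MvPolynomial σ ℂ) :
    coeff m (part Q f) = if Q m then coeff m f else 0 := by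
  induction f using MvPolynomial.induction_on' with
  | add p q hp hq => rw [map_add, coeff_add, hp, hq, coeff_add]; split_ifs <;> simp
  | monomial l c =>
    rw [part_monomial]
    by_cases h : l = m
    · subst h; split_ifs <;> simp
    · split_ifs <;> simp [h]

lemma part_shift {Q Q' : (σ →₀ ℕ) → Prop} {a b : σ}
    (h : ∀ m, m b ≠ 0 → (Q' (m - Finsupp.single b 1 + Finsupp.single a 1) ↔ Q m))
    (f : MvPolynomial σ ℂ) : part Q' (shift a b f) = shift a b (part Q f) := by
  classical
  induction f using MvPolynomial.induction_on' with
  | add p q hp hq => simp [hp, hq]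
  | monomial m c =>
    by_cases hm : m b = 0
    · rw [part_monomial, shift_monomial]
      split_ifs <;> simp [hm, shift_monomial]
    · rw [part_monomial, shift_monomial, part_monomial]
      simp only [h m hm]
      split_ifs <;> simp [shift_monomial]

lemma part_shift_eq_zero {Q : (σ →₀ ℕ) → Prop} {a b : σ} {f : MvPolynomial σ ℂ}
    (h : ∀ m ∈ f.support, m b ≠ 0 → ¬ Q (m - Finsupp.single b 1 + Finsupp.single a 1)) :
    part Q (shift a b f) = 0 := by
  classical
  rw [f.as_sum, map_sum, map_sum]
  refine Finset.sum_eq_zero fun m hm => ?_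
  rw [shift_monomial, part_monomial]
  by_cases hb : m b = 0
  · simp [hb]
  · rw [if_neg (h m hm hb)]

end Shift

section Sl2

variable {V : Type*} [AddCommGroup V] [Module ℂ V] {E F H : Module.End ℂ V} {N : ℂ} {z : V}

lemma weight_pow (hHE : ∀ x, H (E x) = E (H x) - (2 : ℂ) • E x) (hz : H z = N • z) (t : ℕ) :
    H ((E ^ t) z) = (N - 2 * t) • (E ^ t) z := by
  induction t with
  | zero => simp [hz]
  | succ t ih =>
    rw [pow_succ', Module.End.mul_apply, hHE, ih, map_smul, ← sub_smul]
    push_cast; congr 1; ring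

lemma lower_pow_raise (hFE : ∀ x, F (E x) = E (F x) + H x)
    (hHE : ∀ x, H (E x) = E (H x) - (2 : ℂ) • E x)
    (hz : H z = N • z) (hF : F z = 0) (t : ℕ) :
    F ((E ^ (t + 1)) z) = ((t + 1) * (N - t)) • (E ^ t) z := by
  induction t with
  | zero => simp [hFE, hF, hz]
  | succ t ih =>
    rw [pow_succ', Module.End.mul_apply, hFE, ih, weight_pow hHE hz, map_smul,
      ← Module.End.mul_apply, ← pow_succ', ← add_smul]
    push_cast; congr 1; ring

end Sl2

/-- Indices for the coordinates of `n` vectors of `ℂ²`, ordered vector by vector. -/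
abbrev Vars (n : ℕ) : Type := Fin n ×ₗ Fin 2

/-- The index of the first coordinate of the `i`-th vector. -/
abbrev av {n : ℕ} (i : Fin n) : Vars n := toLex (i, 0)

/-- The index of the second coordinate of the `i`-th vector. -/
abbrev bv {n : ℕ} (i : Fin n) : Vars n := toLex (i, 1)

variable {n : ℕ}

lemma forall_vars {P : Vars n → Prop} : (∀ j, P j) ↔ ∀ i, P (av i) ∧ P (bv i) := by
  refine ⟨fun h i => ⟨h _, h _⟩, fun h j => ?_⟩
  obtain ⟨⟨i, s⟩, rfl⟩ := toLex.surjective j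
  fin_cases s
  · exact (h i).1
  · exact (h i).2

/-- The raising operator of the diagonal `sl₂`-action on the vectors in `S`. -/
def raise (S : Finset (Fin n)) : Module.End ℂ (MvPolynomial (Vars n) ℂ) :=
  ∑ s ∈ S, shift (av s) (bv s)

/-- The lowering operator of the diagonal `sl₂`-action on the vectors in `S`. -/
def lower (S : Finset (Fin n)) : Module.End ℂ (MvPolynomial (Vars n) ℂ) :=
  ∑ s ∈ S, shift (bv s) (av s)

/-- The weight operator of the diagonal `sl₂`-action on the vectors in `S`. -/
def weightOp (S : Finset (Fin n)) : Module.End ℂ (MvPolynomial (Vars n) ℂ) :=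
  ∑ s ∈ S, (shift (bv s) (bv s) - shift (av s) (av s))

lemma lower_raise (S : Finset (Fin n)) (f : MvPolynomial (Vars n) ℂ) :
    lower S (raise S f) = raise S (lower S f) + weightOp S f := by
  simp only [lower, raise, weightOp, LinearMap.sum_apply, map_sum, LinearMap.sub_apply]
  rw [Finset.sum_comm,
    ← Finset.sum_add_distrib]
  refine Finset.sum_congr rfl fun s hs => ?_
  simp only [shift_shift (bv s) (av s), Finset.sum_add_distrib, Finset.sum_sub_distrib]
  simp [hs, Prod.ext_iff, add_sub_assoc]

lemma weightOp_raise (S : Finset (Fin n)) (f : MvPolynomial (Vars n) ℂ) :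
    weightOp S (raise S f) = raise S (weightOp S f) - (2 : ℂ) • raise S f := by
  simp only [raise, weightOp, LinearMap.sum_apply, map_sum, LinearMap.sub_apply, map_sub,
    Finset.smul_sum]
  rw [Finset.sum_comm,
    ← Finset.sum_sub_distrib]
  refine Finset.sum_congr rfl fun s hs => ?_
  simp only [shift_shift (bv s) (bv s), shift_shift (av s) (av s), Finset.sum_add_distrib,
    Finset.sum_sub_distrib]
  simp [hs, Prod.ext_iff, two_smul]
  abel

lemma fischer_raise (S : Finset (Fin n)) (f g : MvPolynomial (Vars n) ℂ) :
    fischer (raise S f) g = fischer f (lower S g) := by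
  simp [raise, lower, fischer_shift]

lemma fischer_lower (S : Finset (Fin n)) (f g : MvPolynomial (Vars n) ℂ) :
    fischer (lower S f) g = fischer f (raise S g) := by
  simp [raise, lower, fischer_shift]

lemma raise_conj (S : Finset (Fin n)) (f : MvPolynomial (Vars n) ℂ) :
    raise S (conj f) = conj (raise S f) := by
  simp [raise, shift_conj]

lemma lower_conj (S : Finset (Fin n)) (f : MvPolynomial (Vars n) ℂ) :
    lower S (conj f) = conj (lower S f) := by
  simp [lower, shift_conj]

lemma fischer_conj_lower_pow (S : Finset (Fin n)) (p : ℕ) (f g : MvPolynomial (Vars n) ℂ) :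
    fischer (conj ((lower S ^ p) f)) g = fischer (conj f) ((raise S ^ p) g) := by
  induction p generalizing g with
  | zero => simp
  | succ p ih =>
    rw [pow_succ', pow_succ, Module.End.mul_apply, Module.End.mul_apply, ← lower_conj,
      fischer_lower, ih]

/-- The weight of a monomial with respect to the vectors in `S`. -/
def wt (S : Finset (Fin n)) (m : Vars n →₀ ℕ) : ℤ := ∑ s ∈ S, ((m (bv s) : ℤ) - m (av s))

lemma weightOp_eq_smul {S : Finset (Fin n)} {N : ℤ} {f : MvPolynomial (Vars n) ℂ}
    (h : ∀ m ∈ f.support, wt S m = N) : weightOp S f = (N : ℂ) • f := by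
  rw [f.as_sum, map_sum, Finset.smul_sum]
  refine Finset.sum_congr rfl fun m hm => ?_
  rw [← h m hm, weightOp, wt]
  simp only [LinearMap.sum_apply, LinearMap.sub_apply, shift_self_monomial, ← sub_smul,
    ← Finset.sum_smul]
  push_cast
  rfl

lemma raise_pow_eq_zero {S : Finset (Fin n)} {N : ℤ} {z : MvPolynomial (Vars n) ℂ}
    (hwt : ∀ m ∈ z.support, wt S m = N) (hz : lower S z = 0) {p : ℕ} (hp : N < p) :
    (raise S ^ p) z = 0 := by
  have key (t : ℕ) : (normSqF ((raise S ^ (t + 1)) z) : ℝ) =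
      (t + 1) * (N - t) * normSqF ((raise S ^ t) z) := by
    have h := fischer_conj_self ((raise S ^ (t + 1)) z)
    rw [pow_succ', Module.End.mul_apply, ← raise_conj, fischer_raise,
      ← Module.End.mul_apply (raise S), ← pow_succ', lower_pow_raise (lower_raise S)
      (weightOp_raise S) (weightOp_eq_smul hwt) hz, map_smul, fischer_conj_self, smul_eq_mul] at h
    exact_mod_cast h.symm
  by_cases hz0 : z = 0
  · simp [hz0]
  have hN : 0 ≤ N := by
    have h0 := key 0
    have h1 := normSqF_nonneg ((raise S ^ (0 + 1)) z)
    rw [h0] at h1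
    have h2 := normSqF_pos hz0
    simp at h1
    by_contra hneg
    have : (N : ℝ) < 0 := by exact_mod_cast not_le.1 hneg
    nlinarith
  obtain ⟨N, rfl⟩ := Int.eq_ofNat_of_zero_le hN
  have h1 : (raise S ^ (N + 1)) z = 0 := by
    by_contra hne
    have h := normSqF_pos hne
    rw [key N] at h
    simp at h
  obtain ⟨r, rfl⟩ : ∃ r, p = r + (N + 1) := ⟨p - (N + 1), by omega⟩
  rw [pow_add, Module.End.mul_apply, h1, map_zero]

lemma eq_zero_of_shift_eq_zero {σ : Type*} {a b : σ} {t : ℕ} {f : MvPolynomial σ ℂ}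
    (h : ∀ m ∈ f.support, m b = t + 1) (h0 : shift a b f = 0) : f = 0 := by
  rw [shift_apply] at h0
  have h1 : pderiv b f = 0 := by simpa using h0
  have h2 : shift b b f = ((t : ℂ) + 1) • f := by
    rw [f.as_sum, map_sum, Finset.smul_sum]
    refine Finset.sum_congr rfl fun m hm => ?_
    rw [shift_self_monomial, h m hm]
    push_cast; rfl
  rw [shift_apply, h1, mul_zero] at h2
  exact (smul_eq_zero.1 h2.symm).resolve_left (by exact_mod_cast Nat.succ_ne_zero t)

/-- `MultiHom d f`: the polynomial `f` is homogeneous of degree `d i` in the `i`-th vector. -/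
def MultiHom (d : Fin n → ℕ) (f : MvPolynomial (Vars n) ℂ) : Prop :=
  ∀ m ∈ f.support, ∀ i, m (av i) + m (bv i) = d i

lemma lower_univ_apply (i : Fin n) (f : MvPolynomial (Vars n) ℂ) :
    lower Finset.univ f = ∑ s ∈ Finset.Iio i, shift (bv s) (av s) f + shift (bv i) (av i) f +
      lower (Finset.Ioi i) f := by
  have h : (Finset.univ : Finset (Fin n)) = (Finset.Iio i).disjUnion (insert i (Finset.Ioi i))
      (by simp [Finset.disjoint_left]) := by
    ext a; rcases lt_trichotomy a i with h | h | h <;> simp [h, h.le]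
  rw [lower, lower, h, Finset.sum_disjUnion, Finset.sum_insert (by simp)]
  simp [add_assoc]

lemma wt_univ (i : Fin n) (m : Vars n →₀ ℕ) :
    wt Finset.univ m = wt (Finset.Iic i) m + wt (Finset.Ioi i) m := by
  have h : (Finset.univ : Finset (Fin n)) = (Finset.Iic i).disjUnion (Finset.Ioi i)
      (by simp [Finset.disjoint_left]) := by
    ext a; simp [le_or_gt]
  rw [wt, h, Finset.sum_disjUnion]; rfl

lemma toLex_lt_of_av {m m' : Vars n →₀ ℕ} {i : Fin n}
    (h : ∀ s < i, m (av s) = m' (av s) ∧ m (bv s) = m' (bv s)) (hi : m (av i) < m' (av i)) :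
    toLex m < toLex m' := by
  refine Finsupp.Lex.lt_iff.2 ⟨av i, fun j hj => ?_, hi⟩
  obtain ⟨⟨s, t⟩, rfl⟩ := toLex.surjective j
  have hs : s < i := by
    rcases Prod.Lex.toLex_lt_toLex.1 hj with h | h
    · exact h
    · exact absurd h.2 (by simp)
  fin_cases t
  · exact (h s hs).1
  · exact (h s hs).2

/-- The lexicographically leading monomial of an `sl₂`-invariant satisfies the ballot condition. -/
theorem ballot_of_lead {d : Fin n → ℕ} {v : MvPolynomial (Vars n) ℂ} (hd : MultiHom d v)
    (hwt : ∀ m ∈ v.support, wt Finset.univ m = 0) (hF : lower Finset.univ v = 0)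
    {m₀ : Vars n →₀ ℕ} (hm₀ : m₀ ∈ v.support) (hmax : ∀ m ∈ v.support, toLex m ≤ toLex m₀)
    (i : Fin n) : (m₀ (av i) : ℤ) ≤ ∑ s ∈ Finset.Iic i, ((m₀ (av s) : ℤ) - m₀ (bv s)) := by
  classical
  let Q (t : ℕ) (m : Vars n →₀ ℕ) : Prop :=
    (∀ s < i, m (av s) = m₀ (av s) ∧ m (bv s) = m₀ (bv s)) ∧ m (av i) = t
  have mem_part {t m} : m ∈ (part (Q t) v).support ↔ Q t m ∧ m ∈ v.support := by
    rw [mem_support_iff, coeff_part, mem_support_iff]; split_ifs <;> simp_all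
  have hpart (t : ℕ) : lower (Finset.Ioi i) (part (Q t) v) =
      - shift (bv i) (av i) (part (Q (t + 1)) v) := by
    have h := congrArg (part (Q t)) hF
    rw [lower_univ_apply i, map_add, map_add, map_sum, map_zero] at h
    rw [Finset.sum_eq_zero, zero_add, add_comm, lower, LinearMap.sum_apply, map_sum,
      part_shift (Q := Q (t + 1))] at h
    · rw [← eq_neg_iff_add_eq_zero] at h
      rw [← h, lower, LinearMap.sum_apply]
      refine Finset.sum_congr rfl fun s hs => (part_shift (fun m _ => ?_) v).symm
      have hs : i < s := by simpa using hs
      refine and_congr (forall₂_congr fun r hr => ?_) ?_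
      · have := (hr.trans hs).ne'
        simp [this]
      · simp [hs.ne']
    · intro m hm
      refine and_congr (forall₂_congr fun r hr => ?_) ?_
      · simp [hr.ne']
      · simp; omega
    · intro s hs
      have hs : s < i := by simpa using hs
      refine part_shift_eq_zero fun m hm hms hQ => ?_
      refine (hmax m hm).not_gt (toLex_lt_of_av (i := s) (fun r hr => ?_) ?_)
      · have := hQ.1 r (hr.trans hs)
        simp [hr.ne'] at this
        exact ⟨this.1.symm, this.2.symm⟩
      · have := (hQ.1 s hs).1
        simp at this
        omega
  set p := m₀ (av i) with hp
  have hpQ : m₀ ∈ (part (Q p) v).support := mem_part.2 ⟨⟨fun _ _ => ⟨rfl, rfl⟩, rfl⟩, hm₀⟩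
  have htop : part (Q (p + 1)) v = 0 := by
    by_contra hne
    obtain ⟨m, hm⟩ := Finset.nonempty_iff_ne_empty.2 (fun h => hne (support_eq_empty.1 h))
    obtain ⟨hQ, hm⟩ := mem_part.1 hm
    refine (hmax m hm).not_gt (toLex_lt_of_av (i := i) (fun s hs => ?_) ?_)
    · exact ⟨(hQ.1 s hs).1.symm, (hQ.1 s hs).2.symm⟩
    · rw [hQ.2]; omega
  have hlow : lower (Finset.Ioi i) (part (Q p) v) = 0 := by rw [hpart, htop, map_zero, neg_zero]
  set N : ℤ := ∑ s ∈ Finset.Iic i, ((m₀ (av s) : ℤ) - m₀ (bv s)) with hN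
  have hwtN : ∀ m ∈ (part (Q p) v).support, wt (Finset.Ioi i) m = N := by
    intro m hm
    obtain ⟨hQ, hmv⟩ := mem_part.1 hm
    have h1 := hwt m hmv
    rw [wt_univ i] at h1
    have h2 : wt (Finset.Iic i) m = - N := by
      rw [wt, hN, ← Finset.sum_neg_distrib]
      refine Finset.sum_congr rfl fun s hs => ?_
      rcases (Finset.mem_Iic.1 hs).lt_or_eq with hs | hs
      · rw [(hQ.1 s hs).1, (hQ.1 s hs).2]; ring
      · have h3 := hd m hmv i
        have h4 := hd m₀ hm₀ i
        have h5 := hQ.2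
        rw [hs]
        omega
    omega
  by_contra hlt
  have hE := raise_pow_eq_zero hwtN hlow (not_le.1 hlt)
  set Fi : Module.End ℂ (MvPolynomial (Vars n) ℂ) := shift (bv i) (av i) with hFi
  have hcommL : Commute (lower (Finset.Ioi i)) Fi := by
    refine LinearMap.ext fun f => ?_
    simp only [Module.End.mul_apply, lower, LinearMap.sum_apply, map_sum, hFi]
    refine Finset.sum_congr rfl fun s hs => ?_
    rw [shift_shift]; simp
  have hcommR : Commute (raise (Finset.Ioi i)) Fi := by
    refine LinearMap.ext fun f => ?_
    simp only [Module.End.mul_apply, raise, LinearMap.sum_apply, map_sum, hFi]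
    refine Finset.sum_congr rfl fun s hs => ?_
    have hs : i < s := by simpa using hs
    rw [shift_shift]; simp [hs.ne, hs.ne']
  have hiter (t : ℕ) (ht : t ≤ p) : (lower (Finset.Ioi i) ^ t) (part (Q (p - t)) v) =
      (-1 : ℂ) ^ t • (Fi ^ t) (part (Q p) v) := by
    induction t with
    | zero => simp
    | succ t ih =>
      have h1 : p - (t + 1) + 1 = p - t := by omega
      rw [pow_succ, Module.End.mul_apply, hpart, h1, map_neg,
        show (lower (Finset.Ioi i) ^ t) (Fi (part (Q (p - t)) v)) = Fi _ from
          LinearMap.congr_fun (hcommL.pow_left t).eq _, ih (by omega), map_smul,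
        ← Module.End.mul_apply, ← pow_succ', pow_succ, ← neg_one_smul ℂ, smul_smul]
      congr 1; ring
  have hzero : (Fi ^ p) (part (Q p) v) = 0 := by
    apply eq_zero_of_fischer_conj_self
    have h1 := fischer_conj_lower_pow (Finset.Ioi i) p (part (Q (p - p)) v)
      ((Fi ^ p) (part (Q p) v))
    rw [hiter p le_rfl, show (raise (Finset.Ioi i) ^ p) ((Fi ^ p) (part (Q p) v)) = (Fi ^ p) _ from
      LinearMap.congr_fun (hcommR.pow_pow p p).eq _, hE, map_zero, map_zero, conj_smul, map_smul,
      LinearMap.smul_apply] at h1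
    exact (smul_eq_zero.1 h1).resolve_left (by simp)
  have hne (t : ℕ) (ht : t ≤ p) : (Fi ^ t) (part (Q p) v) ≠ 0 ∧
      ∀ m ∈ ((Fi ^ t) (part (Q p) v)).support, m (av i) + t = p := by
    induction t with
    | zero =>
      refine ⟨fun h => ?_, fun m hm => ?_⟩
      · rw [pow_zero, Module.End.one_apply] at h
        rw [h] at hpQ
        simp at hpQ
      · exact (mem_part.1 hm).1.2
    | succ t ih =>
      obtain ⟨h1, h2⟩ := ih (by omega)
      rw [pow_succ', Module.End.mul_apply]
      refine ⟨fun h => h1 (eq_zero_of_shift_eq_zero (t := p - (t + 1)) (fun m hm => ?_) h), ?_⟩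
      · have := h2 m hm; omega
      · intro m hm
        rw [hFi, ((Fi ^ t) (part (Q p) v)).as_sum, map_sum] at hm
        obtain ⟨l, hl, hm⟩ := Finset.mem_biUnion.1 (support_sum hm)
        rw [shift_monomial] at hm
        have := h2 l hl
        have hml := Finset.mem_singleton.1 (support_monomial_subset hm)
        subst hml
        simp
        omega
  exact (hne p le_rfl).1 hzero

/-- The block diagonal matrix acting by `g` on each of `n` vectors. -/
def blockMatrix (g : Matrix (Fin 2) (Fin 2) ℂ) : Matrix (Vars n) (Vars n) ℂ := fun x y =>
  if (ofLex x).1 = (ofLex y).1 then g (ofLex x).2 (ofLex y).2 else 0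

/-- The diagonal action of a `2 × 2` matrix on polynomials in `n` vectors. -/
def act (g : Matrix (Fin 2) (Fin 2) ℂ) :
    MvPolynomial (Vars n) ℂ →ₐ[ℂ] MvPolynomial (Vars n) ℂ := linSubst (blockMatrix g)

lemma sum_vars {M : Type*} [AddCommMonoid M] (f : Vars n → M) :
    ∑ x, f x = ∑ i, ∑ s, f (toLex (i, s)) := by
  rw [← Fintype.sum_prod_type', ← Equiv.sum_comp toLex]

lemma act_X (g : Matrix (Fin 2) (Fin 2) ℂ) (i : Fin n) (s : Fin 2) :
    act g (X (toLex (i, s))) = ∑ t, g t s • X (toLex (i, t)) := by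
  rw [act, linSubst_X, sum_vars, Finset.sum_eq_single i]
  · simp [blockMatrix]
  · intro j _ hj
    simp [blockMatrix, hj]
  · simp

lemma blockMatrix_transpose (g : Matrix (Fin 2) (Fin 2) ℂ) :
    (blockMatrix g : Matrix (Vars n) (Vars n) ℂ).transpose = blockMatrix g.transpose := by
  ext x y
  simp [blockMatrix, Matrix.transpose_apply, eq_comm]

lemma fischer_act (g : Matrix (Fin 2) (Fin 2) ℂ) (f p : MvPolynomial (Vars n) ℂ) :
    fischer (act g f) p = fischer f (act g.transpose p) := by
  rw [act, act, fischer_linSubst, blockMatrix_transpose]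

lemma act_conj (g : Matrix (Fin 2) (Fin 2) ℂ) (f : MvPolynomial (Vars n) ℂ) :
    act g (conj f) = conj (act (g.map (starRingEnd ℂ)) f) := by
  induction f using MvPolynomial.induction_on with
  | C a => simp [conj, act, linSubst]
  | add p q hp hq => simp [hp, hq]
  | mul_X p k hp =>
    obtain ⟨⟨i, s⟩, rfl⟩ := toLex.surjective k
    simp [hp, act_X, conj_smul]

/-- Invariance under the diagonal action of `SU(2)`. -/
def IsInv (f : MvPolynomial (Vars n) ℂ) : Prop := ∀ g : SU2, act (g : Matrix _ _ ℂ) f = f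

lemma IsInv.mul {f g : MvPolynomial (Vars n) ℂ} (hf : IsInv f) (hg : IsInv g) : IsInv (f * g) :=
  fun u => by rw [map_mul, hf u, hg u]

lemma IsInv.sub {f g : MvPolynomial (Vars n) ℂ} (hf : IsInv f) (hg : IsInv g) : IsInv (f - g) :=
  fun u => by rw [map_sub, hf u, hg u]

lemma IsInv.smul {f : MvPolynomial (Vars n) ℂ} (hf : IsInv f) (c : ℂ) : IsInv (c • f) :=
  fun u => by rw [map_smul, hf u]

lemma transpose_mem_SU2 (g : SU2) :
    (g : Matrix (Fin 2) (Fin 2) ℂ).transpose ∈ Matrix.specialUnitaryGroup (Fin 2) ℂ := by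
  have h := Matrix.mem_specialUnitaryGroup_iff.1 g.2
  refine Matrix.mem_specialUnitaryGroup_iff.2 ⟨?_, by rw [Matrix.det_transpose, h.2]⟩
  have h1 := Matrix.mem_unitaryGroup_iff'.1 h.1
  rw [Matrix.mem_unitaryGroup_iff]
  have h2 : star (g : Matrix (Fin 2) (Fin 2) ℂ).transpose =
      (star (g : Matrix (Fin 2) (Fin 2) ℂ)).transpose := rfl
  rw [h2, ← Matrix.transpose_mul, h1, Matrix.transpose_one]

lemma conj_mem_SU2 (g : SU2) :
    (g : Matrix (Fin 2) (Fin 2) ℂ).map (starRingEnd ℂ) ∈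
      Matrix.specialUnitaryGroup (Fin 2) ℂ := by
  have h : (g : Matrix (Fin 2) (Fin 2) ℂ).map (starRingEnd ℂ) =
      ((star g : SU2) : Matrix (Fin 2) (Fin 2) ℂ).transpose := rfl
  rw [h]
  exact transpose_mem_SU2 (star g)

lemma IsInv.conj {f : MvPolynomial (Vars n) ℂ} (hf : IsInv f) : IsInv (conj f) :=
  fun g => by rw [act_conj, hf ⟨_, conj_mem_SU2 g⟩]

lemma mem_SU2_of {a b : ℂ} (h : a * starRingEnd ℂ a + b * starRingEnd ℂ b = 1) :
    !![a, -starRingEnd ℂ b; b, starRingEnd ℂ a] ∈ Matrix.specialUnitaryGroup (Fin 2) ℂ := by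
  refine Matrix.mem_specialUnitaryGroup_iff.2 ⟨?_, ?_⟩
  · rw [Matrix.mem_unitaryGroup_iff']
    ext i j
    fin_cases i <;> fin_cases j <;>
      simp [Matrix.mul_apply, Fin.sum_univ_two, Matrix.star_apply] <;>
      first | ring1 | linear_combination h
  · rw [Matrix.det_fin_two_of]; linear_combination h

lemma coeff_aeval_smul_X {σ : Type*} [Fintype σ] (c : σ → ℂ) (f : MvPolynomial σ ℂ) (m : σ →₀ ℕ) :
    coeff m (aeval (fun x => c x • (X x : MvPolynomial σ ℂ)) f) =
      (∏ x, c x ^ m x) * coeff m f := by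
  induction f using MvPolynomial.induction_on' with
  | add p q hp hq => rw [map_add, coeff_add, hp, hq, coeff_add, mul_add]
  | monomial l a =>
    have h : aeval (fun x => c x • (X x : MvPolynomial σ ℂ)) (monomial l a) =
        (∏ x, c x ^ l x) • monomial l a := by
      rw [aeval_monomial, monomial_eq, Finsupp.prod_fintype _ _ (by simp),
        Finsupp.prod_fintype _ _ (by simp)]
      simp only [smul_pow, algebraMap_eq]
      rw [Finset.prod_smul, mul_smul_comm]
    classical
    rw [h, coeff_smul, coeff_monomial]
    split_ifs with hlm
    · subst hlm; simp
    · simp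

lemma prod_vars {M : Type*} [CommMonoid M] (f : Vars n → M) :
    ∏ x, f x = ∏ i, ∏ s, f (toLex (i, s)) := by
  rw [← Fintype.prod_prod_type', ← Equiv.prod_comp toLex]

lemma coeff_act_diag (z w : ℂ) (f : MvPolynomial (Vars n) ℂ) (m : Vars n →₀ ℕ) :
    coeff m (act !![z, 0; 0, w] f) =
      z ^ (∑ i, m (av i)) * w ^ (∑ i, m (bv i)) * coeff m f := by
  have h : act !![z, 0; 0, w] =
      aeval (fun x : Vars n => (![z, w] (ofLex x).2) • (X x : MvPolynomial (Vars n) ℂ)) := by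
    refine MvPolynomial.algHom_ext fun x => ?_
    obtain ⟨⟨i, s⟩, rfl⟩ := toLex.surjective x
    rw [act_X]
    fin_cases s <;> simp
  rw [h, coeff_aeval_smul_X, prod_vars]
  simp [Fin.prod_univ_two, Finset.prod_mul_distrib, Finset.prod_pow_eq_pow_sum]

lemma IsInv.wt_eq_zero {f : MvPolynomial (Vars n) ℂ} (hf : IsInv f) :
    ∀ m ∈ f.support, wt Finset.univ m = 0 := by
  intro m hm
  by_contra hN
  set N := wt Finset.univ m with hNdef
  set z : ℂ := Complex.exp (Real.pi / N * Complex.I) with hz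
  have hNC : (N : ℂ) ≠ 0 := by exact_mod_cast hN
  have hzc : starRingEnd ℂ z = Complex.exp (-(Real.pi / N * Complex.I)) := by
    rw [hz, ← Complex.exp_conj]; simp
  have hz1 : z * starRingEnd ℂ z = 1 := by
    rw [hzc, hz, ← Complex.exp_add]; simp
  have h := congrArg (coeff m) (hf ⟨_, mem_SU2_of (a := z) (b := 0) (by simpa using hz1)⟩)
  simp only [map_zero, neg_zero] at h
  rw [coeff_act_diag] at h
  have h1 : z ^ (∑ i, m (av i)) * starRingEnd ℂ z ^ (∑ i, m (bv i)) = 1 := by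
    have := mem_support_iff.1 hm
    exact mul_right_cancel₀ this (by rw [h, one_mul])
  have h2 : (∑ i, m (av i) : ℕ) * (Real.pi / N * Complex.I) +
      (∑ i, m (bv i) : ℕ) * (-(Real.pi / N * Complex.I)) = -(Real.pi * Complex.I) := by
    have h3 : (N : ℂ) = (∑ i, m (bv i) : ℕ) - (∑ i, m (av i) : ℕ) := by
      rw [hNdef, wt]; push_cast; rw [Finset.sum_sub_distrib]
    have h4 : -(Real.pi * Complex.I) = -((N : ℂ) * (Real.pi / N * Complex.I)) := by
      field_simp
    rw [h4]
    linear_combination (Real.pi / N * Complex.I) * h3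
  rw [hzc, hz, ← Complex.exp_nat_mul, ← Complex.exp_nat_mul, ← Complex.exp_add, h2,
    Complex.exp_neg, Complex.exp_pi_mul_I] at h1
  norm_num at h1

lemma hasDerivAt_eval {σ : Type*} [Fintype σ] {w : σ → ℝ → ℂ} {w' : σ → ℂ} {t : ℝ}
    (hw : ∀ x, HasDerivAt (w x) (w' x) t) (f : MvPolynomial σ ℂ) :
    HasDerivAt (fun θ => eval (fun x => w x θ) f)
      (∑ x, w' x * eval (fun x => w x t) (pderiv x f)) t := by
  classical
  induction f using MvPolynomial.induction_on with
  | C a => simpa using hasDerivAt_const t a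
  | add p q hp hq =>
    simp only [map_add, mul_add, Finset.sum_add_distrib]
    exact hp.add hq
  | mul_X p k hp =>
    simp only [map_mul, eval_X]
    refine (hp.mul (hw k)).congr_deriv (Eq.symm ?_)
    simp only [Derivation.leibniz, pderiv_X, map_add, smul_eq_mul, map_mul, eval_X, mul_add,
      Finset.sum_add_distrib]
    rw [add_comm]
    congr 1
    · rw [Finset.sum_mul]; exact Finset.sum_congr rfl fun _ _ => by ring
    · rw [Finset.sum_eq_single k] <;> simp +contextual [mul_comm]

lemma weightOp_lower (S : Finset (Fin n)) (f : MvPolynomial (Vars n) ℂ) :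
    weightOp S (lower S f) = lower S (weightOp S f) + (2 : ℂ) • lower S f := by
  simp only [lower, weightOp, LinearMap.sum_apply, map_sum, LinearMap.sub_apply, map_sub,
    Finset.smul_sum]
  rw [Finset.sum_comm, ← Finset.sum_add_distrib]
  refine Finset.sum_congr rfl fun s hs => ?_
  simp only [shift_shift (bv s) (bv s), shift_shift (av s) (av s), Finset.sum_add_distrib,
    Finset.sum_sub_distrib]
  simp [hs, Prod.ext_iff, two_smul]
  abel

lemma IsInv.lower_eq_raise {f : MvPolynomial (Vars n) ℂ} (hf : IsInv f) :
    lower Finset.univ f = raise Finset.univ f := by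
  refine MvPolynomial.funext fun u => ?_
  let w (x : Vars n) (θ : ℝ) : ℂ :=
    ![Real.cos θ * u (av (ofLex x).1) + Real.sin θ * u (bv (ofLex x).1),
      -Real.sin θ * u (av (ofLex x).1) + Real.cos θ * u (bv (ofLex x).1)] (ofLex x).2
  let w' (x : Vars n) : ℂ := ![u (bv (ofLex x).1), - u (av (ofLex x).1)] (ofLex x).2
  have hc : HasDerivAt (fun θ : ℝ => (Real.cos θ : ℂ)) 0 0 := by
    simpa using (Real.hasDerivAt_cos 0).ofReal_comp
  have hs : HasDerivAt (fun θ : ℝ => (Real.sin θ : ℂ)) 1 0 := by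
    simpa using (Real.hasDerivAt_sin 0).ofReal_comp
  have hw (x : Vars n) : HasDerivAt (w x) (w' x) 0 := by
    obtain ⟨⟨i, s⟩, rfl⟩ := toLex.surjective x
    fin_cases s
    · exact ((hc.mul_const (u (av i))).add (hs.mul_const (u (bv i)))).congr_deriv (by simp [w'])
    · exact ((hs.neg.mul_const (u (av i))).add (hc.mul_const (u (bv i)))).congr_deriv (by simp [w'])
  have hw0 : (fun x => w x 0) = u := by
    funext x
    obtain ⟨⟨i, s⟩, rfl⟩ := toLex.surjective x
    fin_cases s <;> simp [w]
  have hconst (θ : ℝ) : eval (fun x => w x θ) f = eval u f := by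
    have h1 : (Real.cos θ : ℂ) * starRingEnd ℂ (Real.cos θ : ℂ) +
        (Real.sin θ : ℂ) * starRingEnd ℂ (Real.sin θ : ℂ) = 1 := by
      rw [Complex.conj_ofReal, Complex.conj_ofReal]
      have := Real.cos_sq_add_sin_sq θ
      exact_mod_cast (by linarith : Real.cos θ * Real.cos θ + Real.sin θ * Real.sin θ = 1)
    conv_rhs => rw [← hf ⟨_, mem_SU2_of h1⟩]
    suffices h : (aeval (fun x => w x θ) : MvPolynomial (Vars n) ℂ →ₐ[ℂ] ℂ) =
        (aeval u).comp (act !![(Real.cos θ : ℂ), -starRingEnd ℂ (Real.sin θ : ℂ);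
          (Real.sin θ : ℂ), starRingEnd ℂ (Real.cos θ : ℂ)]) from
      by simpa [aeval_eq_eval] using DFunLike.congr_fun h f
    refine MvPolynomial.algHom_ext fun x => ?_
    obtain ⟨⟨i, s⟩, rfl⟩ := toLex.surjective x
    rw [AlgHom.comp_apply, act_X]
    simp only [w, Complex.conj_ofReal]
    generalize (Real.cos θ : ℂ) = c, (Real.sin θ : ℂ) = s'
    fin_cases s <;> simp
  have h1 := hasDerivAt_eval hw f
  simp only [hconst, hw0] at h1
  have h2 := h1.unique (hasDerivAt_const (0 : ℝ) (eval u f))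
  rw [sum_vars] at h2
  simp only [Fin.sum_univ_two, w'] at h2
  simp [Finset.sum_add_distrib] at h2
  simp only [lower, raise, LinearMap.sum_apply, map_sum, shift_apply, map_mul, eval_X]
  linear_combination h2

lemma IsInv.lower_eq_zero {f : MvPolynomial (Vars n) ℂ} (hf : IsInv f) :
    lower Finset.univ f = 0 := by
  have h0 : weightOp Finset.univ f = 0 := by simpa using weightOp_eq_smul hf.wt_eq_zero
  have h1 := weightOp_lower Finset.univ f
  have h2 := weightOp_raise Finset.univ f
  rw [← hf.lower_eq_raise, h1, h0, map_zero, map_zero, zero_add, zero_sub,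
    eq_neg_iff_add_eq_zero, ← add_smul] at h2
  exact (smul_eq_zero.1 h2).resolve_left (by norm_num)

/-- The ballot condition on the exponents of a monomial in `n` vectors: a balanced monomial in
which every second coordinate can be matched with an earlier first coordinate. -/
def Ballot (m : Vars n →₀ ℕ) : Prop :=
  (∀ i, (m (av i) : ℤ) ≤ ∑ s ∈ Finset.Iic i, ((m (av s) : ℤ) - m (bv s))) ∧
    ∑ s, ((m (av s) : ℤ) - m (bv s)) = 0

lemma sum_Iic_telescope (g : ℕ → ℤ) (i : Fin n) :
    ∑ s ∈ Finset.Iic i, (g (s + 1) - g s) = g (i + 1) - g 0 := by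
  rw [← Finset.sum_range_sub g (i + 1), Nat.range_succ_eq_Iic, ← Fin.map_valEmbedding_Iic,
    Finset.sum_map]
  rfl

lemma sum_univ_telescope (g : ℕ → ℤ) : ∑ s : Fin n, (g (s + 1) - g s) = g n - g 0 := by
  rw [← Finset.sum_range_sub g n, Finset.sum_range]

/-- Rounding the multiples `c * L` of the intermediate spins preserves the triangle inequalities
for both parts of a proportional splitting. -/
lemma exists_round_triangle {c : ℝ} (hc0 : 0 < c) (hc1 : c < 1) {L L' k m r : ℤ}
    (hm : (m : ℝ) = c * k) (h1 : L - L' ≤ k) (h2 : L' - L ≤ k) (h3 : k ≤ L + L')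
    (hr : |(r : ℝ) - c * L| ≤ 1 / 2) :
    ∃ r' : ℤ, |(r' : ℝ) - c * L'| ≤ 1 / 2 ∧ (r - r' ≤ m ∧ r' - r ≤ m ∧ m ≤ r + r') ∧
      ((L - r) - (L' - r') ≤ k - m ∧ (L' - r') - (L - r) ≤ k - m ∧
        k - m ≤ (L - r) + (L' - r')) := by
  obtain ⟨hr1, hr2⟩ := abs_le.1 hr
  have h1R : (L : ℝ) - L' ≤ k := by exact_mod_cast h1
  have h2R : (L' : ℝ) - L ≤ k := by exact_mod_cast h2
  have h3R : (k : ℝ) ≤ L + L' := by exact_mod_cast h3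
  have hd : 0 < 1 - c := by linarith
  rcases h3.eq_or_lt with h4 | h4
  · have h4R : (k : ℝ) = L + L' := by exact_mod_cast h4
    have hL : 0 ≤ (L : ℝ) := by linarith
    have hL' : 0 ≤ (L' : ℝ) := by linarith
    have e1 : (0 : ℤ) < r + 1 := by
      have : (0 : ℝ) < r + 1 := by nlinarith
      exact_mod_cast this
    have e2 : r < m + 1 := by
      have : (r : ℝ) < m + 1 := by nlinarith
      exact_mod_cast this
    have e3 : 0 < L - r + 1 := by
      have : (0 : ℝ) < L - r + 1 := by nlinarith
      exact_mod_cast this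
    have e4 : L - r < k - m + 1 := by
      have : (L : ℝ) - r < k - m + 1 := by nlinarith
      exact_mod_cast this
    refine ⟨m - r, ?_, ⟨by omega, by omega, by omega⟩, by omega, by omega, by omega⟩
    rw [abs_le]
    push_cast
    rw [hm, h4R]
    constructor <;> nlinarith
  · have h4R : (k : ℝ) + 1 ≤ L + L' := by exact_mod_cast h4
    suffices h : ∃ r' : ℤ, |(r' : ℝ) - c * L'| ≤ 1 / 2 ∧
        (r - c * L) - (r' - c * L') < 1 ∧ (r' - c * L') - (r - c * L) < 1 by
      obtain ⟨r', h5, h6, h7⟩ := h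
      obtain ⟨h8, h9⟩ := abs_le.1 h5
      have p1 := mul_le_mul_of_nonneg_left h1R hc0.le
      have p2 := mul_le_mul_of_nonneg_left h2R hc0.le
      have p3 := mul_le_mul_of_nonneg_left h4R hc0.le
      have q1 := mul_le_mul_of_nonneg_left h1R hd.le
      have q2 := mul_le_mul_of_nonneg_left h2R hd.le
      have q3 := mul_le_mul_of_nonneg_left h4R hd.le
      have e1 : r - r' < m + 1 := by
        have : (r : ℝ) - r' < m + 1 := by linarith
        exact_mod_cast this
      have e2 : r' - r < m + 1 := by
        have : (r' : ℝ) - r < m + 1 := by linarith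
        exact_mod_cast this
      have e3 : m < r + r' + 1 := by
        have : (m : ℝ) < r + r' + 1 := by linarith
        exact_mod_cast this
      have e4 : (L - r) - (L' - r') < k - m + 1 := by
        have : ((L : ℝ) - r) - (L' - r') < k - m + 1 := by linarith
        exact_mod_cast this
      have e5 : (L' - r') - (L - r) < k - m + 1 := by
        have : ((L' : ℝ) - r') - (L - r) < k - m + 1 := by linarith
        exact_mod_cast this
      have e6 : k - m < (L - r) + (L' - r') + 1 := by
        have : (k : ℝ) - m < (L - r) + (L' - r') + 1 := by linarith
        exact_mod_cast this
      exact ⟨r', h5, ⟨by omega, by omega, by omega⟩, by omega, by omega, by omega⟩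
    rcases hr2.eq_or_lt with h5 | h5
    · refine ⟨⌊c * L' + 1 / 2⌋, ?_⟩
      have := Int.floor_le (c * L' + 1 / 2)
      have := Int.lt_floor_add_one (c * L' + 1 / 2)
      refine ⟨abs_le.2 ⟨?_, ?_⟩, ?_, ?_⟩ <;> linarith
    · refine ⟨⌈c * L' - 1 / 2⌉, ?_⟩
      have := Int.le_ceil (c * L' - 1 / 2)
      have := Int.ceil_lt_add_one (c * L' - 1 / 2)
      refine ⟨abs_le.2 ⟨?_, ?_⟩, ?_, ?_⟩ <;> linarith

/-- The exponent vector with exponents `P i` and `R i` in the `i`-th vector. -/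
def pairExp (P R : Fin n → ℕ) : Vars n →₀ ℕ :=
  Finsupp.equivFunOnFinite.symm fun x => ![P (ofLex x).1, R (ofLex x).1] (ofLex x).2

@[simp] lemma pairExp_av (P R : Fin n → ℕ) (i : Fin n) : pairExp P R (av i) = P i := rfl

@[simp] lemma pairExp_bv (P R : Fin n → ℕ) (i : Fin n) : pairExp P R (bv i) = R i := rfl

lemma vars_ext {m m' : Vars n →₀ ℕ} (h : ∀ i, m (av i) = m' (av i) ∧ m (bv i) = m' (bv i)) :
    m = m' :=
  Finsupp.ext (forall_vars.2 h)

/-- A path of intermediate spins `g` gives a ballot exponent vector. -/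
lemma ballot_of_path {j : Fin n → ℕ} {g : ℕ → ℤ} (h0 : g 0 = 0) (hn : g n = 0)
    (h1 : ∀ s : Fin n, g s - g (s + 1) ≤ j s) (h2 : ∀ s : Fin n, g (s + 1) - g s ≤ j s)
    (h3 : ∀ s : Fin n, (j s : ℤ) ≤ g s + g (s + 1)) :
    ∃ m : Vars n →₀ ℕ, Ballot m ∧
      ∀ s : Fin n, (m (av s) : ℤ) = j s + (g (s + 1) - g s) ∧
        (m (bv s) : ℤ) = j s - (g (s + 1) - g s) := by
  have hval (s : Fin n) :
      (((j s + (g (s + 1) - g s)).toNat : ℕ) : ℤ) = j s + (g (s + 1) - g s) ∧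
        (((j s - (g (s + 1) - g s)).toNat : ℕ) : ℤ) = j s - (g (s + 1) - g s) := by
    have := h1 s; have := h2 s
    omega
  refine ⟨pairExp (fun s => (j s + (g (s + 1) - g s)).toNat)
    (fun s => (j s - (g (s + 1) - g s)).toNat), ⟨fun i => ?_, ?_⟩, hval⟩
  · simp only [pairExp_av, pairExp_bv, (hval _).1, (hval _).2]
    have : ∀ s : Fin n, (j s : ℤ) + (g (s + 1) - g s) - (j s - (g (s + 1) - g s)) =
      2 * (g (s + 1) - g s) := fun s => by ring
    rw [Finset.sum_congr rfl fun s _ => this s, ← Finset.mul_sum, sum_Iic_telescope, h0]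
    have := h3 i
    linarith
  · simp only [pairExp_av, pairExp_bv, (hval _).1, (hval _).2]
    have : ∀ s : Fin n, (j s : ℤ) + (g (s + 1) - g s) - (j s - (g (s + 1) - g s)) =
      2 * (g (s + 1) - g s) := fun s => by ring
    rw [Finset.sum_congr rfl fun s _ => this s, ← Finset.mul_sum, sum_univ_telescope, h0, hn]
    simp

/-- A ballot exponent vector of degrees `2 * k` splits proportionally into ballot exponent
vectors of degrees `2 * jp` and `2 * jm`. -/
theorem Ballot.split {c : ℝ} (hc0 : 0 < c) (hc1 : c < 1) {k jp jm : Fin n → ℕ}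
    (hjp : ∀ i, (jp i : ℝ) = c * k i) (hsum : ∀ i, jp i + jm i = k i)
    {m : Vars n →₀ ℕ} (hm : Ballot m) (hk : ∀ i, m (av i) + m (bv i) = 2 * k i) :
    ∃ mp mm : Vars n →₀ ℕ, m = mp + mm ∧ (Ballot mp ∧ ∀ i, mp (av i) + mp (bv i) = 2 * jp i) ∧
      (Ballot mm ∧ ∀ i, mm (av i) + mm (bv i) = 2 * jm i) := by
  let L (t : ℕ) : ℤ := ∑ x ∈ Finset.range t, if h : x < n then (m (av ⟨x, h⟩) : ℤ) - k ⟨x, h⟩ else 0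
  have hL0 : L 0 = 0 := by simp [L]
  have hstep (s : Fin n) : L (s + 1) - L s = (m (av s) : ℤ) - k s := by
    simp [L, Finset.sum_range_succ]
  have hdiff (s : Fin n) : (m (av s) : ℤ) - m (bv s) = 2 * (L (s + 1) - L s) := by
    rw [hstep]
    have := hk s
    omega
  have hLn : L n = 0 := by
    have h := hm.2
    rw [Finset.sum_congr rfl fun s _ => hdiff s, ← Finset.mul_sum, sum_univ_telescope, hL0] at h
    omega
  have hball (s : Fin n) : (k s : ℤ) ≤ L s + L (s + 1) := by
    have h := hm.1 s
    rw [Finset.sum_congr rfl fun s _ => hdiff s, ← Finset.mul_sum, sum_Iic_telescope, hL0] at h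
    have := hstep s
    omega
  have hex (t : ℕ) (r : ℤ) : ∃ r' : ℤ, ∀ ht : t < n, |(r : ℝ) - c * L t| ≤ 1 / 2 →
      |(r' : ℝ) - c * L (t + 1)| ≤ 1 / 2 ∧
      (r - r' ≤ jp ⟨t, ht⟩ ∧ r' - r ≤ jp ⟨t, ht⟩ ∧ jp ⟨t, ht⟩ ≤ r + r') ∧
      ((L t - r) - (L (t + 1) - r') ≤ k ⟨t, ht⟩ - jp ⟨t, ht⟩ ∧
        (L (t + 1) - r') - (L t - r) ≤ k ⟨t, ht⟩ - jp ⟨t, ht⟩ ∧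
        (k ⟨t, ht⟩ : ℤ) - jp ⟨t, ht⟩ ≤ (L t - r) + (L (t + 1) - r')) := by
    by_cases h : t < n ∧ |(r : ℝ) - c * L t| ≤ 1 / 2
    · obtain ⟨ht, hr⟩ := h
      have e1 := hstep ⟨t, ht⟩
      have e2 := hk ⟨t, ht⟩
      have e3 := hball ⟨t, ht⟩
      simp only at e1 e3
      obtain ⟨r', hr'⟩ := exists_round_triangle hc0 hc1 (L := L t) (L' := L (t + 1))
        (k := k ⟨t, ht⟩) (m := jp ⟨t, ht⟩) (r := r) (by exact_mod_cast hjp ⟨t, ht⟩)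
        (by omega) (by omega) e3 hr
      exact ⟨r', fun _ _ => hr'⟩
    · exact ⟨0, fun h1 h2 => absurd ⟨h1, h2⟩ h⟩
  choose F hF using hex
  obtain ⟨r, hr0, hrs⟩ : ∃ r : ℕ → ℤ, r 0 = 0 ∧ ∀ t, r (t + 1) = F t (r t) :=
    ⟨fun t => Nat.rec 0 F t, rfl, fun _ => rfl⟩
  have hround (t : ℕ) (ht : t ≤ n) : |(r t : ℝ) - c * L t| ≤ 1 / 2 := by
    induction t with
    | zero => rw [hr0, hL0]; norm_num
    | succ t ih => rw [hrs]; exact (hF t (r t) (by omega) (ih (by omega))).1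
  have hrn : r n = 0 := by
    have h := hround n le_rfl
    rw [hLn] at h
    obtain ⟨h1, h2⟩ := abs_le.1 h
    have e1 : (r n : ℝ) < 1 := by push_cast at h2; linarith
    have e2 : (-1 : ℝ) < r n := by push_cast at h1; linarith
    have e1' : r n < 1 := by exact_mod_cast e1
    have e2' : -1 < r n := by exact_mod_cast e2
    omega
  have hrel (s : Fin n) := (hF s (r s) s.2 (hround s s.2.le)).2
  simp only [← hrs] at hrel
  obtain ⟨mp, hmp, hmpv⟩ := ballot_of_path (j := jp) (g := r) hr0 hrn (fun s => (hrel s).1.1)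
    (fun s => (hrel s).1.2.1) (fun s => (hrel s).1.2.2)
  have hjm (s : Fin n) : (jm s : ℤ) = k s - jp s := by have := hsum s; omega
  obtain ⟨mm, hmm, hmmv⟩ := ballot_of_path (j := jm) (g := fun t => L t - r t) (by simp [hr0, hL0])
    (by simp [hrn, hLn]) (fun s => by rw [hjm]; exact (hrel s).2.1)
    (fun s => by rw [hjm]; exact (hrel s).2.2.1) (fun s => by rw [hjm]; exact (hrel s).2.2.2)
  refine ⟨mp, mm, vars_ext fun s => ?_, ⟨hmp, fun s => ?_⟩, hmm, fun s => ?_⟩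
  · have := hmpv s; have := hmmv s; have := hjm s; have := hstep s; have := hk s
    simp only [Finsupp.add_apply]
    omega
  · have := hmpv s; omega
  · have := hmmv s; omega

lemma MultiHom.mul {d e : Fin n → ℕ} {f g : MvPolynomial (Vars n) ℂ} (hf : MultiHom d f)
    (hg : MultiHom e g) : MultiHom (fun i => d i + e i) (f * g) := by
  classical
  intro m hm i
  obtain ⟨a, ha, b, hb, rfl⟩ := Finset.mem_add.1 (support_mul f g hm)
  have := hf a ha i
  have := hg b hb i
  simp only [Finsupp.add_apply]
  omega

lemma MultiHom.sub {d : Fin n → ℕ} {f g : MvPolynomial (Vars n) ℂ} (hf : MultiHom d f)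
    (hg : MultiHom d g) : MultiHom d (f - g) := by
  classical
  intro m hm i
  rcases Finset.mem_union.1 (support_sub _ f g hm) with h | h
  · exact hf m h i
  · exact hg m h i

lemma MultiHom.smul {d : Fin n → ℕ} {f : MvPolynomial (Vars n) ℂ} (hf : MultiHom d f) (c : ℂ) :
    MultiHom d (c • f) :=
  fun m hm i => hf m (support_smul hm) i

lemma MultiHom.conj {d : Fin n → ℕ} {f : MvPolynomial (Vars n) ℂ} (hf : MultiHom d f) :
    MultiHom d (conj f) := fun m hm i => hf m (by simpa using hm) i

lemma multiHom_monomial (m : Vars n →₀ ℕ) (c : ℂ) :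
    MultiHom (fun i => m (av i) + m (bv i)) (monomial m c) := by
  intro l hl i
  rw [Finset.mem_singleton.1 (support_monomial_subset hl)]

/-- The bracket of the `i`-th and `j`-th vectors, i.e. their determinant. -/
def bracket (i j : Fin n) : MvPolynomial (Vars n) ℂ :=
  monomial (Finsupp.single (av i) 1 + Finsupp.single (bv j) 1) 1 -
    monomial (Finsupp.single (av j) 1 + Finsupp.single (bv i) 1) 1

lemma bracket_eq (i j : Fin n) :
    bracket i j = X (av i) * X (bv j) - X (av j) * X (bv i) := by
  simp [bracket, X, monomial_mul]

lemma isInv_bracket (i j : Fin n) : IsInv (bracket i j) := by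
  intro g
  have hdet := (Matrix.mem_specialUnitaryGroup_iff.1 g.2).2
  rw [Matrix.det_fin_two] at hdet
  have h := congrArg (C : ℂ → MvPolynomial (Vars n) ℂ) hdet
  simp only [map_sub, map_mul, map_one] at h
  rw [bracket_eq]
  simp only [map_sub, map_mul, act_X, Fin.sum_univ_two, smul_eq_C_mul]
  linear_combination (X (av i) * X (bv j) - X (av j) * X (bv i)) * h

lemma multiHom_bracket (i j : Fin n) :
    MultiHom (fun s => (Finsupp.single (av i) 1 + Finsupp.single (bv j) 1 : Vars n →₀ ℕ) (av s) +
      (Finsupp.single (av i) 1 + Finsupp.single (bv j) 1 : Vars n →₀ ℕ) (bv s))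
      (bracket i j) := by
  refine (multiHom_monomial _ _).sub ?_
  convert multiHom_monomial (Finsupp.single (av j) 1 + Finsupp.single (bv i) 1) (1 : ℂ) using 2
    with s
  simp [Finsupp.single_apply, add_comm]

open MonomialOrder in
lemma degree_bracket {i j : Fin n} (hij : i < j) :
    lex.degree (bracket i j) = Finsupp.single (av i) 1 + Finsupp.single (bv j) 1 ∧
      lex.Monic (bracket i j) := by
  classical
  have hlt : lex.degree (monomial (Finsupp.single (av j) 1 + Finsupp.single (bv i) 1) (1 : ℂ))
      ≺[lex] lex.degree (monomial (Finsupp.single (av i) 1 + Finsupp.single (bv j) 1) (1 : ℂ)) := by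
    simp only [degree_monomial, one_ne_zero, if_false]
    rw [lex_lt_iff]
    refine toLex_lt_of_av (i := i) (fun s hs => ?_) ?_
    · simp [hs.ne', (hs.trans hij).ne']
    · simp [hij.ne']
  refine ⟨?_, ?_⟩
  · rw [bracket, degree_sub_of_lt hlt]
    simp [degree_monomial]
  · rw [bracket, Monic, leadingCoeff_sub_of_lt hlt]
    simp

lemma Ballot.eq_zero {m : Vars n →₀ ℕ} (hm : Ballot m) (h0 : ∑ i, m (bv i) = 0) : m = 0 := by
  have h1 := hm.2
  rw [Finset.sum_sub_distrib] at h1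
  have h2 : ∑ i, m (av i) = 0 := by
    have h3 : (∑ i, (m (bv i) : ℤ)) = 0 := by exact_mod_cast h0
    rw [h3, sub_zero] at h1
    exact_mod_cast h1
  rw [Finset.sum_eq_zero_iff] at h0 h2
  exact vars_ext fun i => ⟨h2 i (Finset.mem_univ _), h0 i (Finset.mem_univ _)⟩

/-- A nonzero ballot exponent vector is the product of a leading monomial of a bracket and
another ballot exponent vector. -/
lemma Ballot.exists_bracket {m : Vars n →₀ ℕ} (hm : Ballot m) (h0 : ∑ i, m (bv i) ≠ 0) :
    ∃ i j, i < j ∧ ∃ m' : Vars n →₀ ℕ, Ballot m' ∧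
      m = m' + (Finsupp.single (av i) 1 + Finsupp.single (bv j) 1) := by
  classical
  obtain ⟨j₀, -, hj₀⟩ := Finset.exists_ne_zero_of_sum_ne_zero h0
  have hJ : (Finset.univ.filter fun j => m (bv j) ≠ 0).Nonempty := ⟨j₀, by simpa using hj₀⟩
  obtain ⟨j, hj⟩ := Finset.exists_minimal hJ
  have hjpos : m (bv j) ≠ 0 := by simpa using hj.1
  have hjmin (s : Fin n) (hs : s < j) : m (bv s) = 0 := by
    by_contra h
    exact hs.not_ge (hj.2 (by simpa using h) hs.le)
  have hball := hm.1 j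
  obtain ⟨i₀, hi₀j, hi₀⟩ : ∃ i < j, m (av i) ≠ 0 := by
    by_contra! h
    rw [← Finset.Iio_insert, Finset.sum_insert (by simp), Finset.sum_eq_zero] at hball
    · omega
    · intro s hs
      have hs : s < j := by simpa using hs
      rw [h s hs, hjmin s hs]; rfl
  have hI : (Finset.univ.filter fun j => m (av j) ≠ 0).Nonempty := ⟨i₀, by simpa using hi₀⟩
  obtain ⟨i, hi⟩ := Finset.exists_minimal hI
  have hipos : m (av i) ≠ 0 := by simpa using hi.1
  have himin (s : Fin n) (hs : s < i) : m (av s) = 0 := by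
    by_contra h
    exact hs.not_ge (hi.2 (by simpa using h) hs.le)
  have hij : i < j := by
    by_contra! h
    exact hi₀ (himin i₀ (hi₀j.trans_le h))
  set e : Vars n →₀ ℕ := Finsupp.single (av i) 1 + Finsupp.single (bv j) 1 with he
  have hea (s : Fin n) : e (av s) = if s = i then 1 else 0 := by
    simp [he, Finsupp.single_apply, eq_comm]
  have heb (s : Fin n) : e (bv s) = if s = j then 1 else 0 := by
    simp [he, Finsupp.single_apply, eq_comm]
  have hle : e ≤ m := by
    refine forall_vars.2 fun s => ⟨?_, ?_⟩
    · rw [hea]; split_ifs with h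
      · subst h; omega
      · omega
    · rw [heb]; split_ifs with h
      · subst h; omega
      · omega
  obtain ⟨m', rfl⟩ : ∃ m', m = m' + e := ⟨m - e, (tsub_add_cancel_of_le hle).symm⟩
  refine ⟨i, j, hij, m', ⟨fun t => ?_, ?_⟩, rfl⟩
  · have hb := hm.1 t
    have hsum : ∑ s ∈ Finset.Iic t, (((m' + e) (av s) : ℤ) - (m' + e) (bv s)) =
        ∑ s ∈ Finset.Iic t, ((m' (av s) : ℤ) - m' (bv s)) + (if i ≤ t then 1 else 0) -
          (if j ≤ t then 1 else 0) := by
      simp only [Finsupp.add_apply, hea, heb, Nat.cast_add, Nat.cast_ite, Nat.cast_one,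
        Nat.cast_zero, add_sub_add_comm, Finset.sum_add_distrib, Finset.sum_sub_distrib,
        Finset.sum_ite_eq', Finset.mem_Iic]
      ring
    have hat : (m' + e) (av t) = m' (av t) + if t = i then 1 else 0 := by
      rw [Finsupp.add_apply, hea]
    rcases lt_or_ge t j with htj | htj
    · have hq (s : Fin n) (hs : s ≤ t) : (m' (bv s) : ℤ) = 0 := by
        have := hjmin s (hs.trans_lt htj)
        rw [Finsupp.add_apply] at this
        omega
      rw [Finset.sum_congr rfl fun s hs => by rw [hq s (Finset.mem_Iic.1 hs), sub_zero]]
      exact Finset.single_le_sum (f := fun s => (m' (av s) : ℤ)) (fun _ _ => by positivity)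
        (Finset.mem_Iic.2 le_rfl)
    · have : t ≠ i := by rintro rfl; exact htj.not_gt hij
      rw [hsum, hat, if_neg this, if_pos htj, if_pos (hij.le.trans htj)] at hb
      push_cast at hb
      linarith
  · have h := hm.2
    simp only [Finsupp.add_apply, hea, heb, Nat.cast_add, Nat.cast_ite, Nat.cast_one,
      Nat.cast_zero, add_sub_add_comm, Finset.sum_add_distrib, Finset.sum_sub_distrib,
      Finset.sum_ite_eq', Finset.mem_univ, if_true] at h
    rw [Finset.sum_sub_distrib]
    linarith

open MonomialOrder in
/-- Every ballot exponent vector is the leading exponent of a monic invariant. -/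
theorem Ballot.exists_inv {m : Vars n →₀ ℕ} (hm : Ballot m) :
    ∃ f : MvPolynomial (Vars n) ℂ, IsInv f ∧ MultiHom (fun i => m (av i) + m (bv i)) f ∧
      lex.degree f = m ∧ lex.Monic f := by
  induction hN : ∑ i, m (bv i) using Nat.strong_induction_on generalizing m with
  | _ N ih =>
    by_cases h0 : ∑ i, m (bv i) = 0
    · rw [hm.eq_zero h0]
      refine ⟨1, fun g => map_one _, multiHom_monomial 0 1, degree_one, monic_one⟩
    · obtain ⟨i, j, hij, m', hm', rfl⟩ := hm.exists_bracket h0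
      obtain ⟨f, hf1, hf2, hf3, hf4⟩ := ih (∑ i, m' (bv i)) (by
        rw [← hN]
        simp [Finset.sum_add_distrib, Finsupp.single_apply]) hm' rfl
      obtain ⟨hb1, hb2⟩ := degree_bracket hij
      refine ⟨f * bracket i j, hf1.mul (isInv_bracket i j), ?_, ?_, hf4.mul hb2⟩
      · convert hf2.mul (multiHom_bracket i j) using 2 with s
        simp only [Finsupp.add_apply]
        ring
      · rw [degree_mul hf4.ne_zero hb2.ne_zero, hf3, hb1]

open MonomialOrder in
/-- Invariants of degrees `2 * k` are spanned by products of invariants of proportional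
degrees `2 * jp` and `2 * jm`. -/
theorem mem_span_mul {c : ℝ} (hc0 : 0 < c) (hc1 : c < 1) {k jp jm : Fin n → ℕ}
    (hjp : ∀ i, (jp i : ℝ) = c * k i) (hsum : ∀ i, jp i + jm i = k i)
    {f : MvPolynomial (Vars n) ℂ} (hf : IsInv f) (hd : MultiHom (fun i => 2 * k i) f) :
    f ∈ Submodule.span ℂ {p | ∃ fp fm : MvPolynomial (Vars n) ℂ,
      (IsInv fp ∧ MultiHom (fun i => 2 * jp i) fp) ∧
      (IsInv fm ∧ MultiHom (fun i => 2 * jm i) fm) ∧ p = fp * fm} := by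
  classical
  induction hx : (lex.toSyn (lex.degree f)) using WellFoundedLT.induction generalizing f with
  | _ x ih =>
    subst hx
    by_cases hf0 : f = 0
    · rw [hf0]; exact Submodule.zero_mem _
    have hsupp := degree_mem_support (m := lex) hf0
    have hball : Ballot (lex.degree f) := by
      refine ⟨ballot_of_lead hd hf.wt_eq_zero hf.lower_eq_zero hsupp
        fun m hm => lex_le_iff.1 (le_degree hm), ?_⟩
      have := hf.wt_eq_zero _ hsupp
      rw [wt] at this
      rw [← neg_eq_zero, ← this, ← Finset.sum_neg_distrib]
      exact Finset.sum_congr rfl fun _ _ => by ring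
    obtain ⟨mp, mm, hadd, ⟨hmp, hmpd⟩, hmm, hmmd⟩ := hball.split hc0 hc1 hjp hsum (hd _ hsupp)
    obtain ⟨fp, hp1, hp2, hp3, hp4⟩ := hmp.exists_inv
    obtain ⟨fm, hm1, hm2, hm3, hm4⟩ := hmm.exists_inv
    simp only [hmpd] at hp2
    simp only [hmmd] at hm2
    set a := lex.leadingCoeff f with ha
    have ha0 : a ≠ 0 := leadingCoeff_ne_zero_iff.2 hf0
    have hmem : a • (fp * fm) ∈ Submodule.span ℂ {p | ∃ fp fm : MvPolynomial (Vars n) ℂ,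
      (IsInv fp ∧ MultiHom (fun i => 2 * jp i) fp) ∧
      (IsInv fm ∧ MultiHom (fun i => 2 * jm i) fm) ∧ p = fp * fm} :=
      Submodule.smul_mem _ _ (Submodule.subset_span ⟨fp, fm, ⟨hp1, hp2⟩, ⟨hm1, hm2⟩, rfl⟩)
    have hdeg : lex.degree (fp * fm) = lex.degree f := by
      rw [degree_mul hp4.ne_zero hm4.ne_zero, hp3, hm3, hadd]
    have hlead : coeff (lex.degree f) (fp * fm) = 1 := by
      rw [← hdeg]; exact hp4.mul hm4
    set g := f - a • (fp * fm) with hg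
    have hgd : MultiHom (fun i => 2 * k i) g := by
      refine hd.sub (MultiHom.smul ?_ a)
      convert hp2.mul hm2 using 2 with i
      rw [← hsum i]; ring
    have hgi : IsInv g := hf.sub ((hp1.mul hm1).smul a)
    have hfg : f = g + a • (fp * fm) := by rw [hg]; ring
    by_cases hg0 : g = 0
    · rw [hfg, hg0, zero_add]; exact hmem
    rw [hfg]
    refine Submodule.add_mem _ (ih _ ?_ hgi hgd rfl) hmem
    have hgs := degree_mem_support (m := lex) hg0
    refine lt_of_le_of_ne ?_ fun h => ?_
    · rcases Finset.mem_union.1 (support_sub _ _ _ hgs) with h | h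
      · exact le_degree h
      · rw [← hdeg]; exact le_degree (support_smul h)
    · have h' := lex.toSyn.injective h
      rw [h', mem_support_iff, hg, coeff_sub, coeff_smul, hlead] at hgs
      exact hgs (by rw [ha, leadingCoeff]; simp)

/-- The monomial `X₀ ^ r * X₁ ^ (d - r)` as an element of the spin representation. -/
def hsMonomial (d : ℕ) (r : Fin (d + 1)) : Hs d :=
  ⟨X 0 ^ (r : ℕ) * X 1 ^ (d - r : ℕ), by
    have h := (isHomogeneous_X_pow (R := ℂ) (0 : Fin 2) (r : ℕ)).mul
      (isHomogeneous_X_pow (R := ℂ) (1 : Fin 2) (d - r : ℕ))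
    rw [mem_homogeneousSubmodule]
    convert h using 1
    omega⟩

lemma hsMonomial_coe (d : ℕ) (r : Fin (d + 1)) :
    (hsMonomial d r : MvPolynomial (Fin 2) ℂ) =
      basisMonomials (Fin 2) ℂ (Finsupp.single 0 (r : ℕ) + Finsupp.single 1 (d - r : ℕ)) := by
  simp [hsMonomial, X_pow_eq_monomial, monomial_mul]

/-- The basis of monomials of the spin representation. -/
def hsBasis (d : ℕ) : Module.Basis (Fin (d + 1)) ℂ (Hs d) :=
  Module.Basis.mk (v := hsMonomial d)
    (by
      refine LinearIndependent.of_comp (homogeneousSubmodule (Fin 2) ℂ d).subtype ?_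
      have h := (basisMonomials (Fin 2) ℂ).linearIndependent.comp
        (fun r : Fin (d + 1) => Finsupp.single (0 : Fin 2) (r : ℕ) + Finsupp.single 1 (d - r : ℕ))
        (fun r s hrs => by
          have := DFunLike.congr_fun hrs 0
          simpa [Fin.ext_iff] using this)
      have he : (homogeneousSubmodule (Fin 2) ℂ d).subtype ∘ hsMonomial d =
        basisMonomials (Fin 2) ℂ ∘ fun r : Fin (d + 1) =>
          Finsupp.single (0 : Fin 2) (r : ℕ) + Finsupp.single 1 (d - r : ℕ) :=
        funext (hsMonomial_coe d)
      rw [he]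
      exact h)
    (by
      rintro p -
      suffices h : (p : MvPolynomial (Fin 2) ℂ) ∈
          (Submodule.span ℂ (Set.range (hsMonomial d))).map
            (homogeneousSubmodule (Fin 2) ℂ d).subtype by
        obtain ⟨q, hq, hqp⟩ := h
        rwa [Subtype.ext hqp] at hq
      rw [(p : MvPolynomial (Fin 2) ℂ).as_sum]
      refine Submodule.sum_mem _ fun m hm => ?_
      have hdeg : m 0 + m 1 = d := by
        have := (mem_homogeneousSubmodule _ _).1 p.2 (mem_support_iff.1 hm)
        simpa [Finsupp.weight_apply, Finsupp.sum_fintype] using this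
      have hmon : monomial m (coeff m (p : MvPolynomial (Fin 2) ℂ)) =
          coeff m (p : MvPolynomial (Fin 2) ℂ) •
            (homogeneousSubmodule (Fin 2) ℂ d).subtype (hsMonomial d ⟨m 0, by omega⟩) := by
        have he : Finsupp.single 0 (m 0) + Finsupp.single 1 (d - m 0) = m := by
          ext s
          fin_cases s
          · simp
          · simp; omega
        rw [Submodule.subtype_apply, hsMonomial_coe, coe_basisMonomials, smul_monomial,
          smul_eq_mul, mul_one, he]
      rw [hmon]
      exact Submodule.smul_mem _ _ (Submodule.mem_map_of_mem
        (Submodule.subset_span (Set.mem_range_self _))))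

lemma hsBasis_coe (d : ℕ) (r : Fin (d + 1)) :
    (hsBasis d r : MvPolynomial (Fin 2) ℂ) = X 0 ^ (r : ℕ) * X 1 ^ (d - r : ℕ) := by
  rw [hsBasis, Module.Basis.mk_apply]; rfl

/-- Polynomials in one vector as polynomials in the `i`-th of `n` vectors. -/
def emb (i : Fin n) : MvPolynomial (Fin 2) ℂ →ₐ[ℂ] MvPolynomial (Vars n) ℂ :=
  rename fun s => toLex (i, s)

/-- The realization of tensors as multihomogeneous polynomials. -/
def toPoly (d : Fin n → ℕ) : (⨂[ℂ] i, Hs (d i)) →ₗ[ℂ] MvPolynomial (Vars n) ℂ :=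
  PiTensorProduct.lift ((MultilinearMap.mkPiAlgebra ℂ (Fin n) (MvPolynomial (Vars n) ℂ)).compLinearMap
    fun i => (emb i).toLinearMap ∘ₗ (homogeneousSubmodule (Fin 2) ℂ (d i)).subtype)

lemma toPoly_tprod (d : Fin n → ℕ) (v : ∀ i, Hs (d i)) :
    toPoly d (PiTensorProduct.tprod ℂ v) = ∏ i, emb i (v i : MvPolynomial (Fin 2) ℂ) := by
  simp [toPoly, PiTensorProduct.lift.tprod]

lemma monomial_pairExp (P R : Fin n → ℕ) :
    (monomial (pairExp P R) 1 : MvPolynomial (Vars n) ℂ) =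
      ∏ i, (X (av i) ^ P i * X (bv i) ^ R i) := by
  rw [monomial_eq, Finsupp.prod_fintype _ _ (by simp), prod_vars]
  simp [Fin.prod_univ_two]

lemma toPoly_basis (d : Fin n → ℕ) (r : ∀ i, Fin (d i + 1)) :
    toPoly d (PiTensorProduct.tprod ℂ fun i => hsBasis (d i) (r i)) =
      monomial (pairExp (fun i => r i) fun i => d i - r i) 1 := by
  rw [toPoly_tprod, monomial_pairExp]
  simp [hsBasis_coe, emb]

lemma tensor_ext {d : Fin n → ℕ} {M : Type*} [AddCommMonoid M] [Module ℂ M]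
    {F G : (⨂[ℂ] i, Hs (d i)) →ₗ[ℂ] M}
    (h : ∀ r : ∀ i, Fin (d i + 1), F (PiTensorProduct.tprod ℂ fun i => hsBasis (d i) (r i)) =
      G (PiTensorProduct.tprod ℂ fun i => hsBasis (d i) (r i))) : F = G :=
  PiTensorProduct.ext (Module.Basis.ext_multilinear (fun i => hsBasis (d i)) h)

lemma multiHom_sum {d : Fin n → ℕ} {ι : Type*} (s : Finset ι) {f : ι → MvPolynomial (Vars n) ℂ}
    (hf : ∀ x ∈ s, MultiHom d (f x)) : MultiHom d (∑ x ∈ s, f x) := by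
  classical
  intro m hm i
  obtain ⟨x, hx, hm⟩ := Finset.mem_biUnion.1 (support_sum hm)
  exact hf x hx m hm i

lemma multiHom_basis (d : Fin n → ℕ) (r : ∀ i, Fin (d i + 1)) (c : ℂ) :
    MultiHom d (monomial (pairExp (fun i => (r i : ℕ)) fun i => d i - r i) c) := by
  have h := multiHom_monomial (pairExp (fun i => (r i : ℕ)) fun i => d i - r i) c
  convert h using 2 with i
  have := (r i).2
  simp; omega

/-- Every functional on the tensor product is represented by a polynomial via the Fischer form. -/
lemma exists_fischer_eq (d : Fin n → ℕ) (G : (⨂[ℂ] i, Hs (d i)) →ₗ[ℂ] ℂ) :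
    ∃ f, MultiHom d f ∧ G = fischer f ∘ₗ toPoly d := by
  classical
  refine ⟨∑ r : ∀ i, Fin (d i + 1),
    monomial (pairExp (fun i => (r i : ℕ)) fun i => d i - r i)
      (G (PiTensorProduct.tprod ℂ fun i => hsBasis (d i) (r i)) /
        multiFactorial (pairExp (fun i => (r i : ℕ)) fun i => d i - r i)),
    multiHom_sum _ fun r _ => multiHom_basis d r _, tensor_ext fun r => ?_⟩
  rw [LinearMap.comp_apply, toPoly_basis, map_sum, LinearMap.sum_apply, Finset.sum_eq_single r]
  · rw [fischer_monomial, coeff_monomial, if_pos rfl, mul_one,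
      div_mul_cancel₀ _ (multiFactorial_ne_zero _)]
  · intro s _ hs
    rw [fischer_monomial, coeff_monomial, if_neg, mul_zero, mul_zero]
    intro h
    refine hs (funext fun i => Fin.ext ?_)
    have := DFunLike.congr_fun h (av i)
    simpa using this.symm
  · simp

lemma toPoly_injective (d : Fin n → ℕ) : Function.Injective (toPoly d) := by
  intro v w hvw
  refine (Basis.piTensorProduct fun i => hsBasis (d i)).ext_elem fun r => ?_
  obtain ⟨f, -, hG⟩ := exists_fischer_eq d ((Basis.piTensorProduct fun i => hsBasis (d i)).coord r)
  rw [← Module.Basis.coord_apply, ← Module.Basis.coord_apply, hG, LinearMap.comp_apply,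
    LinearMap.comp_apply, hvw]

lemma exists_toPoly_eq {d : Fin n → ℕ} {f : MvPolynomial (Vars n) ℂ} (hf : MultiHom d f) :
    ∃ v, toPoly d v = f := by
  suffices h : f ∈ LinearMap.range (toPoly d) from h
  rw [f.as_sum]
  refine Submodule.sum_mem _ fun m hm => ?_
  have hd := hf m hm
  refine ⟨coeff m f • PiTensorProduct.tprod ℂ fun i =>
    hsBasis (d i) ⟨m (av i), by have := hd i; omega⟩, ?_⟩
  have he : pairExp (fun i => m (av i)) (fun i => d i - m (av i)) = m := by
    refine vars_ext fun i => ⟨rfl, ?_⟩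
    have := hd i
    simp; omega
  rw [map_smul, toPoly_basis, smul_monomial, smul_eq_mul, mul_one, he]

lemma multiHom_toPoly (d : Fin n → ℕ) (v : ⨂[ℂ] i, Hs (d i)) : MultiHom d (toPoly d v) := by
  intro m hm i
  by_contra hne
  have h : lcoeff ℂ m ∘ₗ toPoly d = 0 := by
    refine tensor_ext fun r => ?_
    rw [LinearMap.comp_apply, toPoly_basis, LinearMap.zero_apply]
    by_contra h
    exact hne (multiHom_basis d r 1 m (mem_support_iff.2 h) i)
  exact mem_support_iff.1 hm (LinearMap.congr_fun h v)

lemma emb_aeval (g : Matrix (Fin 2) (Fin 2) ℂ) (i : Fin n) (p : MvPolynomial (Fin 2) ℂ) :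
    emb i (aeval (fun s => ∑ t, g t s • (X t : MvPolynomial (Fin 2) ℂ)) p) =
      act g (emb i p) := by
  suffices h : (emb i).comp (aeval (fun s => ∑ t, g t s • (X t : MvPolynomial (Fin 2) ℂ))) =
      (act g).comp (emb i) from DFunLike.congr_fun h p
  refine MvPolynomial.algHom_ext fun s => ?_
  rw [AlgHom.comp_apply, AlgHom.comp_apply, aeval_X, emb, rename_X, act_X, map_sum]
  simp

lemma toPoly_map {d : Fin n → ℕ} {ρ : ∀ i, Representation ℂ SU2 (Hs (d i))}
    (hρ : ∀ i, IsSpinRep (d i) (ρ i)) (g : SU2) (v : ⨂[ℂ] i, Hs (d i)) :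
    toPoly d (PiTensorProduct.map (fun i => ρ i g) v) = act (g : Matrix _ _ ℂ) (toPoly d v) := by
  suffices h : toPoly d ∘ₗ PiTensorProduct.map (fun i => ρ i g) =
      (act (g : Matrix _ _ ℂ)).toLinearMap ∘ₗ toPoly d from LinearMap.congr_fun h v
  refine tensor_ext fun r => ?_
  rw [LinearMap.comp_apply, LinearMap.comp_apply, PiTensorProduct.map_tprod, toPoly_tprod,
    toPoly_tprod, AlgHom.toLinearMap_apply, map_prod]
  refine Finset.prod_congr rfl fun i _ => ?_
  rw [hρ i, emb_aeval]

lemma mem_piInvariants_iff {d : Fin n → ℕ} {ρ : ∀ i, Representation ℂ SU2 (Hs (d i))}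
    (hρ : ∀ i, IsSpinRep (d i) (ρ i)) (v : ⨂[ℂ] i, Hs (d i)) :
    v ∈ piInvariants ρ ↔ IsInv (toPoly d v) := by
  refine forall_congr' fun g => ?_
  rw [← toPoly_map hρ, (toPoly_injective d).eq_iff]

/-- The `d`-th power of the linear form `u 0 * X₀ + u 1 * X₁`. -/
def powVec (d : ℕ) (u : Fin 2 → ℂ) : Hs d :=
  ⟨(∑ s, u s • X s) ^ d, by
    have h : (∑ s, u s • X s : MvPolynomial (Fin 2) ℂ).IsHomogeneous 1 :=
      IsHomogeneous.sum _ _ _ fun s _ => by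
        rw [smul_eq_C_mul]; simpa using (isHomogeneous_C (Fin 2) (u s)).mul (isHomogeneous_X ℂ s)
    simpa using h.pow d⟩

lemma powVec_coe (d : ℕ) (u : Fin 2 → ℂ) :
    (powVec d u : MvPolynomial (Fin 2) ℂ) = (∑ s, u s • X s) ^ d := rfl

lemma powVec_smul (d : ℕ) (c : ℂ) (u : Fin 2 → ℂ) : powVec d (c • u) = c ^ d • powVec d u := by
  refine Subtype.ext ?_
  change _ = c ^ d • (powVec d u : MvPolynomial (Fin 2) ℂ)
  rw [powVec_coe, powVec_coe, ← smul_pow, Finset.smul_sum]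
  simp [smul_smul]

lemma toPoly_powVec (d : Fin n → ℕ) (u : Fin n → Fin 2 → ℂ) :
    toPoly d (PiTensorProduct.tprod ℂ fun i => powVec (d i) (u i)) =
      ∏ i, (∑ s, u i s • X (toLex (i, s))) ^ d i := by
  rw [toPoly_tprod]
  refine Finset.prod_congr rfl fun i _ => ?_
  rw [powVec_coe, map_pow, map_sum]
  simp [emb]

/-- Pairing with powers of linear forms evaluates a multihomogeneous polynomial. -/
lemma fischer_powVec {d : Fin n → ℕ} {h : MvPolynomial (Vars n) ℂ} (hh : MultiHom d h)
    (u : Fin n → Fin 2 → ℂ) :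
    fischer h (toPoly d (PiTensorProduct.tprod ℂ fun i => powVec (d i) (u i))) =
      (∏ i, ((d i).factorial : ℂ)) * eval (fun x => u (ofLex x).1 (ofLex x).2) h := by
  classical
  obtain ⟨G, hGd⟩ : ∃ G : Matrix (Vars n) (Vars n) ℂ, ∀ y x, G y x =
      if y = av (ofLex x).1 then u (ofLex x).1 (ofLex x).2 else 0 := ⟨fun _ _ => _, fun _ _ => rfl⟩
  have hG : linSubst G = aeval (fun x : Vars n =>
      u (ofLex x).1 (ofLex x).2 • (X (av (ofLex x).1) : MvPolynomial (Vars n) ℂ)) := by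
    refine MvPolynomial.algHom_ext fun x => ?_
    rw [linSubst_X]
    simp [hGd]
  have h1 : toPoly d (PiTensorProduct.tprod ℂ fun i => powVec (d i) (u i)) =
      linSubst G.transpose (monomial (pairExp d 0) 1) := by
    rw [toPoly_powVec, monomial_pairExp, map_prod]
    refine Finset.prod_congr rfl fun i _ => ?_
    rw [Pi.zero_apply, pow_zero, mul_one, map_pow, linSubst_X, sum_vars,
      Finset.sum_eq_single i]
    · simp [hGd, Matrix.transpose_apply]
    · intro j _ hj
      simp [hGd, Matrix.transpose_apply, hj.symm]
    · simp
  have h2 : linSubst G h = eval (fun x => u (ofLex x).1 (ofLex x).2) h •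
      monomial (pairExp d 0) 1 := by
    conv_lhs => rw [h.as_sum, map_sum]
    rw [eval_eq', Finset.sum_smul]
    refine Finset.sum_congr rfl fun m hm => ?_
    rw [hG, aeval_monomial, monomial_pairExp, Finsupp.prod_fintype _ _ (by simp)]
    simp only [smul_pow]
    rw [Finset.prod_smul, mul_smul_comm, algebraMap_eq, ← smul_eq_C_mul, smul_smul, mul_comm]
    congr 1
    rw [prod_vars]
    refine Finset.prod_congr rfl fun i _ => ?_
    simp [Fin.prod_univ_two, ← pow_add, hh m hm i]
  rw [h1, ← fischer_linSubst, h2, map_smul, LinearMap.smul_apply, fischer_monomial,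
    coeff_monomial, if_pos rfl, multiFactorial, prod_vars]
  simp [Fin.prod_univ_two, mul_comm]

/-- A functional on a tensor product of spin representations is determined by its values on
products of powers of linear forms. -/
lemma tensor_ext_powVec {d : Fin n → ℕ} {F G : (⨂[ℂ] i, Hs (d i)) →ₗ[ℂ] ℂ}
    (h : ∀ u : Fin n → Fin 2 → ℂ, F (PiTensorProduct.tprod ℂ fun i => powVec (d i) (u i)) =
      G (PiTensorProduct.tprod ℂ fun i => powVec (d i) (u i))) : F = G := by
  obtain ⟨f, hf, rfl⟩ := exists_fischer_eq d F
  obtain ⟨g, hg, rfl⟩ := exists_fischer_eq d G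
  congr 2
  refine MvPolynomial.funext fun w => ?_
  have h1 := h fun i s => w (toLex (i, s))
  rw [LinearMap.comp_apply, LinearMap.comp_apply, fischer_powVec hf, fischer_powVec hg] at h1
  exact mul_left_cancel₀
    (Finset.prod_ne_zero_iff.2 fun _ _ => Nat.cast_ne_zero.2 (Nat.factorial_ne_zero _)) h1

lemma dual_eq_zero_of_powVec {d : ℕ} {φ : Hs d →ₗ[ℂ] ℂ} (h : ∀ u, φ (powVec d u) = 0) : φ = 0 := by
  have h1 : φ ∘ₗ (PiTensorProduct.subsingletonEquiv (R := ℂ) (s := fun _ : Fin 1 => Hs d)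
      (0 : Fin 1)).toLinearMap = 0 := by
    refine tensor_ext_powVec (d := fun _ => d) fun u => ?_
    simp [h]
  refine LinearMap.ext fun v => ?_
  have h2 := LinearMap.congr_fun h1
    ((PiTensorProduct.subsingletonEquiv (R := ℂ) (s := fun _ : Fin 1 => Hs d) (0 : Fin 1)).symm v)
  simpa using h2

lemma spinRep_powVec {d : ℕ} {ρ : Representation ℂ SU2 (Hs d)} (hρ : IsSpinRep d ρ) (g : SU2) :
    ρ g (powVec d ![1, 0]) =
      powVec d fun s => (g : Matrix (Fin 2) (Fin 2) ℂ) s 0 := by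
  refine Subtype.ext ?_
  rw [hρ, powVec_coe, powVec_coe]
  simp

lemma spinRep_diag {d : ℕ} {ρ : Representation ℂ SU2 (Hs d)} (hρ : IsSpinRep d ρ) {g : SU2}
    {z w : ℂ} (hg : (g : Matrix (Fin 2) (Fin 2) ℂ) = !![z, 0; 0, w]) (r : Fin (d + 1)) :
    ρ g (hsBasis d r) = (z ^ (r : ℕ) * w ^ (d - r : ℕ)) • hsBasis d r := by
  refine Subtype.ext ?_
  change _ = (z ^ (r : ℕ) * w ^ (d - r : ℕ)) • (hsBasis d r : MvPolynomial (Fin 2) ℂ)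
  rw [hρ, hsBasis_coe, hg]
  simp [smul_pow, smul_smul, mul_comm]

lemma powVec_eq_hsBasis (d : ℕ) : powVec d ![1, 0] = hsBasis d (Fin.last d) := by
  refine Subtype.ext ?_
  rw [powVec_coe, hsBasis_coe]
  simp

lemma exists_unit_vector (u : Fin 2 → ℂ) : ∃ c a b : ℂ,
    a * starRingEnd ℂ a + b * starRingEnd ℂ b = 1 ∧ u = c • ![a, b] := by
  by_cases hu : u = 0
  · exact ⟨0, 1, 0, by simp, by simp [hu]⟩
  set N : ℝ := Complex.normSq (u 0) + Complex.normSq (u 1) with hN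
  have hNpos : 0 < N := by
    by_contra hle
    have h0 := Complex.normSq_nonneg (u 0)
    have h1 := Complex.normSq_nonneg (u 1)
    have e0 : u 0 = 0 := Complex.normSq_eq_zero.1 (by linarith)
    have e1 : u 1 = 0 := Complex.normSq_eq_zero.1 (by linarith)
    exact hu (funext fun s => by fin_cases s <;> simp [e0, e1])
  have hs : ((Real.sqrt N : ℝ) : ℂ) ≠ 0 := by exact_mod_cast (Real.sqrt_pos.2 hNpos).ne'
  have hsq : ((Real.sqrt N : ℝ) : ℂ) * (Real.sqrt N : ℝ) = N := by
    exact_mod_cast Real.mul_self_sqrt hNpos.le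
  refine ⟨(Real.sqrt N : ℝ), u 0 / (Real.sqrt N : ℝ), u 1 / (Real.sqrt N : ℝ), ?_, ?_⟩
  · rw [map_div₀, map_div₀, Complex.conj_ofReal, div_mul_div_comm, div_mul_div_comm, hsq,
      Complex.mul_conj, Complex.mul_conj, ← add_div, ← Complex.ofReal_add, ← hN, div_self]
    exact_mod_cast hNpos.ne'
  · funext s
    fin_cases s <;> simp [mul_div_cancel₀ _ hs]

/-- A nonzero equivariant map into the tensor product of two spin representations whose degrees
add up to the degree of the source maps powers of linear forms to tensors of powers. -/
theorem exists_intertwiner_powVec {d dp dm : ℕ} (hd : dp + dm = d)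
    {ρ : Representation ℂ SU2 (Hs d)} (hρ : IsSpinRep d ρ)
    {ρp : Representation ℂ SU2 (Hs dp)} (hρp : IsSpinRep dp ρp)
    {ρm : Representation ℂ SU2 (Hs dm)} (hρm : IsSpinRep dm ρm)
    {T : Hs d →ₗ[ℂ] Hs dp ⊗[ℂ] Hs dm} (hT0 : T ≠ 0)
    (hT : ∀ (g : SU2) v, T (ρ g v) = TensorProduct.map (ρp g) (ρm g) (T v)) :
    ∃ c : ℂ, c ≠ 0 ∧ ∀ u, T (powVec d u) = c • (powVec dp u ⊗ₜ[ℂ] powVec dm u) := by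
  classical
  set B := (hsBasis dp).tensorProduct (hsBasis dm) with hB
  set w := T (powVec d ![1, 0]) with hw
  have hzero (r : Fin (dp + 1)) (s : Fin (dm + 1)) (hrs : (r : ℕ) + s < d) :
      B.coord (r, s) w = 0 := by
    by_contra hne
    set N : ℕ := 2 * (d - (r + s)) with hN
    have hN0 : (N : ℂ) ≠ 0 := by
      have : N ≠ 0 := by omega
      exact_mod_cast this
    set z : ℂ := Complex.exp (Real.pi / N * Complex.I) with hz
    have hzc : starRingEnd ℂ z = Complex.exp (-(Real.pi / N * Complex.I)) := by
      rw [hz, ← Complex.exp_conj]; simp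
    have hz1 : z * starRingEnd ℂ z = 1 := by
      rw [hzc, hz, ← Complex.exp_add]; simp
    have hzN : z ^ N = -1 := by
      rw [hz, ← Complex.exp_nat_mul, ← Complex.exp_pi_mul_I]
      congr 1
      field_simp
    obtain ⟨g, hg⟩ : ∃ g : SU2, (g : Matrix (Fin 2) (Fin 2) ℂ) = !![z, 0; 0, starRingEnd ℂ z] :=
      ⟨⟨_, mem_SU2_of (a := z) (b := 0) (by simpa using hz1)⟩, by simp⟩
    have hcoord : B.coord (r, s) ∘ₗ TensorProduct.map (ρp g) (ρm g) =
        (z ^ (r + s : ℕ) * starRingEnd ℂ z ^ (d - (r + s) : ℕ)) • B.coord (r, s) := by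
      refine B.ext fun ⟨r', s'⟩ => ?_
      rw [LinearMap.comp_apply, LinearMap.smul_apply, hB, Module.Basis.tensorProduct_apply,
        TensorProduct.map_tmul, spinRep_diag hρp hg, spinRep_diag hρm hg,
        TensorProduct.smul_tmul_smul, ← Module.Basis.tensorProduct_apply, map_smul,
        Module.Basis.coord_apply, Module.Basis.repr_self, Finsupp.single_apply]
      split_ifs with h
      · simp only [Prod.mk.injEq] at h
        obtain ⟨rfl, rfl⟩ := h
        have : d - (r' + s' : ℕ) = (dp - r') + (dm - s') := by omega
        rw [this, pow_add, pow_add]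
        simp; ring
      · simp
    have h1 := hT g (powVec d ![1, 0])
    rw [powVec_eq_hsBasis, spinRep_diag hρ hg, map_smul, ← powVec_eq_hsBasis, ← hw] at h1
    have h2 := congrArg (B.coord (r, s)) h1
    have hcw := LinearMap.congr_fun hcoord w
    rw [LinearMap.comp_apply, LinearMap.smul_apply] at hcw
    rw [map_smul, hcw, smul_eq_mul, smul_eq_mul] at h2
    have h3 := mul_right_cancel₀ hne h2
    have h4 : z ^ (r + s : ℕ) * starRingEnd ℂ z ^ (d - (r + s) : ℕ) * z ^ (d - (r + s) : ℕ) =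
        z ^ (r + s : ℕ) := by
      rw [mul_assoc, ← mul_pow, mul_comm _ z, hz1, one_pow, mul_one]
    rw [← h3] at h4
    have h5 : z ^ (r + s : ℕ) * z ^ N = z ^ (r + s : ℕ) := by
      rw [Fin.val_last, Nat.sub_self, pow_zero, mul_one, ← pow_add] at h4
      rw [← pow_add, ← h4]
      congr 1
      omega
    have hz0 : z ^ (r + s : ℕ) ≠ 0 := pow_ne_zero _ (Complex.exp_ne_zero _)
    rw [hzN] at h5
    exact hz0 (by linear_combination (-1 / 2 : ℂ) * h5)
  have hwl : w = B.coord (Fin.last dp, Fin.last dm) w •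
      (powVec dp ![1, 0] ⊗ₜ[ℂ] powVec dm ![1, 0]) := by
    refine B.ext_elem fun ⟨r, s⟩ => ?_
    rw [powVec_eq_hsBasis, powVec_eq_hsBasis, ← Module.Basis.tensorProduct_apply, ← hB, map_smul,
      Finsupp.smul_apply, Module.Basis.repr_self, Finsupp.single_apply]
    split_ifs with h
    · rw [← h]; simp
    · have : (r : ℕ) + s < d := by
        by_contra hle
        refine h (Prod.ext (Fin.ext ?_) (Fin.ext ?_)) <;> simp <;> omega
      simpa using hzero r s this
  set c := B.coord (Fin.last dp, Fin.last dm) w with hc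
  have hpow (u : Fin 2 → ℂ) : T (powVec d u) = c • (powVec dp u ⊗ₜ[ℂ] powVec dm u) := by
    obtain ⟨e, a, b, hab, rfl⟩ := exists_unit_vector u
    obtain ⟨g, hg⟩ : ∃ g : SU2, (fun s => (g : Matrix (Fin 2) (Fin 2) ℂ) s 0) = ![a, b] :=
      ⟨⟨_, mem_SU2_of hab⟩, funext fun s => by fin_cases s <;> simp⟩
    rw [powVec_smul, powVec_smul, powVec_smul, map_smul, ← hg, ← spinRep_powVec hρ g, hT, ← hw, hwl,
      map_smul, TensorProduct.map_tmul, spinRep_powVec hρp, spinRep_powVec hρm,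
      TensorProduct.smul_tmul_smul, ← pow_add, hd, smul_comm]
  refine ⟨c, fun hc0 => hT0 (LinearMap.ext fun v => ?_), hpow⟩
  refine B.ext_elem fun x => ?_
  have h := dual_eq_zero_of_powVec (φ := B.coord x ∘ₗ T) fun u => by
    rw [LinearMap.comp_apply, hpow, hc0, zero_smul, map_zero]
  simpa using LinearMap.congr_fun h v

lemma MultiHom.ext_fischer {d : Fin n → ℕ} {f g : MvPolynomial (Vars n) ℂ} (hf : MultiHom d f)
    (hg : MultiHom d g) (h : ∀ v, fischer f (toPoly d v) = fischer g (toPoly d v)) : f = g := by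
  obtain ⟨v, hv⟩ := exists_toPoly_eq (hf.sub hg).conj
  refine sub_eq_zero.1 (eq_zero_of_fischer_conj_self ?_)
  rw [fischer_comm, map_sub, LinearMap.sub_apply, ← hv, h v, sub_self]

/-- Pairing with an invariant does not see an equivariant projection onto the invariants. -/
theorem fischer_projection {d : Fin n → ℕ} {ρ : ∀ i, Representation ℂ SU2 (Hs (d i))}
    (hρ : ∀ i, IsSpinRep (d i) (ρ i)) {P : (⨂[ℂ] i, Hs (d i)) →ₗ[ℂ] ⨂[ℂ] i, Hs (d i)}
    (hP1 : P ∘ₗ P = P) (hP2 : LinearMap.range P = piInvariants ρ)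
    (hP3 : ∀ g : SU2, P ∘ₗ PiTensorProduct.map (fun i => ρ i g) =
      PiTensorProduct.map (fun i => ρ i g) ∘ₗ P)
    {f : MvPolynomial (Vars n) ℂ} (hf : IsInv f) (hd : MultiHom d f) (v : ⨂[ℂ] i, Hs (d i)) :
    fischer f (toPoly d (P v)) = fischer f (toPoly d v) := by
  obtain ⟨q, hq, hqf⟩ := exists_fischer_eq d (fischer f ∘ₗ toPoly d ∘ₗ P)
  have hqf' (v) : fischer f (toPoly d (P v)) = fischer q (toPoly d v) := LinearMap.congr_fun hqf v
  have hqi : IsInv q := by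
    intro g
    have hact : MultiHom d (act (g : Matrix _ _ ℂ) q) := by
      obtain ⟨w, rfl⟩ := exists_toPoly_eq hq
      rw [← toPoly_map hρ]
      exact multiHom_toPoly d _
    refine hact.ext_fischer hq fun v => ?_
    have h := LinearMap.congr_fun (hP3 ⟨_, transpose_mem_SU2 g⟩) v
    rw [LinearMap.comp_apply, LinearMap.comp_apply] at h
    have hT := toPoly_map hρ ⟨_, transpose_mem_SU2 g⟩ v
    rw [fischer_act, ← hT, ← hqf', h, toPoly_map hρ, ← hqf',
      ← fischer_act, hf g]
  rw [hqf']
  congr 2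
  refine sub_eq_zero.1 (eq_zero_of_fischer_conj_self ?_)
  obtain ⟨w, hw⟩ := exists_toPoly_eq (hq.sub hd).conj
  have hwi : w ∈ LinearMap.range P := by
    rw [hP2, mem_piInvariants_iff hρ, hw]
    exact (hqi.sub hf).conj
  obtain ⟨w', rfl⟩ := hwi
  rw [fischer_comm, map_sub, LinearMap.sub_apply, ← hw, ← hqf', ← LinearMap.comp_apply P P, hP1,
    sub_self]

/-- Pairing with a product of polynomials factors through the product of the intertwiners. -/
lemma exists_fischer_mul_eq {d dp dm : Fin n → ℕ} (hd : ∀ i, dp i + dm i = d i)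
    {C : ∀ i, Hs (d i) →ₗ[ℂ] Hs (dp i) ⊗[ℂ] Hs (dm i)} {c : Fin n → ℂ} (hc : ∀ i, c i ≠ 0)
    (hC : ∀ i u, C i (powVec (d i) u) = c i • (powVec (dp i) u ⊗ₜ[ℂ] powVec (dm i) u))
    {Φ : (⨂[ℂ] i, (Hs (dp i) ⊗[ℂ] Hs (dm i))) →ₗ[ℂ]
      (⨂[ℂ] i, Hs (dp i)) ⊗[ℂ] (⨂[ℂ] i, Hs (dm i))}
    (hΦ : ∀ (a : ∀ i, Hs (dp i)) (b : ∀ i, Hs (dm i)),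
      Φ (PiTensorProduct.tprod ℂ (fun i => a i ⊗ₜ[ℂ] b i)) =
        PiTensorProduct.tprod ℂ a ⊗ₜ[ℂ] PiTensorProduct.tprod ℂ b)
    {fp fm : MvPolynomial (Vars n) ℂ} (hfp : MultiHom dp fp) (hfm : MultiHom dm fm) :
    ∃ e : ℂ, fischer (fp * fm) ∘ₗ toPoly d =
      e • (LinearMap.mul' ℂ ℂ ∘ₗ
        TensorProduct.map (fischer fp ∘ₗ toPoly dp) (fischer fm ∘ₗ toPoly dm) ∘ₗ
        Φ ∘ₗ PiTensorProduct.map (fun i => C i)) := by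
  refine ⟨(∏ i, ((d i).factorial : ℂ)) /
    ((∏ i, c i) * (∏ i, ((dp i).factorial : ℂ)) * ∏ i, ((dm i).factorial : ℂ)),
    tensor_ext_powVec fun u => ?_⟩
  have hfd : MultiHom d (fp * fm) := by
    have := hfp.mul hfm
    simpa only [hd] using this
  have hcp : ∏ i, c i ≠ 0 := Finset.prod_ne_zero_iff.2 fun i _ => hc i
  have hfac (e : Fin n → ℕ) : ∏ i, ((e i).factorial : ℂ) ≠ 0 :=
    Finset.prod_ne_zero_iff.2 fun _ _ => Nat.cast_ne_zero.2 (Nat.factorial_ne_zero _)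
  have h1 := hfac dp
  have h2 := hfac dm
  simp only [LinearMap.comp_apply, LinearMap.smul_apply, PiTensorProduct.map_tprod, hC]
  rw [MultilinearMap.map_smul_univ, map_smul, hΦ, map_smul, TensorProduct.map_tmul, map_smul,
    LinearMap.mul'_apply, LinearMap.comp_apply, LinearMap.comp_apply, fischer_powVec hfd,
    fischer_powVec hfp, fischer_powVec hfm, map_mul, smul_eq_mul, smul_eq_mul]
  field_simp

end EPRL

open EPRL

/-- **Injectivity of the EPRL map.**  Let `|γ| < 1` and let `(k₁,…,kₙ)` be integer spins such
that `j⁺ᵢ = (1+γ)kᵢ/2` is a natural number for every `i`, and `j⁻ᵢ = (1−γ)kᵢ/2 = kᵢ − j⁺ᵢ`.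
For each `i` fix a nonzero `SU(2)`-equivariant map `Cᵢ : H_{kᵢ} → H_{j⁺ᵢ} ⊗ H_{j⁻ᵢ}` and let
`P⁺`, `P⁻` be the orthogonal projections of `⨂ᵢ H_{j±ᵢ}` onto the subspaces of invariants
(characterized here, equivalently, as the unique `SU(2)`-equivariant idempotents onto the
invariants: for a unitarizable representation this is exactly the orthogonal projection with
respect to any invariant Hermitian inner product).  Then the EPRL map
`ι = (P⁺ ⊗ P⁻) ∘ Φ ∘ (C₁ ⊗ ⋯ ⊗ Cₙ)`, restricted to `Inv(H_{k₁} ⊗ ⋯ ⊗ H_{kₙ})`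
(where `Φ` is the regrouping isomorphism), is injective. -/
theorem eprl_map_injective (γ : ℝ) (hγ : |γ| < 1) (n : ℕ) (k jp jm : Fin n → ℕ)
    (hjp : ∀ i, (jp i : ℝ) = (1 + γ) * (k i : ℝ) / 2)
    (hjm : ∀ i, (jm i : ℝ) = (1 - γ) * (k i : ℝ) / 2)
    (hsum : ∀ i, jp i + jm i = k i)
    (ρk : ∀ i, Representation ℂ SU2 (Hs (2 * k i)))
    (hρk : ∀ i, IsSpinRep (2 * k i) (ρk i))
    (ρp : ∀ i, Representation ℂ SU2 (Hs (2 * jp i)))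
    (hρp : ∀ i, IsSpinRep (2 * jp i) (ρp i))
    (ρm : ∀ i, Representation ℂ SU2 (Hs (2 * jm i)))
    (hρm : ∀ i, IsSpinRep (2 * jm i) (ρm i))
    -- the Clebsch–Gordan embeddings Cᵢ : H_{kᵢ} → H_{j⁺ᵢ} ⊗ H_{j⁻ᵢ}
    (C : ∀ i, Hs (2 * k i) →ₗ[ℂ] Hs (2 * jp i) ⊗[ℂ] Hs (2 * jm i))
    (hC0 : ∀ i, C i ≠ 0)
    (hC : ∀ i (g : SU2) (v : Hs (2 * k i)),
      C i (ρk i g v) = TensorProduct.map (ρp i g) (ρm i g) (C i v))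
    -- the regrouping isomorphism ⨂ᵢ (H_{j⁺ᵢ} ⊗ H_{j⁻ᵢ}) → (⨂ᵢ H_{j⁺ᵢ}) ⊗ (⨂ᵢ H_{j⁻ᵢ})
    (Φ : (⨂[ℂ] i, (Hs (2 * jp i) ⊗[ℂ] Hs (2 * jm i))) →ₗ[ℂ]
      (⨂[ℂ] i, Hs (2 * jp i)) ⊗[ℂ] (⨂[ℂ] i, Hs (2 * jm i)))
    (hΦ : ∀ (a : ∀ i, Hs (2 * jp i)) (b : ∀ i, Hs (2 * jm i)),
      Φ (PiTensorProduct.tprod ℂ (fun i => a i ⊗ₜ[ℂ] b i)) =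
        PiTensorProduct.tprod ℂ a ⊗ₜ[ℂ] PiTensorProduct.tprod ℂ b)
    -- P⁺ : the projection of ⨂ᵢ H_{j⁺ᵢ} onto the invariants
    (Pp : (⨂[ℂ] i, Hs (2 * jp i)) →ₗ[ℂ] ⨂[ℂ] i, Hs (2 * jp i))
    (hPp1 : Pp ∘ₗ Pp = Pp) (hPp2 : LinearMap.range Pp = piInvariants ρp)
    (hPp3 : ∀ g : SU2, Pp ∘ₗ PiTensorProduct.map (fun i => ρp i g) =
      PiTensorProduct.map (fun i => ρp i g) ∘ₗ Pp)
    -- P⁻ : the projection of ⨂ᵢ H_{j⁻ᵢ} onto the invariants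
    (Pm : (⨂[ℂ] i, Hs (2 * jm i)) →ₗ[ℂ] ⨂[ℂ] i, Hs (2 * jm i))
    (hPm1 : Pm ∘ₗ Pm = Pm) (hPm2 : LinearMap.range Pm = piInvariants ρm)
    (hPm3 : ∀ g : SU2, Pm ∘ₗ PiTensorProduct.map (fun i => ρm i g) =
      PiTensorProduct.map (fun i => ρm i g) ∘ₗ Pm) :
    Set.InjOn
      (⇑(TensorProduct.map Pp Pm ∘ₗ Φ ∘ₗ PiTensorProduct.map (fun i => C i)))
      (piInvariants ρk : Set (⨂[ℂ] i, Hs (2 * k i))) := by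
  intro v₁ hv₁ v₂ hv₂ hv
  obtain ⟨hγ1, hγ2⟩ := abs_lt.1 hγ
  have hd (i) : 2 * jp i + 2 * jm i = 2 * k i := by rw [← hsum i, mul_add]
  choose c hc hcC using fun i =>
    exists_intertwiner_powVec (hd i) (hρk i) (hρp i) (hρm i) (hC0 i) (hC i)
  have hf₁ := (mem_piInvariants_iff hρk v₁).1 hv₁
  have hf₂ := (mem_piInvariants_iff hρk v₂).1 hv₂
  have hm₁ := multiHom_toPoly (fun i => 2 * k i) v₁
  have hm₂ := multiHom_toPoly (fun i => 2 * k i) v₂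
  refine toPoly_injective _ (sub_eq_zero.1 (eq_zero_of_fischer_conj_self ?_))
  have hspan := mem_span_mul (c := (1 + γ) / 2) (by linarith) (by linarith)
    (fun i => by rw [hjp i]; ring) hsum (hf₁.sub hf₂).conj (hm₁.sub hm₂).conj
  suffices hle : Submodule.span ℂ _ ≤ LinearMap.ker (fischer.flip
      (toPoly (fun i => 2 * k i) v₁ - toPoly (fun i => 2 * k i) v₂)) from hle hspan
  refine Submodule.span_le.2 ?_
  rintro p ⟨fp, fm, ⟨hpi, hpd⟩, ⟨hmi, hmd⟩, rfl⟩
  obtain ⟨e, he⟩ := exists_fischer_mul_eq hd hc hcC hΦ hpd hmd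
  have hPp : fischer fp ∘ₗ toPoly (fun i => 2 * jp i) =
      (fischer fp ∘ₗ toPoly (fun i => 2 * jp i)) ∘ₗ Pp :=
    LinearMap.ext fun v => (fischer_projection hρp hPp1 hPp2 hPp3 hpi hpd v).symm
  have hPm : fischer fm ∘ₗ toPoly (fun i => 2 * jm i) =
      (fischer fm ∘ₗ toPoly (fun i => 2 * jm i)) ∘ₗ Pm :=
    LinearMap.ext fun v => (fischer_projection hρm hPm1 hPm2 hPm3 hmi hmd v).symm
  rw [hPp, hPm, TensorProduct.map_comp, LinearMap.comp_assoc] at he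
  have h (v) := LinearMap.congr_fun he v
  simp only [LinearMap.comp_apply, LinearMap.smul_apply] at h hv
  rw [SetLike.mem_coe, LinearMap.mem_ker, LinearMap.flip_apply, map_sub, h v₁, h v₂, hv, sub_self]

end
end
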